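/- arXiv:2309.15598 — 2 statements merged into one kernel-verified Lean document; each statement's English description precedes it below -/
import Mathlib

section
/- Let K ⊂ ℝ^{n+1} be a smooth, strictly convex body with the origin in its interior, with support function h, Gauss curvature 𝒦, inverse Gauss map X = Dh, and cone-volume-type measure dV = h σ_n dμ where σ_n = 1/𝒦 and μ is the spherical Lebesgue measure on S^n. Then n ∫_{S^n} X dV = ∫_{S^n} h ∇̄ log(h^{n+2}/𝒦) dV, as an identity of vectors in ℝ^{n+1}. -/
open MeasureTheory Matrix Metric
open scoped RealInnerProductSpace

noncomputable section

/-- Euclidean space `ℝ^{n+1}`. -/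
abbrev Euc (n : ℕ) : Type := EuclideanSpace ℝ (Fin (n + 1))

/-- The Euclidean Hessian matrix of `H : ℝ^{n+1} → ℝ` at `x`. -/
def ehess (n : ℕ) (H : Euc n → ℝ) (x : Euc n) : Matrix (Fin (n + 1)) (Fin (n + 1)) ℝ :=
  Matrix.of fun i j =>
    fderiv ℝ (fun y => fderiv ℝ H y (EuclideanSpace.single j 1)) x (EuclideanSpace.single i 1)

/-- For the 1-homogeneous extension `H` of the support function `h` and `x ∈ S^n`, the matrix
`D²H(x) + h(x)·x xᵀ`.  Its restriction to the tangent space `x^⊥ = T_x S^n` is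
`A[h] = ∇̄²h + h ḡ`, and `x` is an eigenvector with eigenvalue `h(x)`. -/
def bmat (n : ℕ) (H : Euc n → ℝ) (x : Euc n) : Matrix (Fin (n + 1)) (Fin (n + 1)) ℝ :=
  ehess n H x + Matrix.of fun i j => H x * (x i * x j)

/-- `σ_n = det A[h] = det(∇̄²h + h ḡ)/det ḡ`, computed as `det(bmat)/h`. -/
def sigman (n : ℕ) (H : Euc n → ℝ) (x : Euc n) : ℝ :=
  Matrix.det (bmat n H x) / H x

/-- The Gauss curvature `𝒦 = 1/σ_n`. -/
def gaussCurv (n : ℕ) (H : Euc n → ℝ) (x : Euc n) : ℝ := (sigman n H x)⁻¹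

/-- The round (spherical) gradient `∇̄f` at `x ∈ S^n`: the Euclidean gradient of the
0-homogeneous extension `y ↦ f(y/‖y‖)`.  It depends only on `f|_{S^n}` and lies in `T_x S^n`. -/
def sphGrad (n : ℕ) (f : Euc n → ℝ) (x : Euc n) : Euc n :=
  gradient (fun y => f (‖y‖⁻¹ • y)) x

/-- The function `log (h^{n+2}/𝒦)` (as a function of `y`; on the sphere it agrees with the
centro-affine expression appearing in the paper). -/
def logQ (n : ℕ) (H : Euc n → ℝ) (y : Euc n) : ℝ :=
  Real.log ((H y) ^ (n + 2) / gaussCurv n H y)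

/-- The centro-affine inner product `g(∇f, ∇u) = h ⟨A[h]⁻¹ ∇̄f, ∇̄u⟩` of the `g`-gradients of
`f` and `u`, where `g = A[h]/h` is the centro-affine metric. -/
def gInner (n : ℕ) (H f u : Euc n → ℝ) (x : Euc n) : ℝ :=
  H x * ∑ i, (bmat n H x)⁻¹.mulVec (fun j => sphGrad n f x j) i * sphGrad n u x i

/-- The squared centro-affine norm `|∇f|_g²` of the `g`-gradient of `f`. -/
def gNormSq (n : ℕ) (H f : Euc n → ℝ) (x : Euc n) : ℝ := gInner n H f f x

/-- The centro-affine Laplacian `Δf = div_g(∇ f)` (with respect to the centro-affine connection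
`∇` induced by the centro-affine normal `ξ = X`, and the centro-affine metric `g = A[h]/h`),
computed via the identity `Δf = tr_g(A[hf]/h) - n f`, i.e.
`Δf = tr(B[h]⁻¹ B[hf]) - (n+1) f` where `B[u] = D²ũ + u·x xᵀ` for the 1-homogeneous
extension `ũ` of `u`. -/
def caLap (n : ℕ) (H f : Euc n → ℝ) (x : Euc n) : ℝ :=
  Matrix.trace ((bmat n H x)⁻¹ * bmat n (fun y => H y * f (‖y‖⁻¹ • y)) x) - (n + 1) * f x

/-- The spherical Lebesgue measure on `S^n ⊂ ℝ^{n+1}` (up to a positive constant). -/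
def sphMeasure (n : ℕ) : Measure (sphere (0 : Euc n) 1) :=
  (volume : Measure (Euc n)).toSphere

/-- The density of the cone-volume-type measure `dV = h σ_n dμ` with respect to the spherical
Lebesgue measure. -/
def volDens (n : ℕ) (H : Euc n → ℝ) (x : Euc n) : ℝ := H x * sigman n H x

/-!
On the sphere `log (h ^ (n + 2) / 𝒦) = n log h + log F` with `F = h ^ 2 σ_n`, so the density of
`h ∇̄ log (h ^ (n + 2) / 𝒦) dV` is `n h σ_n ∇̄h + ∇̄F`, while that of `n X dV` is
`n h σ_n ∇̄h + n F x`, because `X = ∇̄h + h x`. The two integrals agree since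
`∫ ∇̄F dμ = n ∫ F x dμ` for every `C¹` function `F` on the sphere. This last identity follows by
extending `F` to be `0`-homogeneous, multiplying it by a radial cutoff, integrating by parts in
Euclidean space and passing to polar coordinates.
-/

open Module NormedSpace

section Polar

variable {E G : Type*} [NormedAddCommGroup E] [NormedSpace ℝ E]
  [NormedAddCommGroup G] [NormedSpace ℝ G]

lemma fderiv_comp_normalize_normalize (f : E → G) {y : E} (hy : y ≠ 0) :
    fderiv ℝ (f ∘ normalize) (normalize y) = ‖y‖ • fderiv ℝ (f ∘ normalize) y := by
  have hinv : 0 < ‖y‖⁻¹ := inv_pos.mpr (norm_pos_iff.mpr hy)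
  have hscale : (fun z => (f ∘ normalize) (‖y‖⁻¹ • z)) = f ∘ normalize :=
    funext fun z => congrArg f (normalize_smul_of_pos hinv z)
  have hfderiv := fderiv_comp_smul (𝕜 := ℝ) (f := f ∘ normalize) (x := y) ‖y‖⁻¹
  rw [hscale] at hfderiv
  rw [hfderiv, smul_smul, mul_inv_cancel₀ (norm_ne_zero_iff.mpr hy), one_smul,
    NormedSpace.normalize]

lemma integral_volumeIoiPow (m : ℕ) (f : ℝ → G) :
    ∫ r, f r ∂Measure.volumeIoiPow m = ∫ r in Set.Ioi (0 : ℝ), r ^ m • f r := by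
  simp only [Measure.volumeIoiPow, ENNReal.ofReal]
  rw [integral_withDensity_eq_integral_smul
      (measurable_subtype_coe.pow_const _).real_toNNReal,
    integral_subtype_comap measurableSet_Ioi fun r : ℝ => Real.toNNReal (r ^ m) • f r]
  refine setIntegral_congr_fun measurableSet_Ioi fun r hr => ?_
  simp only [NNReal.smul_def, Real.coe_toNNReal _ (pow_nonneg (Set.mem_Ioi.mp hr).le m)]

lemma integral_norm_smul_comp_normalize [FiniteDimensional ℝ E] [Nontrivial E]
    [MeasurableSpace E] [BorelSpace E] (μ : Measure E) [μ.IsAddHaarMeasure]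
    (a : ℝ → ℝ) (b : E → G) :
    ∫ y, a ‖y‖ • b (normalize y) ∂μ =
      (∫ r in Set.Ioi (0 : ℝ), r ^ (finrank ℝ E - 1) * a r) •
        ∫ x : sphere (0 : E) 1, b x ∂μ.toSphere :=
  calc
    _ = ∫ y : ({0}ᶜ : Set E), a ‖y.1‖ • b (normalize y.1) ∂μ.comap (↑) := by
      rw [integral_subtype_comap (measurableSet_singleton _).compl
        fun y : E => a ‖y‖ • b (normalize y), restrict_compl_singleton]
    _ = ∫ p, a p.2 • b p.1 ∂μ.toSphere.prod (.volumeIoiPow (finrank ℝ E - 1)) := by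
      simpa [NormedSpace.normalize] using
        μ.measurePreserving_homeomorphUnitSphereProd.integral_comp
          (Homeomorph.measurableEmbedding _)
          fun p : sphere (0 : E) 1 × Set.Ioi (0 : ℝ) => a p.2 • b p.1
    _ = _ := by
      rw [← integral_prod_swap]
      simp only [Prod.fst_swap, Prod.snd_swap]
      rw [integral_prod_smul (fun r : Set.Ioi (0 : ℝ) => a r)
        (fun x : sphere (0 : E) 1 => b x), integral_volumeIoiPow]
      simp only [smul_eq_mul]

end Polar

section RadialCutoff

lemma integral_pow_mul_deriv_id_mul (m : ℕ) {a : ℝ → ℝ} (ha : ContDiff ℝ 1 a)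
    (hcpt : HasCompactSupport a) :
    ∫ r, r ^ m * deriv (fun r => r * a r) r = -(m * ∫ r, r ^ m * a r) := by
  have hφ : ContDiff ℝ 1 fun r => r * a r := contDiff_id.mul ha
  have hφcpt : HasCompactSupport fun r => r * a r := hcpt.mul_left
  rw [integral_mul_deriv_eq_deriv_mul_of_integrable
    (u := fun r => r ^ m) (u' := fun r => m * r ^ (m - 1)) (v := fun r => r * a r)
    (fun r _ => hasDerivAt_pow m r)
    (fun r _ => (hφ.differentiable one_ne_zero r).hasDerivAt)
    (((continuous_pow m).mul (hφ.continuous_deriv le_rfl)).integrable_of_hasCompactSupport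
      hφcpt.deriv.mul_left)
    (Continuous.integrable_of_hasCompactSupport (by fun_prop) hφcpt.mul_left)
    (Continuous.integrable_of_hasCompactSupport (by fun_prop) hφcpt.mul_left),
    ← integral_const_mul]
  congr 2 with r
  rcases m with _ | m
  · simp
  · rw [Nat.add_sub_cancel]
    ring

lemma integral_Ioi_pow_mul_eq_integral (m : ℕ) {a : ℝ → ℝ} (hsupp : tsupport a ⊆ Set.Ioi 0) :
    ∫ r in Set.Ioi (0 : ℝ), r ^ m * a r = ∫ r, r ^ m * a r :=
  setIntegral_eq_integral_of_forall_compl_eq_zero fun r hr => by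
    rw [image_eq_zero_of_notMem_tsupport fun h => hr (hsupp h), mul_zero]

lemma integral_pow_mul_pos (m : ℕ) {a : ℝ → ℝ} (ha : Continuous a) (hcpt : HasCompactSupport a)
    (hsupp : tsupport a ⊆ Set.Ioi 0) (hnonneg : ∀ r, 0 ≤ a r) {r₀ : ℝ} (hr₀ : a r₀ ≠ 0) :
    0 < ∫ r, r ^ m * a r := by
  have hpos {r : ℝ} (hr : a r ≠ 0) : 0 < r := hsupp (subset_tsupport a hr)
  refine Continuous.integral_pos_of_hasCompactSupport_nonneg_nonzero (by fun_prop)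
    hcpt.mul_left (fun r => ?_) (mul_ne_zero (pow_ne_zero m (hpos hr₀).ne') hr₀)
  rcases eq_or_ne (a r) 0 with hr | hr
  · simp [hr]
  · exact mul_nonneg (pow_nonneg (hpos hr).le m) (hnonneg r)

variable {E G : Type*} [NormedAddCommGroup E] [NormedAddCommGroup G] [NormedSpace ℝ G]

lemma tsupport_comp_norm_subset_compl_zero {φ : ℝ → ℝ} (hsupp : tsupport φ ⊆ Set.Ioi 0) :
    tsupport (fun y : E => φ ‖y‖) ⊆ {0}ᶜ := fun _ hy =>
  norm_pos_iff.mp (hsupp (tsupport_comp_subset_preimage φ continuous_norm hy))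

lemma hasCompactSupport_comp_norm [ProperSpace E] {φ : ℝ → ℝ} (hφ : HasCompactSupport φ) :
    HasCompactSupport fun y : E => φ ‖y‖ := by
  obtain ⟨R, hR⟩ := hφ.isCompact.isBounded.subset_closedBall 0
  refine (isCompact_closedBall (0 : E) R).of_isClosed_subset (isClosed_tsupport _) fun y hy => ?_
  simpa using hR (tsupport_comp_subset_preimage φ continuous_norm hy)

lemma integrable_smul_of_tsupport_subset {X : Type*} [TopologicalSpace X] [MeasurableSpace X]
    [OpensMeasurableSpace X] {μ : Measure X} [IsFiniteMeasureOnCompacts μ] {U : Set X}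
    (hU : IsOpen U) {u : X → ℝ} {f : X → G} (hu : Continuous u) (hcpt : HasCompactSupport u)
    (hsub : tsupport u ⊆ U) (hf : ContinuousOn f U) : Integrable (fun y => u y • f y) μ :=
  ((hu.continuousOn.smul hf).continuous_of_tsupport_subset hU
    ((tsupport_smul_subset_left u f).trans hsub)).integrable_of_hasCompactSupport
    hcpt.smul_right

variable [InnerProductSpace ℝ E]

lemma contDiff_comp_norm {m : WithTop ℕ∞} {φ : ℝ → ℝ} (hφ : ContDiff ℝ m φ)
    (hsupp : tsupport φ ⊆ Set.Ioi 0) : ContDiff ℝ m fun y : E => φ ‖y‖ :=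
  contMDiff_iff_contDiff.mp <| contMDiff_of_tsupport fun y hy => contMDiffAt_iff_contDiffAt.mpr <|
    hφ.contDiffAt.comp y (contDiffAt_norm ℝ (tsupport_comp_norm_subset_compl_zero hsupp hy))

lemma hasGradientAt_norm [CompleteSpace E] {y : E} (hy : y ≠ 0) :
    HasGradientAt (fun y : E => ‖y‖) (normalize y) y := by
  rw [hasGradientAt_iff_hasFDerivAt]
  have hsqrt := (hasStrictFDerivAt_norm_sq y).hasFDerivAt.sqrt (by simpa using hy)
  simp only [Real.sqrt_sq (norm_nonneg _)] at hsqrt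
  convert! hsqrt using 1
  ext v
  simp only [NormedSpace.normalize, map_smul, _root_.smul_apply,
    InnerProductSpace.toDual_apply_apply, coe_innerSL_apply, smul_eq_mul, nsmul_eq_mul,
    Nat.cast_ofNat, one_div, _root_.mul_inv_rev]
  ring

lemma fderiv_comp_norm_apply [CompleteSpace E] {φ : ℝ → ℝ} {y : E} (hy : y ≠ 0)
    (hφ : DifferentiableAt ℝ φ ‖y‖) (v : E) :
    fderiv ℝ (fun y : E => φ ‖y‖) y v = deriv φ ‖y‖ * ⟪normalize y, v⟫ := by
  have hcomp := hφ.hasDerivAt.comp_hasFDerivAt y (hasGradientAt_norm hy).hasFDerivAt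
  rw [← Function.comp_def φ, hcomp.fderiv]
  simp

lemma integral_norm_smul_fderiv [FiniteDimensional ℝ E] [Nontrivial E] [MeasurableSpace E]
    [BorelSpace E] (μ : Measure E) [μ.IsAddHaarMeasure] {φ : ℝ → ℝ} (hφ : ContDiff ℝ 1 φ)
    (hcpt : HasCompactSupport φ) (hsupp : tsupport φ ⊆ Set.Ioi 0) {f : E → G}
    (hf : ContDiffOn ℝ 1 f {0}ᶜ) (v : E) :
    ∫ y, φ ‖y‖ • fderiv ℝ f y v ∂μ =
      -∫ y, deriv φ ‖y‖ • (⟪normalize y, v⟫ • f y) ∂μ := by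
  have hopen : IsOpen ({0}ᶜ : Set E) := isOpen_compl_singleton
  have hΦ : ContDiff ℝ 1 fun y : E => φ ‖y‖ := contDiff_comp_norm hφ hsupp
  have hΦcpt : HasCompactSupport fun y : E => φ ‖y‖ := hasCompactSupport_comp_norm hcpt
  have hΦsupp := tsupport_comp_norm_subset_compl_zero (E := E) hsupp
  have hfv : ContinuousOn (fun y => fderiv ℝ f y v) {0}ᶜ :=
    (hf.continuousOn_fderiv_of_isOpen hopen le_rfl).clm_apply continuousOn_const
  rw [integral_smul_fderiv_eq_neg_fderiv_smul_of_integrable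
    (integrable_smul_of_tsupport_subset hopen
      ((hΦ.continuous_fderiv one_ne_zero).clm_apply continuous_const) (hΦcpt.fderiv_apply ℝ v)
      ((tsupport_fderiv_apply_subset ℝ v).trans hΦsupp) hf.continuousOn)
    (integrable_smul_of_tsupport_subset hopen hΦ.continuous hΦcpt hΦsupp hfv)
    (integrable_smul_of_tsupport_subset hopen hΦ.continuous hΦcpt hΦsupp hf.continuousOn)
    (fun y _ => hΦ.differentiable one_ne_zero y)
    (fun y hy => (hf.contDiffAt (hopen.mem_nhds (hΦsupp hy))).differentiableAt one_ne_zero)]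
  congr 1
  refine integral_congr_ae ?_
  filter_upwards [compl_mem_ae_iff.mpr (measure_singleton (μ := μ) 0)] with y hy
  rw [fderiv_comp_norm_apply hy (hφ.differentiable one_ne_zero _), mul_smul]

end RadialCutoff

section Sphere

variable {E G : Type*} [NormedAddCommGroup E] [InnerProductSpace ℝ E]
  [NormedAddCommGroup G] [NormedSpace ℝ G]

lemma contDiffOn_normalize {m : WithTop ℕ∞} : ContDiffOn ℝ m (normalize : E → E) {0}ᶜ :=
  fun _ hy => (((contDiffAt_norm ℝ hy).inv (norm_ne_zero_iff.mpr hy)).smul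
    contDiffAt_id).contDiffWithinAt

lemma contDiffOn_comp_normalize {m : WithTop ℕ∞} {f : E → G} (hf : ContDiffOn ℝ m f {0}ᶜ) :
    ContDiffOn ℝ m (f ∘ normalize) {0}ᶜ :=
  hf.comp contDiffOn_normalize fun y hy => (normalize_eq_zero_iff y).not.mpr hy

lemma differentiableAt_comp_normalize {f : E → G} (hf : ContDiffOn ℝ 1 f {0}ᶜ) {x : E}
    (hx : x ≠ 0) : DifferentiableAt ℝ (f ∘ normalize) x :=
  ((contDiffOn_comp_normalize hf).contDiffAt
    (isOpen_compl_singleton.mem_nhds hx)).differentiableAt one_ne_zero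

lemma continuous_gradient_comp_normalize [CompleteSpace E] {f : E → ℝ}
    (hf : ContDiffOn ℝ 1 f {0}ᶜ) :
    Continuous fun x : sphere (0 : E) 1 => gradient (f ∘ normalize) x :=
  ((InnerProductSpace.toDual ℝ E).symm.continuous.comp_continuousOn
    ((contDiffOn_comp_normalize hf).continuousOn_fderiv_of_isOpen
      isOpen_compl_singleton le_rfl)).comp_continuous
    continuous_subtype_val ne_zero_of_mem_unit_sphere

lemma gradient_eq_gradient_comp_normalize_add [CompleteSpace E] {f : E → ℝ}
    (hhomog : ∀ c : ℝ, 0 < c → ∀ x, f (c • x) = c * f x) {x : E} (hx : ‖x‖ = 1)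
    (hf : DifferentiableAt ℝ (f ∘ normalize) x) :
    gradient f x = gradient (f ∘ normalize) x + f x • x := by
  have hx0 : x ≠ 0 := norm_ne_zero_iff.mp (hx ▸ one_ne_zero)
  have hpolar : f =ᶠ[nhds x] fun y => ‖y‖ * (f ∘ normalize) y := by
    filter_upwards [isOpen_compl_singleton.mem_nhds hx0] with y hy
    rw [Function.comp_apply, ← hhomog _ (norm_pos_iff.mpr hy), norm_smul_normalize]
  have hmul := (hasGradientAt_norm hx0).hasFDerivAt.mul hf.hasFDerivAt
  have hfderiv : fderiv ℝ f x = fderiv ℝ (f ∘ normalize) x + f x • innerSL ℝ x := by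
    rw [hpolar.fderiv_eq]
    refine hmul.fderiv.trans ?_
    ext v
    simp [hx, normalize_eq_self_of_norm_eq_one hx]
  refine ext_inner_right ℝ fun v => ?_
  simp [inner_add_left, inner_gradient_left, hfderiv, real_inner_smul_left]

variable [FiniteDimensional ℝ E] [MeasurableSpace E] [BorelSpace E]
  (μ : Measure E) [μ.IsAddHaarMeasure]

theorem integral_toSphere_fderiv_comp_normalize [Nontrivial E] {f : E → G}
    (hf : ContDiffOn ℝ 1 f {0}ᶜ) (v : E) :
    ∫ x : sphere (0 : E) 1, fderiv ℝ (f ∘ normalize) x v ∂μ.toSphere =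
      ((finrank ℝ E - 1 : ℕ) : ℝ) •
        ∫ x : sphere (0 : E) 1, ⟪(x : E), v⟫ • f x ∂μ.toSphere := by
  obtain ⟨a, hsupp, hcpt, ha, hrange, ha1⟩ :=
    exists_contDiff_tsupport_subset (n := 1) (Ioi_mem_nhds (zero_lt_one' ℝ))
  have hφsupp : tsupport (fun r => r * a r) ⊆ Set.Ioi 0 :=
    tsupport_mul_subset_right.trans hsupp
  have hae : ∀ᵐ y ∂μ, y ≠ 0 := compl_mem_ae_iff.mpr (measure_singleton 0)
  have hleft : ∫ y, (‖y‖ * a ‖y‖) • fderiv ℝ (f ∘ normalize) y v ∂μ =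
      ∫ y, a ‖y‖ • fderiv ℝ (f ∘ normalize) (normalize y) v ∂μ := by
    refine integral_congr_ae ?_
    filter_upwards [hae] with y hy
    rw [fderiv_comp_normalize_normalize f hy, _root_.smul_apply, smul_smul, mul_comm]
  have hparts := integral_norm_smul_fderiv μ (contDiff_id.mul ha) hcpt.mul_left hφsupp
    (contDiffOn_comp_normalize hf) v
  have hpos := integral_pow_mul_pos (finrank ℝ E - 1) ha.continuous hcpt hsupp
    (fun r => (hrange ⟨r, rfl⟩).1) (ha1 ▸ one_ne_zero)
  refine smul_right_injective G hpos.ne' ?_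
  calc
    _ = ∫ y, a ‖y‖ • fderiv ℝ (f ∘ normalize) (normalize y) v ∂μ := by
      rw [integral_norm_smul_comp_normalize μ a fun x => fderiv ℝ (f ∘ normalize) x v,
        integral_Ioi_pow_mul_eq_integral _ hsupp]
    _ = -∫ y, deriv (fun r => r * a r) ‖y‖ • (⟪normalize y, v⟫ • f (normalize y)) ∂μ :=
      hleft.symm.trans hparts
    _ = _ := by
      rw [integral_norm_smul_comp_normalize μ _ fun x => ⟪x, v⟫ • f x,
        integral_Ioi_pow_mul_eq_integral _ (tsupport_deriv_subset.trans hφsupp),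
        integral_pow_mul_deriv_id_mul _ ha hcpt]
      dsimp only
      module

lemma integrable_toSphere_of_continuous {F : Type*} [NormedAddCommGroup F]
    {f : sphere (0 : E) 1 → F} (hf : Continuous f) : Integrable f μ.toSphere :=
  hf.integrable_of_hasCompactSupport (.of_compactSpace f)

theorem integral_toSphere_gradient_comp_normalize [Nontrivial E] {f : E → ℝ}
    (hf : ContDiffOn ℝ 1 f {0}ᶜ) :
    ∫ x : sphere (0 : E) 1, gradient (f ∘ normalize) x ∂μ.toSphere =
      ((finrank ℝ E - 1 : ℕ) : ℝ) • ∫ x : sphere (0 : E) 1, f x • (x : E) ∂μ.toSphere := by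
  have hfc : Continuous fun x : sphere (0 : E) 1 => f x :=
    hf.continuousOn.comp_continuous continuous_subtype_val ne_zero_of_mem_unit_sphere
  refine ext_inner_left ℝ fun v => ?_
  have hfx : Integrable (fun x : sphere (0 : E) 1 => f x • (x : E)) μ.toSphere :=
    integrable_toSphere_of_continuous μ (hfc.smul continuous_subtype_val)
  rw [real_inner_smul_right, ← integral_inner hfx, ← integral_inner
    (integrable_toSphere_of_continuous μ (continuous_gradient_comp_normalize hf))]
  simpa [inner_gradient_right, real_inner_smul_right, real_inner_comm v, mul_comm]
    using integral_toSphere_fderiv_comp_normalize μ hf v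

end Sphere

section Gradient

variable {E : Type*} [NormedAddCommGroup E] [InnerProductSpace ℝ E] [CompleteSpace E]
  {f g : E → ℝ} {x : E}

lemma gradient_add (hf : DifferentiableAt ℝ f x) (hg : DifferentiableAt ℝ g x) :
    gradient (fun y => f y + g y) x = gradient f x + gradient g x := by
  rw [gradient, fderiv_fun_add hf hg, map_add, gradient, gradient]

lemma gradient_const_mul (c : ℝ) (hf : DifferentiableAt ℝ f x) :
    gradient (fun y => c * f y) x = c • gradient f x := by
  rw [gradient, fderiv_const_mul hf, map_smul, gradient]

lemma smul_gradient_log (hf : DifferentiableAt ℝ f x) (hx : f x ≠ 0) :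
    f x • gradient (fun y => Real.log (f y)) x = gradient f x := by
  rw [gradient, fderiv.log hf hx, map_smul, smul_smul, mul_inv_cancel₀ hx, one_smul, gradient]

end Gradient

section ContDiff

lemma contDiffOn_det {𝕜 E ι : Type*} [NontriviallyNormedField 𝕜] [NormedAddCommGroup E]
    [NormedSpace 𝕜 E] [Fintype ι] [DecidableEq ι] {m : WithTop ℕ∞} {s : Set E}
    {A : E → Matrix ι ι 𝕜} (hA : ∀ i j, ContDiffOn 𝕜 m (fun x => A x i j) s) :
    ContDiffOn 𝕜 m (fun x => (A x).det) s := by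
  simp only [Matrix.det_apply']
  exact ContDiffOn.sum fun σ _ => contDiffOn_const.mul (contDiffOn_prod fun i _ => hA (σ i) i)

variable {n : ℕ} {m : WithTop ℕ∞} {s : Set (Euc n)} {H : Euc n → ℝ}

lemma contDiffOn_ehess_apply (hs : IsOpen s) (hH : ContDiffOn ℝ (m + 1 + 1) H s)
    (i j : Fin (n + 1)) : ContDiffOn ℝ m (fun x => ehess n H x i j) s :=
  (((hH.fderiv_of_isOpen hs le_rfl).clm_apply contDiffOn_const).fderiv_of_isOpen hs
    le_rfl).clm_apply contDiffOn_const

lemma contDiffOn_bmat_apply (hs : IsOpen s) (hH : ContDiffOn ℝ (m + 1 + 1) H s)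
    (i j : Fin (n + 1)) : ContDiffOn ℝ m (fun x => bmat n H x i j) s := by
  have hcoord (k : Fin (n + 1)) : ContDiffOn ℝ m (fun x : Euc n => x k) s := by fun_prop
  exact (contDiffOn_ehess_apply hs hH i j).add
    ((hH.of_le (le_self_add.trans le_self_add)).mul ((hcoord i).mul (hcoord j)))

lemma contDiffOn_volDens (hs : IsOpen s) (hH : ContDiffOn ℝ (m + 1 + 1) H s)
    (hne : ∀ x ∈ s, H x ≠ 0) : ContDiffOn ℝ m (volDens n H) s :=
  have hHm : ContDiffOn ℝ m H s := hH.of_le (le_self_add.trans le_self_add)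
  hHm.mul ((contDiffOn_det (contDiffOn_bmat_apply hs hH)).div hHm hne)

end ContDiff

section Curvature

variable {n : ℕ} {H : Euc n → ℝ} {x : Euc n}

lemma gaussCurv_pos (hH : 0 < H x) (hdet : 0 < (bmat n H x).det) : 0 < gaussCurv n H x :=
  inv_pos.mpr (div_pos hdet hH)

lemma volDens_pos (hH : 0 < H x) (hcurv : 0 < gaussCurv n H x) : 0 < volDens n H x :=
  mul_pos hH (inv_pos.mp hcurv)

lemma logQ_eq_log_add_log (hH : 0 < H x) (hcurv : 0 < gaussCurv n H x) :
    logQ n H x = n * Real.log (H x) + Real.log (H x * volDens n H x) := by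
  have hvol := volDens_pos hH hcurv
  rw [logQ, ← Real.log_pow, ← Real.log_mul (by positivity) (by positivity), gaussCurv, volDens,
    div_inv_eq_mul]
  ring_nf

end Curvature

section SphGrad

variable {n : ℕ} {f g H : Euc n → ℝ} {x : Euc n}

lemma sphGrad_congr (hfg : ∀ y ∈ sphere (0 : Euc n) 1, f y = g y) (hx : x ≠ 0) :
    sphGrad n f x = sphGrad n g x := by
  refine Filter.EventuallyEq.gradient_eq ?_
  filter_upwards [isOpen_compl_singleton.mem_nhds hx] with y hy
  exact hfg _ (mem_sphere_zero_iff_norm.mpr (norm_normalize hy))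

lemma continuous_sphGrad (hf : ContDiffOn ℝ 1 f {0}ᶜ) :
    Continuous fun x : sphere (0 : Euc n) 1 => sphGrad n f x :=
  continuous_gradient_comp_normalize hf

lemma gradient_eq_sphGrad_add (hhomog : ∀ c : ℝ, 0 < c → ∀ x, H (c • x) = c * H x)
    (hH : ContDiffOn ℝ 1 H {0}ᶜ) (x : sphere (0 : Euc n) 1) :
    gradient H x = sphGrad n H x + H x • (x : Euc n) :=
  gradient_eq_gradient_comp_normalize_add hhomog (norm_eq_of_mem_sphere x)
    (differentiableAt_comp_normalize hH (ne_zero_of_mem_unit_sphere x))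

theorem integral_sphGrad (hf : ContDiffOn ℝ 1 f {0}ᶜ) :
    ∫ x : sphere (0 : Euc n) 1, sphGrad n f x ∂sphMeasure n =
      (n : ℝ) • ∫ x : sphere (0 : Euc n) 1, f x • (x : Euc n) ∂sphMeasure n := by
  have hdiv := integral_toSphere_gradient_comp_normalize (volume : Measure (Euc n)) hf
  rwa [finrank_euclideanSpace_fin, Nat.add_sub_cancel] at hdiv

lemma comp_normalize_apply_sphere (f : Euc n → ℝ) (x : sphere (0 : Euc n) 1) :
    (f ∘ normalize) (x : Euc n) = f x :=
  congrArg f (normalize_eq_self_of_norm_eq_one (norm_eq_of_mem_sphere x))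

lemma smul_sphGrad_log (hf : ContDiffOn ℝ 1 f {0}ᶜ) (x : sphere (0 : Euc n) 1) (hx : f x ≠ 0) :
    f x • sphGrad n (fun y => Real.log (f y)) x = sphGrad n f x := by
  rw [← comp_normalize_apply_sphere f] at hx ⊢
  exact smul_gradient_log (differentiableAt_comp_normalize hf (ne_zero_of_mem_unit_sphere x)) hx

lemma sphGrad_const_mul_log_add_log (c : ℝ) (hf : ContDiffOn ℝ 1 f {0}ᶜ)
    (hg : ContDiffOn ℝ 1 g {0}ᶜ) (x : sphere (0 : Euc n) 1) (hfx : f x ≠ 0) (hgx : g x ≠ 0) :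
    sphGrad n (fun y => c * Real.log (f y) + Real.log (g y)) x =
      c • sphGrad n (fun y => Real.log (f y)) x + sphGrad n (fun y => Real.log (g y)) x := by
  rw [← comp_normalize_apply_sphere f] at hfx
  rw [← comp_normalize_apply_sphere g] at hgx
  have hx0 : (x : Euc n) ≠ 0 := ne_zero_of_mem_unit_sphere x
  have hlogf := (differentiableAt_comp_normalize hf hx0).log hfx
  have hlogg := (differentiableAt_comp_normalize hg hx0).log hgx
  exact (gradient_add (hlogf.const_mul c) hlogg).trans
    (congrArg (· + _) (gradient_const_mul c hlogf))

lemma volDens_smul_smul_sphGrad_logQ (hH : ContDiffOn ℝ 1 H {0}ᶜ)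
    (hvol : ContDiffOn ℝ 1 (volDens n H) {0}ᶜ) (hpos : ∀ x ∈ sphere (0 : Euc n) 1, 0 < H x)
    (hcurv : ∀ x ∈ sphere (0 : Euc n) 1, 0 < gaussCurv n H x) (x : sphere (0 : Euc n) 1) :
    volDens n H x • (H x • sphGrad n (logQ n H) x) =
      (n : ℝ) • (volDens n H x • sphGrad n H x) +
        sphGrad n (fun y => H y * volDens n H y) x := by
  have hHx : H x ≠ 0 := (hpos x x.2).ne'
  have hFx : H x * volDens n H x ≠ 0 :=
    mul_ne_zero hHx (volDens_pos (hpos x x.2) (hcurv x x.2)).ne'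
  rw [sphGrad_congr (fun y hy => logQ_eq_log_add_log (hpos y hy) (hcurv y hy))
      (ne_zero_of_mem_unit_sphere x),
    sphGrad_const_mul_log_add_log n hH (hH.mul hvol) x hHx hFx,
    ← smul_sphGrad_log hH x hHx, ← smul_sphGrad_log (hH.mul hvol) x hFx]
  module

end SphGrad

lemma pos_of_homogeneous {E : Type*} [NormedAddCommGroup E] [NormedSpace ℝ E] {f : E → ℝ}
    (hhomog : ∀ c : ℝ, 0 < c → ∀ x, f (c • x) = c * f x)
    (hpos : ∀ x ∈ sphere (0 : E) 1, 0 < f x) {x : E} (hx : x ≠ 0) : 0 < f x := by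
  rw [← norm_smul_normalize x, hhomog _ (norm_pos_iff.mpr hx)]
  exact mul_pos (norm_pos_iff.mpr hx) (hpos _ (mem_sphere_zero_iff_norm.mpr (norm_normalize hx)))

theorem centro_affine_main_identity_integrated_general (n : ℕ) (H : Euc n → ℝ)
    (hhomog : ∀ c : ℝ, 0 < c → ∀ x : Euc n, H (c • x) = c * H x)
    (hsmooth : ContDiffOn ℝ 3 H {(0 : Euc n)}ᶜ)
    (hpos : ∀ x ∈ sphere (0 : Euc n) 1, 0 < H x)
    (hcurv : ∀ x ∈ sphere (0 : Euc n) 1, 0 < gaussCurv n H x) :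
    (n : ℝ) • (∫ x : sphere (0 : Euc n) 1,
        volDens n H x • gradient H x ∂(sphMeasure n))
      = ∫ x : sphere (0 : Euc n) 1,
          volDens n H x • (H x • sphGrad n (logQ n H) x) ∂(sphMeasure n) := by
  have hH : ContDiffOn ℝ 1 H {0}ᶜ := hsmooth.of_le (by norm_num)
  have hvol : ContDiffOn ℝ 1 (volDens n H) {0}ᶜ :=
    contDiffOn_volDens isOpen_compl_singleton (hsmooth.of_le (by norm_num))
      fun x hx => (pos_of_homogeneous hhomog hpos hx).ne'
  have hvolc : Continuous fun x : sphere (0 : Euc n) 1 => volDens n H x :=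
    hvol.continuousOn.comp_continuous continuous_subtype_val ne_zero_of_mem_unit_sphere
  have hFc : Continuous fun x : sphere (0 : Euc n) 1 => H x * volDens n H x :=
    (hH.mul hvol).continuousOn.comp_continuous continuous_subtype_val ne_zero_of_mem_unit_sphere
  have hgradInt : Integrable (fun x : sphere (0 : Euc n) 1 => volDens n H x • sphGrad n H x)
      (sphMeasure n) :=
    integrable_toSphere_of_continuous _ (hvolc.smul (continuous_sphGrad hH))
  have hradInt : Integrable (fun x : sphere (0 : Euc n) 1 =>
      (H x * volDens n H x) • (x : Euc n)) (sphMeasure n) :=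
    integrable_toSphere_of_continuous _ (hFc.smul continuous_subtype_val)
  have hFInt : Integrable (fun x : sphere (0 : Euc n) 1 =>
      sphGrad n (fun y => H y * volDens n H y) x) (sphMeasure n) :=
    integrable_toSphere_of_continuous _ (continuous_sphGrad (hH.mul hvol))
  simp only [volDens_smul_smul_sphGrad_logQ hH hvol hpos hcurv, gradient_eq_sphGrad_add hhomog hH,
    smul_add, smul_smul _ (H _), mul_comm (volDens n H _)]
  rw [integral_add hgradInt hradInt, integral_add (hgradInt.fun_smul _) hFInt, integral_smul,
    integral_sphGrad (hH.mul hvol), smul_add]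

/-- For a smooth, strictly convex body `K ⊂ ℝ^{n+1}` with the origin in its
interior, with `dV = h σ_n dμ`, one has `n ∫ X dV = ∫ h ∇̄ log(h^{n+2}/𝒦) dV` as vectors in
`ℝ^{n+1}`. -/
theorem centro_affine_main_identity_integrated
    (n : ℕ) (hn : 2 ≤ n)
    (H : Euc n → ℝ) (K : Set (Euc n))
    (hK : K = {y : Euc n | ∀ x : Euc n, ⟪x, y⟫ ≤ H x})
    (hhomog : ∀ c : ℝ, 0 < c → ∀ x : Euc n, H (c • x) = c * H x)
    (hconv : ConvexOn ℝ Set.univ H)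
    (hsmooth : ContDiffOn ℝ (⊤ : ℕ∞) H {(0 : Euc n)}ᶜ)
    (hpos : ∀ x ∈ sphere (0 : Euc n) 1, 0 < H x)
    (hposdef : ∀ x ∈ sphere (0 : Euc n) 1, (bmat n H x).PosDef) :
    (n : ℝ) • (∫ x : sphere (0 : Euc n) 1,
        volDens n H x • gradient H x ∂(sphMeasure n))
      = ∫ x : sphere (0 : Euc n) 1,
          volDens n H x • (H x • sphGrad n (logQ n H) x) ∂(sphMeasure n) :=
  centro_affine_main_identity_integrated_general n H hhomog (contDiffOn_infty.mp hsmooth 3) hpos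
    fun x hx => gaussCurv_pos (hpos x hx) (hposdef x hx).det_pos
end
end

section
/- Let K ⊂ ℝ^{n+1} be a smooth, strictly convex body with the origin in its interior, with support function h, Gauss curvature 𝒦, inverse Gauss map X = Dh, centro-affine metric g, and measure dV = h σ_n dμ. Then for every positive function f ∈ C²(S^n): ∫ f² ( ⟨∇̄ log(h^{n+2}/𝒦), h X⟩ − |X|² |∇ log f|_g² ) dV ≤ n |∫ f X dV|² / ∫ dV, where ∇ and |·|_g are the gradient and norm with respect to the centro-affine metric g, and |∫ f X dV| is the Euclidean norm of the vector ∫ f X dV ∈ ℝ^{n+1}. -/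
open MeasureTheory Matrix Metric
open scoped RealInnerProductSpace

noncomputable section

/-!
The heart of the matter is the Poincaré inequality
`n (∫ φ² dV - (∫ φ dV)² / ∫ dV) ≤ ∫ |∇φ|_g² dV`, an infinitesimal form of the Brunn–Minkowski
inequality. For small `t` put `ρ± = 1 ± t φ - t² (|∇φ|_g² / 2 + ε)`. The points `r X(θ)` with
`0 < r < ρ±(θ)` satisfy `⟨x, ·⟩ < (1 ± t φ(x)) h(x)` for every unit vector `x`, so the Minkowski
sum of the two domains lies in `2K`. Their volumes are `∫ ρ±^{n+1} dV / (n + 1)`, hence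
`∫ ρ₊^{n+1} dV · ∫ ρ₋^{n+1} dV ≤ (∫ dV)²`; compare the coefficients of `t²` and let `ε → 0`.

Apply this to the components of `f X` and add up. The divergence theorem on the sphere, for the
tangential part of `f² h σ_n h X`, turns the sum into the integral on the left-hand side.
-/

/-! ### The Prékopa–Leindler and Brunn–Minkowski inequalities -/

section PrekopaLeindler

open scoped ENNReal Pointwise

-- The translates `K + min L` and `max K + L` both lie in `K + L` and meet in a single point.
lemma volume_add_volume_le_volume_add_of_isCompact {K L : Set ℝ} (hK : IsCompact K)
    (hL : IsCompact L) (hK_ne : K.Nonempty) (hL_ne : L.Nonempty) :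
    volume K + volume L ≤ volume (K + L) := by
  set k := sSup K
  set l := sInf L
  have translates_subset : (fun a => a + l) '' K ∪ (fun b => k + b) '' L ⊆ K + L := by
    rintro _ (⟨a, ha, rfl⟩ | ⟨b, hb, rfl⟩)
    · exact Set.add_mem_add ha (hL.sInf_mem hL_ne)
    · exact Set.add_mem_add (hK.sSup_mem hK_ne) hb
  have translates_inter : (fun a => a + l) '' K ∩ (fun b => k + b) '' L ⊆ {k + l} := by
    rintro _ ⟨⟨a, ha, rfl⟩, ⟨b, hb, hab⟩⟩
    have hak : a ≤ k := le_csSup hK.bddAbove ha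
    have hlb : l ≤ b := csInf_le hL.bddBelow hb
    simp only [Set.mem_singleton_iff] at hab ⊢
    linarith
  have translates_disjoint : AEDisjoint volume ((fun a => a + l) '' K) ((fun b => k + b) '' L) :=
    measure_mono_null translates_inter (by simp)
  calc volume K + volume L
      = volume ((fun a => a + l) '' K) + volume ((fun b => k + b) '' L) := by
        rw [Set.image_add_right, Set.image_add_left, measure_preimage_add_right,
          measure_preimage_add]
    _ = volume ((fun a => a + l) '' K ∪ (fun b => k + b) '' L) :=
        (measure_union₀ (hL.image (by fun_prop)).measurableSet.nullMeasurableSet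
          translates_disjoint).symm
    _ ≤ volume (K + L) := measure_mono translates_subset

lemma volume_add_volume_le_volume_add {A B : Set ℝ} (hA : MeasurableSet A) (hB : MeasurableSet B)
    (hA_ne : A.Nonempty) (hB_ne : B.Nonempty) : volume A + volume B ≤ volume (A + B) := by
  obtain ⟨a, ha⟩ := hA_ne
  obtain ⟨b, hb⟩ := hB_ne
  rw [hA.measure_eq_iSup_isCompact, hB.measure_eq_iSup_isCompact]
  simp only [iSup_and']
  refine ENNReal.biSup_add_biSup_le' ⟨∅, by simp⟩ ⟨∅, by simp⟩ ?_
  rintro K ⟨hKA, hK⟩ L ⟨hLB, hL⟩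
  calc volume K + volume L
      ≤ volume (insert a K) + volume (insert b L) :=
        add_le_add (measure_mono (Set.subset_insert a K)) (measure_mono (Set.subset_insert b L))
    _ ≤ volume (insert a K + insert b L) :=
        volume_add_volume_le_volume_add_of_isCompact (hK.insert a) (hL.insert b)
          (Set.insert_nonempty a K) (Set.insert_nonempty b L)
    _ ≤ volume (A + B) :=
        measure_mono (Set.add_subset_add (Set.insert_subset ha hKA) (Set.insert_subset hb hLB))

lemma lintegral_eq_lintegral_meas_ofReal_lt {α : Type*} [MeasurableSpace α] (μ : Measure α)
    {f : α → ℝ≥0∞} (hf : Measurable f) (hf_ne_top : ∀ x, f x ≠ ∞) :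
    ∫⁻ x, f x ∂μ = ∫⁻ t in Set.Ioi (0 : ℝ), μ {x | ENNReal.ofReal t < f x} := by
  have layercake := lintegral_eq_lintegral_meas_lt μ (f := fun x => (f x).toReal)
    (Filter.Eventually.of_forall fun x => ENNReal.toReal_nonneg) hf.ennreal_toReal.aemeasurable
  simp only [ENNReal.ofReal_toReal (hf_ne_top _)] at layercake
  rw [layercake]
  refine setLIntegral_congr_fun measurableSet_Ioi fun t ht => ?_
  simp only [ENNReal.ofReal_lt_iff_lt_toReal (le_of_lt ht) (hf_ne_top _)]

lemma superlevel_add_subset_superlevel {α : Type*} [Add α] {f g h : α → ℝ≥0∞}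
    (hfgh : ∀ x y, f x * g y ≤ h (x + y) ^ 2) (s : ℝ≥0∞) :
    {x | s < f x} + {x | s < g x} ⊆ {x | s < h x} := by
  rintro _ ⟨x, hx, y, hy, rfl⟩
  change s < h (x + y)
  refine lt_of_pow_lt_pow_left' 2 ?_
  calc s ^ 2 = s * s := sq s
    _ < f x * g y := ENNReal.mul_lt_mul hx hy
    _ ≤ h (x + y) ^ 2 := hfgh x y

lemma lintegral_add_lintegral_le_of_mul_le_sq {f g h : ℝ → ℝ≥0∞} (hf : Measurable f)
    (hg : Measurable g) (hh : Measurable h) (hf_sup : ⨆ x, f x = 1) (hg_sup : ⨆ x, g x = 1)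
    (hfgh : ∀ x y, f x * g y ≤ h (x + y) ^ 2) :
    (∫⁻ x, f x) + (∫⁻ x, g x) ≤ ∫⁻ x, h x := by
  have hf_le : ∀ x, f x ≤ 1 := fun x => hf_sup ▸ le_iSup f x
  have hg_le : ∀ x, g x ≤ 1 := fun x => hg_sup ▸ le_iSup g x
  have hfgh_min : ∀ x y, f x * g y ≤ min (h (x + y)) 1 ^ 2 := by
    intro x y
    rcases min_choice (h (x + y)) 1 with hmin | hmin <;> rw [hmin]
    · exact hfgh x y
    · simpa using mul_le_mul' (hf_le x) (hg_le y)
  have superlevel_nonempty {u : ℝ → ℝ≥0∞} (hu : ⨆ x, u x = 1) {t : ℝ} (ht : t < 1) :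
      {x | ENNReal.ofReal t < u x}.Nonempty :=
    lt_iSup_iff.1 (show ENNReal.ofReal t < ⨆ x, u x by simpa [hu] using ht)
  refine le_trans ?_ (lintegral_mono fun x => min_le_left (h x) 1)
  have ne_top {u : ℝ → ℝ≥0∞} (hu : ∀ x, u x ≤ 1) (x : ℝ) : u x ≠ ∞ :=
    ne_top_of_le_ne_top ENNReal.one_ne_top (hu x)
  rw [lintegral_eq_lintegral_meas_ofReal_lt _ hf (ne_top hf_le),
    lintegral_eq_lintegral_meas_ofReal_lt _ hg (ne_top hg_le),
    lintegral_eq_lintegral_meas_ofReal_lt _ (hh.min measurable_const)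
      (ne_top fun x => min_le_right _ _)]
  have superlevel_antitone : Antitone fun t : ℝ => volume {x | ENNReal.ofReal t < f x} :=
    fun s t hst => measure_mono fun x hx => (ENNReal.ofReal_le_ofReal hst).trans_lt hx
  rw [← lintegral_add_left' superlevel_antitone.measurable.aemeasurable]
  refine setLIntegral_mono' measurableSet_Ioi fun t _ => ?_
  rcases lt_or_ge t 1 with ht | ht
  · exact (volume_add_volume_le_volume_add (measurableSet_lt measurable_const hf)
      (measurableSet_lt measurable_const hg) (superlevel_nonempty hf_sup ht)
      (superlevel_nonempty hg_sup ht)).trans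
        (measure_mono (superlevel_add_subset_superlevel hfgh_min _))
  · have one_le : 1 ≤ ENNReal.ofReal t := by simpa using ht
    simp [((hf_le _).trans one_le).not_gt, ((hg_le _).trans one_le).not_gt]

lemma four_mul_mul_le_add_sq (a b : ℝ≥0∞) : 4 * (a * b) ≤ (a + b) ^ 2 := by
  induction a with
  | top => simp
  | coe a =>
    induction b with
    | top => simp
    | coe b => exact_mod_cast mul_assoc 4 a b ▸ four_mul_le_sq_add a b

lemma prekopaLeindler_of_iSup_ne_top {f g h : ℝ → ℝ≥0∞} (hf : Measurable f) (hg : Measurable g)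
    (hh : Measurable h) (hf_sup : ⨆ x, f x ≠ ∞) (hg_sup : ⨆ x, g x ≠ ∞)
    (hfgh : ∀ x y, f x * g y ≤ h (x + y) ^ 2) :
    4 * ((∫⁻ x, f x) * ∫⁻ x, g x) ≤ (∫⁻ x, h x) ^ 2 := by
  set a := ⨆ x, f x with ha
  set b := ⨆ x, g x with hb
  by_cases ha_zero : a = 0
  · simp [ENNReal.iSup_eq_zero.1 ha_zero]
  by_cases hb_zero : b = 0
  · simp [ENNReal.iSup_eq_zero.1 hb_zero]
  set c : ℝ≥0∞ := (a⁻¹ * b⁻¹) ^ (1 / 2 : ℝ) with hc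
  have hc_sq : c ^ 2 = a⁻¹ * b⁻¹ := by
    rw [hc, ← ENNReal.rpow_natCast, ← ENNReal.rpow_mul]; norm_num
  have ha_inv : a⁻¹ * a = 1 := ENNReal.inv_mul_cancel ha_zero hf_sup
  have hb_inv : b⁻¹ * b = 1 := ENNReal.inv_mul_cancel hb_zero hg_sup
  have normalized := lintegral_add_lintegral_le_of_mul_le_sq (f := fun x => a⁻¹ * f x)
    (g := fun x => b⁻¹ * g x) (h := fun x => c * h x)
    (hf.const_mul _) (hg.const_mul _) (hh.const_mul _)
    (by rw [← ENNReal.mul_iSup, ← ha, ha_inv]) (by rw [← ENNReal.mul_iSup, ← hb, hb_inv])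
    (fun x y => by
      rw [mul_pow, hc_sq, mul_mul_mul_comm]
      exact mul_le_mul_right (hfgh x y) _)
  rw [lintegral_const_mul _ hf, lintegral_const_mul _ hg, lintegral_const_mul _ hh] at normalized
  have scaled : 4 * (a⁻¹ * b⁻¹ * ((∫⁻ x, f x) * ∫⁻ x, g x)) ≤ a⁻¹ * b⁻¹ * (∫⁻ x, h x) ^ 2 := by
    simpa only [mul_pow, hc_sq, mul_mul_mul_comm]
      using (four_mul_mul_le_add_sq _ _).trans (pow_le_pow_left' normalized 2)
  have cancel : a * b * (a⁻¹ * b⁻¹) = 1 := by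
    rw [mul_mul_mul_comm, mul_comm a, mul_comm b, ha_inv, hb_inv, one_mul]
  calc 4 * ((∫⁻ x, f x) * ∫⁻ x, g x)
      = a * b * (a⁻¹ * b⁻¹) * (4 * ((∫⁻ x, f x) * ∫⁻ x, g x)) := by rw [cancel, one_mul]
    _ = a * b * (4 * (a⁻¹ * b⁻¹ * ((∫⁻ x, f x) * ∫⁻ x, g x))) := by ring
    _ ≤ a * b * (a⁻¹ * b⁻¹ * (∫⁻ x, h x) ^ 2) := mul_le_mul_right scaled (a * b)
    _ = (∫⁻ x, h x) ^ 2 := by rw [← mul_assoc, cancel, one_mul]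

lemma lintegral_eq_iSup_lintegral_min_natCast {α : Type*} [MeasurableSpace α] (μ : Measure α)
    {f : α → ℝ≥0∞} (hf : Measurable f) : ∫⁻ x, f x ∂μ = ⨆ k : ℕ, ∫⁻ x, min (f x) k ∂μ := by
  rw [← lintegral_iSup (fun k => hf.min measurable_const)
    fun i j hij x => min_le_min le_rfl (by exact_mod_cast hij)]
  congr 1 with x
  rw [← inf_iSup_eq, ENNReal.iSup_natCast, inf_top_eq]

lemma prekopaLeindler_real {f g h : ℝ → ℝ≥0∞} (hf : Measurable f) (hg : Measurable g)
    (hh : Measurable h) (hfgh : ∀ x y, f x * g y ≤ h (x + y) ^ 2) :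
    4 * ((∫⁻ x, f x) * ∫⁻ x, g x) ≤ (∫⁻ x, h x) ^ 2 := by
  have iSup_min_ne_top (u : ℝ → ℝ≥0∞) (k : ℕ) : ⨆ x, min (u x) k ≠ ∞ :=
    ne_top_of_le_ne_top (ENNReal.natCast_ne_top k) (iSup_le fun x => min_le_right _ _)
  rw [lintegral_eq_iSup_lintegral_min_natCast _ hf, lintegral_eq_iSup_lintegral_min_natCast _ hg]
  simp only [ENNReal.iSup_mul, ENNReal.mul_iSup]
  refine iSup_le fun j => iSup_le fun k => ?_
  exact prekopaLeindler_of_iSup_ne_top (hf.min measurable_const) (hg.min measurable_const) hh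
    (iSup_min_ne_top f _) (iSup_min_ne_top g _)
    fun x y => (mul_le_mul' (min_le_left _ _) (min_le_left _ _)).trans (hfgh x y)

lemma measurePreserving_fin_cons (d : ℕ) :
    MeasurePreserving (fun p : ℝ × (Fin d → ℝ) => (Fin.cons p.1 p.2 : Fin (d + 1) → ℝ)) := by
  have insert_zero := (volume_preserving_piFinSuccAbove (fun _ : Fin (d + 1) => ℝ) 0).symm
  convert insert_zero using 2 with p
  simp [Fin.consEquiv]

lemma lintegral_fin_succ {d : ℕ} {u : (Fin (d + 1) → ℝ) → ℝ≥0∞} (hu : Measurable u) :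
    ∫⁻ x, u x = ∫⁻ s : ℝ, ∫⁻ x : Fin d → ℝ, u (Fin.cons s x) := by
  rw [← (measurePreserving_fin_cons d).lintegral_comp hu]
  exact lintegral_prod _ (hu.comp (measurePreserving_fin_cons d).measurable).aemeasurable

lemma prekopaLeindler_pi (d : ℕ) {f g h : (Fin d → ℝ) → ℝ≥0∞} (hf : Measurable f)
    (hg : Measurable g) (hh : Measurable h) (hfgh : ∀ x y, f x * g y ≤ h (x + y) ^ 2) :
    4 ^ d * ((∫⁻ x, f x) * ∫⁻ x, g x) ≤ (∫⁻ x, h x) ^ 2 := by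
  induction d with
  | zero =>
    simp only [volume_pi, Measure.pi_of_empty _ 0, lintegral_dirac, pow_zero, one_mul]
    simpa using hfgh 0 0
  | succ d ih =>
    have measurable_cons {u : (Fin (d + 1) → ℝ) → ℝ≥0∞} (hu : Measurable u) :
        Measurable fun p : ℝ × (Fin d → ℝ) => u (Fin.cons p.1 p.2) :=
      hu.comp (measurePreserving_fin_cons d).measurable
    have measurable_slice {u : (Fin (d + 1) → ℝ) → ℝ≥0∞} (hu : Measurable u) (s : ℝ) :
        Measurable fun x : Fin d → ℝ => u (Fin.cons s x) :=
      (measurable_cons hu).comp measurable_prodMk_left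
    have measurable_marginal {u : (Fin (d + 1) → ℝ) → ℝ≥0∞} (hu : Measurable u) :
        Measurable fun s : ℝ => ∫⁻ x : Fin d → ℝ, u (Fin.cons s x) :=
      (measurable_cons hu).lintegral_prod_right'
    have four_pow : (4 : ℝ≥0∞) ^ d = 2 ^ d * 2 ^ d := by rw [← mul_pow]; norm_num
    have marginals := prekopaLeindler_real
      (f := fun s => 2 ^ d * ∫⁻ x : Fin d → ℝ, f (Fin.cons s x))
      (g := fun s => 2 ^ d * ∫⁻ x : Fin d → ℝ, g (Fin.cons s x))
      (h := fun s => ∫⁻ x : Fin d → ℝ, h (Fin.cons s x))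
      ((measurable_marginal hf).const_mul _) ((measurable_marginal hg).const_mul _)
      (measurable_marginal hh) fun s t => by
        rw [mul_mul_mul_comm, ← four_pow]
        refine ih (measurable_slice hf s) (measurable_slice hg t) (measurable_slice hh (s + t))
          fun x y => (hfgh _ _).trans_eq ?_
        congr 2 with i
        refine Fin.cases ?_ (fun i => ?_) i <;> simp
    rw [lintegral_const_mul _ (measurable_marginal hf),
      lintegral_const_mul _ (measurable_marginal hg), mul_mul_mul_comm, ← four_pow] at marginals
    rwa [lintegral_fin_succ hf, lintegral_fin_succ hg, lintegral_fin_succ hh, pow_succ', mul_assoc]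

theorem four_pow_mul_volume_mul_volume_le_sq {d : ℕ} {A B C : Set (EuclideanSpace ℝ (Fin d))}
    (hA : MeasurableSet A) (hB : MeasurableSet B) (hC : MeasurableSet C) (hABC : A + B ⊆ C) :
    4 ^ d * (volume A * volume B) ≤ volume C ^ 2 := by
  have toLp_preserving := PiLp.volume_preserving_toLp (Fin d)
  have volume_eq {S : Set (EuclideanSpace ℝ (Fin d))} (hS : MeasurableSet S) :
      volume S = ∫⁻ x : Fin d → ℝ, S.indicator 1 (WithLp.toLp 2 x) := by
    rw [← lintegral_indicator_one hS]
    exact (toLp_preserving.lintegral_comp (measurable_one.indicator hS)).symm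
  have measurable_indicator {S : Set (EuclideanSpace ℝ (Fin d))} (hS : MeasurableSet S) :
      Measurable fun x : Fin d → ℝ => (S.indicator 1 (WithLp.toLp 2 x) : ℝ≥0∞) :=
    (measurable_one.indicator hS).comp toLp_preserving.measurable
  rw [volume_eq hA, volume_eq hB, volume_eq hC]
  refine prekopaLeindler_pi d (measurable_indicator hA) (measurable_indicator hB)
    (measurable_indicator hC) fun x y => ?_
  by_cases hx : WithLp.toLp 2 x ∈ A
  · by_cases hy : WithLp.toLp 2 y ∈ B
    · simp [hx, hy, hABC (Set.add_mem_add hx hy)]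
    · simp [hy]
  · simp [hx]

end PrekopaLeindler

/-! ### Homogeneous and convex functions -/

section HomogeneousConvex

open Asymptotics Filter Set
open scoped Topology

variable {E F : Type*} [NormedAddCommGroup E] [NormedSpace ℝ E] [NormedAddCommGroup F]
  [NormedSpace ℝ F]

lemma hasDerivAt_comp_add_smul {f : E → F} {x : E} (hf : DifferentiableAt ℝ f x) (v : E) :
    HasDerivAt (fun s : ℝ => f (x + s • v)) (fderiv ℝ f x v) 0 := by
  have line : HasDerivAt (fun s : ℝ => x + s • v) v 0 := by
    simpa using ((hasDerivAt_id (0 : ℝ)).smul_const v).const_add x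
  have outer : HasFDerivAt f (fderiv ℝ f x) (x + (0 : ℝ) • v) := by simpa using hf.hasFDerivAt
  exact outer.comp_hasDerivAt (0 : ℝ) line

lemma fderiv_apply_self_of_homogeneous {f : E → F} {x : E} {k : ℕ}
    (hf : ∀ c : ℝ, 0 < c → f (c • x) = c ^ k • f x) (hd : DifferentiableAt ℝ f x) :
    fderiv ℝ f x x = (k : ℝ) • f x := by
  have radial := hasDerivAt_comp_add_smul hd x
  have power : HasDerivAt (fun s : ℝ => (1 + s) ^ k • f x) ((k : ℝ) • f x) 0 := by
    simpa using (((hasDerivAt_id (0 : ℝ)).const_add 1).pow k).smul_const (f x)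
  refine radial.unique (power.congr_of_eventuallyEq ?_)
  filter_upwards [lt_mem_nhds (neg_one_lt_zero (R := ℝ))] with s hs
  rw [← hf (1 + s) (by linarith), add_smul, one_smul]

lemma fderiv_smul_of_scaling {f : E → F} {c k : ℝ} (hc : c ≠ 0)
    (hf : ∀ x, f (c • x) = k • f x) (x : E) :
    fderiv ℝ f (c • x) = (c⁻¹ * k) • fderiv ℝ f x := by
  have scaled : c • fderiv ℝ f (c • x) = k • fderiv ℝ f x := by
    rw [← fderiv_comp_smul, show (fun y => f (c • y)) = k • f from funext hf,
      fderiv_const_smul_field, Pi.smul_apply]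
  rw [mul_smul, ← scaled, smul_smul, inv_mul_cancel₀ hc, one_smul]

lemma add_fderiv_apply_sub_le_of_convexOn {f : E → ℝ} (hf : ConvexOn ℝ univ f) {x : E}
    (hd : DifferentiableAt ℝ f x) (y : E) : f x + fderiv ℝ f x (y - x) ≤ f y := by
  have convex_line : ConvexOn ℝ univ fun s : ℝ => f (x + s • (y - x)) := by
    simpa [Function.comp_def, AffineMap.lineMap_apply, add_comm] using
      hf.comp_affineMap (AffineMap.lineMap (k := ℝ) x y)
  have slope_bound := convex_line.le_slope_of_hasDerivAt (mem_univ 0) (mem_univ 1) one_pos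
    (hasDerivAt_comp_add_smul hd (y - x))
  rw [slope_def_field] at slope_bound
  simp only [one_smul, add_sub_cancel, zero_smul, add_zero, sub_zero, div_one] at slope_bound
  linarith

-- Every point of the segment minimizes the excess of `f` over its tangent at `x`, so the
-- derivative of `f` is constant along the segment.
lemma fderiv_fderiv_apply_sub_eq_zero_of_convexOn {f : E → ℝ} (hf : ConvexOn ℝ univ f) {x y : E}
    (hd : ∀ᶠ z in 𝓝 x, DifferentiableAt ℝ f z) (hd₂ : DifferentiableAt ℝ (fderiv ℝ f) x)
    (hxy : f y = f x + fderiv ℝ f x (y - x)) : fderiv ℝ (fderiv ℝ f) x (y - x) = 0 := by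
  have tangent_le := add_fderiv_apply_sub_le_of_convexOn hf hd.self_of_nhds
  have constant_on_segment :
      ∀ᶠ s : ℝ in 𝓝[>] 0, fderiv ℝ f (x + s • (y - x)) = fderiv ℝ f x := by
    have line_tendsto : Tendsto (fun s : ℝ => x + s • (y - x)) (𝓝[>] 0) (𝓝 x) := by
      refine ((by fun_prop : Continuous fun s : ℝ => x + s • (y - x)).tendsto' 0 x ?_).mono_left
        nhdsWithin_le_nhds
      simp
    filter_upwards [line_tendsto.eventually hd, self_mem_nhdsWithin,
      nhdsWithin_le_nhds (ge_mem_nhds (one_pos (α := ℝ)))] with s hds hs hs1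
    have chord : f (x + s • (y - x)) ≤ f x + s * fderiv ℝ f x (y - x) := by
      have := hf.2 (mem_univ x) (mem_univ y) (sub_nonneg.2 hs1) (le_of_lt hs) (by ring)
      rw [show (1 - s) • x + s • y = x + s • (y - x) by module, hxy] at this
      simp only [smul_eq_mul] at this
      linarith
    have minimum : IsLocalMin (fun z => f z - fderiv ℝ f x z) (x + s • (y - x)) := by
      refine Eventually.of_forall fun z => ?_
      have := tangent_le z
      simp only [map_add, map_smul, map_sub, smul_eq_mul] at this chord ⊢
      linarith
    exact sub_eq_zero.1 <|
      minimum.hasFDerivAt_eq_zero (hds.hasFDerivAt.sub (fderiv ℝ f x).hasFDerivAt)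
  have curve := (hasDerivAt_comp_add_smul hd₂ (y - x)).hasDerivWithinAt (s := Ioi 0)
  have constant_curve : HasDerivWithinAt (fun s : ℝ => fderiv ℝ f (x + s • (y - x))) 0 (Ioi 0) 0 :=
    (hasDerivWithinAt_const (0 : ℝ) _ (fderiv ℝ f x)).congr_of_eventuallyEq constant_on_segment
      (by simp)
  exact (uniqueDiffWithinAt_Ioi 0).eq_deriv _ curve constant_curve

lemma hasFDerivAt_sub_half_quadratic {f : E → ℝ} {B : E →L[ℝ] E →L[ℝ] ℝ}
    (hB : ∀ v w, B v w = B w v) {y : E} (hf : DifferentiableAt ℝ f y) (a : E) :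
    HasFDerivAt (fun z => f z - B (z - a) (z - a) / 2) (fderiv ℝ f y - B (y - a)) y := by
  have shift : HasFDerivAt (fun z : E => z - a) (ContinuousLinearMap.id ℝ E) y :=
    (hasFDerivAt_id y).sub_const a
  have quadratic := ((B.hasFDerivAt.comp y shift).clm_apply shift).mul_const (2⁻¹ : ℝ)
  refine (hf.hasFDerivAt.sub quadratic).congr_fderiv ?_
  ext v
  simp [hB v y, hB v a]
  ring

lemma taylor_two_isLittleO {f : E → ℝ} {x₀ : E} (hf : ContDiffAt ℝ 2 f x₀) :
    (fun p : E × E => f p.2 - f p.1 - fderiv ℝ f p.1 (p.2 - p.1)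
        - fderiv ℝ (fderiv ℝ f) x₀ (p.2 - p.1) (p.2 - p.1) / 2)
      =o[𝓝 (x₀, x₀)] fun p => ‖p.2 - p.1‖ ^ 2 := by
  set B := fderiv ℝ (fderiv ℝ f) x₀
  refine isLittleO_iff.2 fun ω hω => ?_
  have strict : HasStrictFDerivAt (fderiv ℝ f) B x₀ :=
    (hf.fderiv_right (m := 1) (by norm_num)).hasStrictFDerivAt one_ne_zero
  have differentiable_near : ∀ᶠ p : E × E in 𝓝 (x₀, x₀), DifferentiableAt ℝ f p.1 :=
    continuous_fst.tendsto (x₀, x₀) |>.eventually <|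
      (hf.eventually (by simp)).mono fun y hy => hy.differentiableAt two_ne_zero
  obtain ⟨r, hr, hball⟩ := Metric.eventually_nhds_iff_ball.1
    (differentiable_near.and (strict.isLittleO.def hω))
  filter_upwards [ball_mem_nhds (x₀, x₀) hr] with p hp
  obtain ⟨a, b⟩ := p
  rw [← ball_prod_same] at hp
  have on_segment : ∀ y ∈ segment ℝ a b, DifferentiableAt ℝ f y ∧
      ‖fderiv ℝ f y - fderiv ℝ f a - B (y - a)‖ ≤ ω * ‖y - a‖ := fun y hy =>
    hball (y, a) (by
      rw [← ball_prod_same]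
      exact ⟨(convex_ball x₀ r).segment_subset hp.1 hp.2 hy, hp.1⟩)
  have derivative y (hy : y ∈ segment ℝ a b) := hasFDerivAt_sub_half_quadratic
    (hf.isSymmSndFDerivAt (by simp)) (on_segment y hy).1 a
  have mean_value := (convex_segment a b).norm_image_sub_le_of_norm_fderiv_le' (𝕜 := ℝ)
    (C := ω * ‖b - a‖) (φ := fderiv ℝ f a) (fun y hy => (derivative y hy).differentiableAt)
    (fun y hy => by
      rw [(derivative y hy).fderiv, sub_right_comm]
      refine (on_segment y hy).2.trans ?_
      gcongr
      exact norm_sub_le_of_mem_segment hy)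
    (left_mem_segment ℝ a b) (right_mem_segment ℝ a b)
  calc ‖f b - f a - fderiv ℝ f a (b - a) - B (b - a) (b - a) / 2‖
      = ‖f b - B (b - a) (b - a) / 2 - (f a - B (a - a) (a - a) / 2)
          - fderiv ℝ f a (b - a)‖ := by
        congr 1
        simp only [sub_self, map_zero, zero_div, sub_zero]
        ring
    _ ≤ ω * ‖b - a‖ * ‖b - a‖ := mean_value
    _ = ω * ‖‖b - a‖ ^ 2‖ := by simp; ring

end HomogeneousConvex

/-! ### Support functions of convex bodies with positive curvature -/

section Support

open scoped Topology

/-- `H` is the 1-homogeneous extension of the support function of a convex body with the origin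
in its interior and with `C³` boundary of positive Gauss curvature. -/
structure IsRegularSupport (n : ℕ) (H : Euc n → ℝ) : Prop where
  homogeneous : ∀ c : ℝ, 0 < c → ∀ x : Euc n, H (c • x) = c * H x
  convexOn : ConvexOn ℝ Set.univ H
  contDiffOn : ContDiffOn ℝ 3 H {(0 : Euc n)}ᶜ
  pos_of_mem_sphere : ∀ x ∈ sphere (0 : Euc n) 1, 0 < H x
  posDef_bmat : ∀ x ∈ sphere (0 : Euc n) 1, (bmat n H x).PosDef

/-- The second Fréchet derivative `D²H(x)`, as a continuous bilinear form. -/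
def hess {n : ℕ} (H : Euc n → ℝ) (x : Euc n) : Euc n →L[ℝ] Euc n →L[ℝ] ℝ :=
  fderiv ℝ (fderiv ℝ H) x

/-- The bilinear form `D²H(x) + H(x) x xᵀ`, whose matrix is `bmat n H x`. -/
def bform {n : ℕ} (H : Euc n → ℝ) (x : Euc n) : Euc n →L[ℝ] Euc n →L[ℝ] ℝ :=
  hess H x + (H x • innerSL ℝ x).smulRight (innerSL ℝ x)

variable {n : ℕ} {H : Euc n → ℝ}

lemma bform_apply (H : Euc n → ℝ) (x v w : Euc n) :
    bform H x v w = hess H x v w + H x * ⟪x, v⟫ * ⟪x, w⟫ := by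
  simp [bform]

lemma inner_eq_dotProduct (v w : Euc n) :
    ⟪v, w⟫ = (v : Fin (n + 1) → ℝ) ⬝ᵥ (w : Fin (n + 1) → ℝ) := by
  rw [EuclideanSpace.inner_eq_star_dotProduct, star_trivial, dotProduct_comm]

lemma eq_sum_smul_single (v : Euc n) :
    v = ∑ i, v i • (EuclideanSpace.single i 1 : Euc n) := by
  ext j
  simp [Finset.sum_apply, Pi.single_apply]

namespace IsRegularSupport

lemma contDiffAt (hH : IsRegularSupport n H) {x : Euc n} (hx : x ≠ 0) : ContDiffAt ℝ 3 H x :=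
  hH.contDiffOn.contDiffAt (isOpen_compl_singleton.mem_nhds hx)

lemma contDiffAt_fderiv (hH : IsRegularSupport n H) {x : Euc n} (hx : x ≠ 0) :
    ContDiffAt ℝ 2 (fderiv ℝ H) x :=
  (hH.contDiffAt hx).fderiv_right (by norm_num)

lemma differentiableAt (hH : IsRegularSupport n H) {x : Euc n} (hx : x ≠ 0) :
    DifferentiableAt ℝ H x :=
  (hH.contDiffAt hx).differentiableAt (by simp)

lemma differentiableAt_fderiv (hH : IsRegularSupport n H) {x : Euc n} (hx : x ≠ 0) :
    DifferentiableAt ℝ (fderiv ℝ H) x :=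
  (hH.contDiffAt_fderiv hx).differentiableAt (by simp)

lemma fderiv_apply_self (hH : IsRegularSupport n H) {x : Euc n} (hx : x ≠ 0) :
    fderiv ℝ H x x = H x := by
  simpa using fderiv_apply_self_of_homogeneous (k := 1)
    (fun c hc => by simpa using hH.homogeneous c hc x) (hH.differentiableAt hx)

lemma fderiv_smul (hH : IsRegularSupport n H) {c : ℝ} (hc : 0 < c) (x : Euc n) :
    fderiv ℝ H (c • x) = fderiv ℝ H x := by
  rw [fderiv_smul_of_scaling hc.ne' (hH.homogeneous c hc), inv_mul_cancel₀ hc.ne', one_smul]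

lemma hess_smul (hH : IsRegularSupport n H) {c : ℝ} (hc : 0 < c) (x : Euc n) :
    hess H (c • x) = c⁻¹ • hess H x := by
  rw [hess, fderiv_smul_of_scaling (k := 1) hc.ne' (by simpa using hH.fderiv_smul hc), mul_one,
    hess]

lemma hess_apply_self (hH : IsRegularSupport n H) {x : Euc n} (hx : x ≠ 0) :
    hess H x x = 0 := by
  simpa [hess] using fderiv_apply_self_of_homogeneous (k := 0)
    (fun c hc => by simpa using hH.fderiv_smul hc x) (hH.differentiableAt_fderiv hx)

lemma hess_comm (hH : IsRegularSupport n H) {x : Euc n} (hx : x ≠ 0) (v w : Euc n) :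
    hess H x v w = hess H x w v :=
  (hH.contDiffAt hx).isSymmSndFDerivAt (by simp; norm_cast) v w

lemma hess_apply_apply_self (hH : IsRegularSupport n H) {x : Euc n} (hx : x ≠ 0) (v : Euc n) :
    hess H x v x = 0 := by
  rw [hH.hess_comm hx, hH.hess_apply_self hx, _root_.zero_apply]

lemma bmat_apply (hH : IsRegularSupport n H) {x : Euc n} (hx : x ≠ 0) (i j : Fin (n + 1)) :
    bmat n H x i j =
      bform H x (EuclideanSpace.single i 1) (EuclideanSpace.single j 1) := by
  have ehess_apply : ehess n H x i j =
      hess H x (EuclideanSpace.single i 1) (EuclideanSpace.single j 1) := by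
    rw [ehess, of_apply, fderiv_clm_apply (hH.differentiableAt_fderiv hx) (by fun_prop), hess]
    simp
  rw [bmat, Matrix.add_apply, ehess_apply, bform_apply, of_apply]
  simp [EuclideanSpace.inner_single_right, mul_assoc]

lemma bmat_mulVec (hH : IsRegularSupport n H) {x : Euc n} (hx : x ≠ 0) (w : Euc n)
    (i : Fin (n + 1)) : (bmat n H x *ᵥ w) i = bform H x (EuclideanSpace.single i 1) w := by
  conv_rhs => rw [eq_sum_smul_single w]
  simp only [mulVec, dotProduct, map_sum, map_smul, hH.bmat_apply hx, smul_eq_mul, mul_comm]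

lemma dotProduct_bmat_mulVec (hH : IsRegularSupport n H) {x : Euc n} (hx : x ≠ 0) (v w : Euc n) :
    (v : Fin (n + 1) → ℝ) ⬝ᵥ (bmat n H x *ᵥ w) = bform H x v w := by
  conv_rhs => rw [eq_sum_smul_single v]
  simp only [dotProduct, map_sum, map_smul, hH.bmat_mulVec hx, smul_eq_mul, _root_.sum_apply,
    _root_.smul_apply]

lemma bform_self_pos (hH : IsRegularSupport n H) {θ : Euc n} (hθ : ‖θ‖ = 1) {v : Euc n}
    (hv : v ≠ 0) : 0 < bform H θ v v := by
  rw [← hH.dotProduct_bmat_mulVec (ne_zero_of_norm_ne_zero (hθ ▸ one_ne_zero))]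
  simpa using (hH.posDef_bmat θ (by simpa using hθ)).dotProduct_mulVec_pos
    (x := (v : Fin (n + 1) → ℝ)) fun h => hv (PiLp.ext fun i => congrFun h i)

lemma pos (hH : IsRegularSupport n H) {x : Euc n} (hx : x ≠ 0) : 0 < H x := by
  have norm_pos : 0 < ‖x‖ := norm_pos_iff.2 hx
  have polar : H x = ‖x‖ * H (‖x‖⁻¹ • x) := by
    rw [← hH.homogeneous _ norm_pos, smul_inv_smul₀ norm_pos.ne']
  rw [polar]
  exact mul_pos norm_pos (hH.pos_of_mem_sphere _ (by simp [norm_smul, norm_pos.ne']))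

lemma eval_zero (hH : IsRegularSupport n H) : H 0 = 0 := by
  have := hH.homogeneous 2 two_pos 0
  rw [smul_zero] at this
  linarith

lemma fderiv_apply_le (hH : IsRegularSupport n H) {θ : Euc n} (hθ : θ ≠ 0) (x : Euc n) :
    fderiv ℝ H θ x ≤ H x := by
  have := add_fderiv_apply_sub_le_of_convexOn hH.convexOn (hH.differentiableAt hθ) x
  rw [map_sub, hH.fderiv_apply_self hθ] at this
  linarith

lemma eq_inner_smul_of_hess_eq_zero (hH : IsRegularSupport n H) {θ x : Euc n} (hθ : ‖θ‖ = 1)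
    (hx : hess H θ x = 0) : x = ⟪θ, x⟫ • θ := by
  have hθ₀ : θ ≠ 0 := ne_zero_of_norm_ne_zero (hθ ▸ one_ne_zero)
  by_contra hne
  have positive := hH.bform_self_pos hθ (sub_ne_zero.2 hne)
  have hess_eq : hess H θ (x - ⟪θ, x⟫ • θ) = 0 := by
    rw [map_sub, map_smul, hx, hH.hess_apply_self hθ₀, smul_zero, sub_zero]
  rw [bform_apply, hess_eq] at positive
  simp [inner_sub_right, inner_smul_right, hθ] at positive

lemma fderiv_apply_lt (hH : IsRegularSupport n H) {θ x : Euc n} (hθ : ‖θ‖ = 1) (hx : ‖x‖ = 1)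
    (hne : x ≠ θ) : fderiv ℝ H θ x < H x := by
  have hθ₀ : θ ≠ 0 := ne_zero_of_norm_ne_zero (hθ ▸ one_ne_zero)
  refine lt_of_le_of_ne (hH.fderiv_apply_le hθ₀ x) fun heq => ?_
  have hess_sub : hess H θ (x - θ) = 0 :=
    fderiv_fderiv_apply_sub_eq_zero_of_convexOn hH.convexOn
      (((hH.contDiffAt hθ₀).eventually (by simp)).mono fun z hz => hz.differentiableAt (by simp))
      (hH.differentiableAt_fderiv hθ₀)
      (by rw [map_sub, hH.fderiv_apply_self hθ₀, heq, add_sub_cancel])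
  have parallel := hH.eq_inner_smul_of_hess_eq_zero (x := x) hθ
    (by rwa [map_sub, hH.hess_apply_self hθ₀, sub_zero] at hess_sub)
  have unit_factor : |⟪θ, x⟫| = 1 := by
    have := congrArg norm parallel
    rwa [hx, norm_smul, hθ, mul_one, Real.norm_eq_abs, eq_comm] at this
  rcases eq_or_eq_neg_of_abs_eq unit_factor with h | h
  · exact hne (by rw [parallel, h, one_smul])
  · have antipodal : x = -θ := by rw [parallel, h, neg_one_smul]
    rw [antipodal, map_neg, hH.fderiv_apply_self hθ₀] at heq
    have := hH.pos hθ₀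
    have := hH.pos (neg_ne_zero.2 hθ₀)
    linarith

end IsRegularSupport

end Support

/-! ### Polar coordinates -/

section Polar

open Set

variable {n : ℕ}

/-- Polar coordinates `(θ, r) ↦ r θ` on `ℝ^{n+1} \ {0}`. -/
def polarMap (n : ℕ) (p : sphere (0 : Euc n) 1 × Ioi (0 : ℝ)) : Euc n := p.2.1 • p.1.1

/-- The star-shaped set `{r θ : 0 < r < ρ(θ)}` with radial function `ρ`, of which only the values
on the unit sphere matter. -/
def radialDomain (ρ : Euc n → ℝ) : Set (Euc n) := {x | x ≠ 0 ∧ ‖x‖ < ρ (‖x‖⁻¹ • x)}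

instance : IsFiniteMeasure (sphMeasure n) :=
  inferInstanceAs (IsFiniteMeasure (volume : Measure (Euc n)).toSphere)

lemma ne_zero_of_norm_eq_one {θ : Euc n} (hθ : ‖θ‖ = 1) : θ ≠ 0 :=
  ne_zero_of_norm_ne_zero (hθ ▸ one_ne_zero)

lemma norm_normalize {x : Euc n} (hx : x ≠ 0) : ‖‖x‖⁻¹ • x‖ = 1 :=
  norm_smul_inv_norm (𝕜 := ℝ) hx

lemma smul_normalize {x : Euc n} (hx : x ≠ 0) : ‖x‖ • ‖x‖⁻¹ • x = x :=
  smul_inv_smul₀ (norm_ne_zero_iff.2 hx) x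

lemma norm_smul_of_pos {r : ℝ} (hr : 0 < r) {θ : Euc n} (hθ : ‖θ‖ = 1) : ‖r • θ‖ = r := by
  rw [norm_smul, hθ, mul_one, Real.norm_of_nonneg hr.le]

lemma normalize_smul {r : ℝ} (hr : 0 < r) {θ : Euc n} (hθ : ‖θ‖ = 1) :
    ‖r • θ‖⁻¹ • r • θ = θ := by
  rw [norm_smul_of_pos hr hθ, inv_smul_smul₀ hr.ne']

lemma smul_mem_radialDomain_iff {ρ : Euc n → ℝ} {r : ℝ} (hr : 0 < r) {θ : Euc n} (hθ : ‖θ‖ = 1) :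
    r • θ ∈ radialDomain ρ ↔ r < ρ θ := by
  have : r • θ ≠ 0 := smul_ne_zero hr.ne' (ne_zero_of_norm_eq_one hθ)
  rw [radialDomain, mem_ofPred_eq, normalize_smul hr hθ, norm_smul_of_pos hr hθ,
    and_iff_right this]

lemma polarMap_eq_coe_symm :
    polarMap n = Subtype.val ∘ (homeomorphUnitSphereProd (Euc n)).symm := by
  ext1 p
  simp [polarMap]

lemma measurableEmbedding_polarMap : MeasurableEmbedding (polarMap n) := by
  rw [polarMap_eq_coe_symm]
  exact (MeasurableEmbedding.subtype_coe (measurableSet_singleton _).compl).comp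
    (Homeomorph.measurableEmbedding _)

lemma measurePreserving_polarMap :
    MeasurePreserving (polarMap n) ((sphMeasure n).prod (Measure.volumeIoiPow n)) volume := by
  have prod_of_polar :=
    Measure.measurePreserving_homeomorphUnitSphereProd (volume : Measure (Euc n))
  rw [show Module.finrank ℝ (Euc n) - 1 = n by simp] at prod_of_polar
  have coe : MeasurePreserving (Subtype.val : ({(0 : Euc n)}ᶜ : Set (Euc n)) → Euc n)
      ((volume : Measure (Euc n)).comap (↑)) volume := by
    have := measurePreserving_subtype_coe (μa := (volume : Measure (Euc n)))
      (measurableSet_singleton 0).compl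
    rwa [restrict_compl_singleton] at this
  rw [polarMap_eq_coe_symm]
  exact coe.comp (prod_of_polar.symm (homeomorphUnitSphereProd (Euc n)).toMeasurableEquiv)

lemma polarMap_preimage_radialDomain (ρ : Euc n → ℝ) :
    polarMap n ⁻¹' radialDomain ρ = {p | p.2.1 < ρ p.1} := by
  ext p
  exact smul_mem_radialDomain_iff p.2.2 (norm_eq_of_mem_sphere p.1)

lemma measurableSet_radialDomain {ρ : Euc n → ℝ}
    (hρ : Continuous fun θ : sphere (0 : Euc n) 1 => ρ θ) : MeasurableSet (radialDomain ρ) := by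
  have range_superset : radialDomain ρ ⊆ range (polarMap n) := fun x hx =>
    ⟨(⟨‖x‖⁻¹ • x, by simpa using norm_normalize hx.1⟩, ⟨‖x‖, norm_pos_iff.2 hx.1⟩),
      smul_normalize hx.1⟩
  rw [← image_preimage_eq_of_subset range_superset, polarMap_preimage_radialDomain]
  exact measurableEmbedding_polarMap.measurableSet_image.2
    (isOpen_lt (by fun_prop) (hρ.comp continuous_fst)).measurableSet

lemma setLIntegral_radialDomain {ρ : Euc n → ℝ}
    (hρ : Continuous fun θ : sphere (0 : Euc n) 1 => ρ θ)
    (hρ₀ : ∀ θ : sphere (0 : Euc n) 1, 0 < ρ θ) {w : Euc n → ENNReal}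
    (hw : Measurable fun θ : sphere (0 : Euc n) 1 => w θ) :
    ∫⁻ x in radialDomain ρ, w (‖x‖⁻¹ • x) =
      ∫⁻ θ : sphere (0 : Euc n) 1, w θ * ENNReal.ofReal (ρ θ ^ (n + 1) / (n + 1))
        ∂(sphMeasure n) := by
  set S : Set (sphere (0 : Euc n) 1 × Ioi (0 : ℝ)) := {p | p.2.1 < ρ p.1}
  have measurable_S : MeasurableSet S :=
    (isOpen_lt (by fun_prop) (hρ.comp continuous_fst)).measurableSet
  have slice (θ : sphere (0 : Euc n) 1) (r : Ioi (0 : ℝ)) :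
      S.indicator (fun p => w p.1) (θ, r) =
        (Iio (⟨ρ θ, hρ₀ θ⟩ : Ioi (0 : ℝ))).indicator (fun _ => w θ) r := rfl
  calc ∫⁻ x in radialDomain ρ, w (‖x‖⁻¹ • x)
      = ∫⁻ p in S, w p.1 ∂((sphMeasure n).prod (Measure.volumeIoiPow n)) := by
        rw [← measurePreserving_polarMap.setLIntegral_comp_preimage_emb
          measurableEmbedding_polarMap, polarMap_preimage_radialDomain]
        refine lintegral_congr fun p => ?_
        rw [polarMap, normalize_smul p.2.2 (norm_eq_of_mem_sphere p.1)]
    _ = ∫⁻ θ : sphere (0 : Euc n) 1, w θ * ENNReal.ofReal (ρ θ ^ (n + 1) / (n + 1))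
        ∂(sphMeasure n) := by
        have measurable_indicator : Measurable (S.indicator fun p => w p.1) :=
          (hw.comp measurable_fst).indicator measurable_S
        rw [← lintegral_indicator measurable_S,
          lintegral_prod _ measurable_indicator.aemeasurable]
        refine lintegral_congr fun θ => ?_
        simp only [slice]
        rw [lintegral_indicator_const measurableSet_Iio, Measure.volumeIoiPow_apply_Iio]

lemma continuous_sphere_of_continuousAt {W : Type*} [TopologicalSpace W] {F : Euc n → W}
    (hF : ∀ x, x ≠ 0 → ContinuousAt F x) : Continuous fun θ : sphere (0 : Euc n) 1 => F θ :=
  (continuousOn_iff_continuous_domRestrict (s := sphere (0 : Euc n) 1)).1 fun θ hθ =>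
    (hF θ (ne_zero_of_mem_unit_sphere ⟨θ, hθ⟩)).continuousWithinAt

lemma integrable_of_continuous {S W : Type*} [TopologicalSpace S] [CompactSpace S]
    [MeasurableSpace S] [OpensMeasurableSpace S] [NormedAddCommGroup W] {μ : Measure S}
    [IsFiniteMeasureOnCompacts μ] {F : S → W} (hF : Continuous F) : Integrable F μ :=
  hF.integrable_of_hasCompactSupport (HasCompactSupport.of_compactSpace F)

end Polar

/-! ### The inverse Gauss map and its Jacobian -/

section InverseGauss

variable {n : ℕ} {H : Euc n → ℝ}

/-- The measure `dV = h σ_n dμ` on the sphere, which is `n + 1` times the cone-volume measure. -/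
def coneMeasure (H : Euc n → ℝ) : Measure (sphere (0 : Euc n) 1) :=
  (sphMeasure n).withDensity fun θ => ENNReal.ofReal (volDens n H θ)

/-- The 1-homogeneous extension of the inverse Gauss map `X = DH`. It carries the unit ball,
up to the origin, onto the interior of the convex body with support function `H`. -/
def gaussExt (H : Euc n → ℝ) (x : Euc n) : Euc n := ‖x‖ • gradient H x

lemma gradient_apply (f : Euc n → ℝ) (x : Euc n) (i : Fin (n + 1)) :
    gradient f x i = fderiv ℝ f x (EuclideanSpace.single i 1) := by
  rw [← inner_gradient_left, EuclideanSpace.inner_single_right]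
  simp

lemma det_add_vecMulVec_of_vecMul_eq_smul {m : ℕ} {B : Matrix (Fin m) (Fin m) ℝ}
    {p θ : Fin m → ℝ} {h : ℝ} (hh : h ≠ 0) (hB : θ ᵥ* B = h • θ) (hp : θ ⬝ᵥ p = 0) :
    (B + vecMulVec p θ).det = B.det := by
  have factor : B + vecMulVec p θ = (1 + vecMulVec (h⁻¹ • p) θ) * B := by
    rw [add_mul, one_mul, vecMulVec_mul, hB, smul_vecMulVec, vecMulVec_smul, smul_smul,
      inv_mul_cancel₀ hh, one_smul]
  rw [factor, det_mul, vecMulVec_eq Unit, det_one_add_replicateCol_mul_replicateRow,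
    dotProduct_smul, hp, smul_zero, add_zero, one_mul]

lemma contDiffAt_det {m : ℕ} {B : Euc n → Matrix (Fin m) (Fin m) ℝ} {x : Euc n} {k : WithTop ℕ∞}
    (hB : ∀ i j, ContDiffAt ℝ k (fun y => B y i j) x) :
    ContDiffAt ℝ k (fun y => (B y).det) x := by
  simp only [det_apply]
  exact ContDiffAt.sum fun σ _ =>
    (contDiffAt_prod fun i _ => hB (σ i) i).const_smul (Equiv.Perm.sign σ)

lemma hasFDerivAt_norm {x : Euc n} (hx : x ≠ 0) :
    HasFDerivAt (fun y : Euc n => ‖y‖) (‖x‖⁻¹ • innerSL ℝ x) x := by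
  have sq_norm : HasFDerivAt (fun y : Euc n => ‖y‖ ^ 2) (2 • innerSL ℝ x) x :=
    (hasStrictFDerivAt_norm_sq x).hasFDerivAt
  have sqrt_sq_norm := sq_norm.sqrt (pow_ne_zero 2 (norm_ne_zero_iff.2 hx))
  simp only [Real.sqrt_sq_eq_abs, abs_norm] at sqrt_sq_norm
  refine sqrt_sq_norm.congr_fderiv ?_
  ext v
  simp
  field_simp

namespace IsRegularSupport

lemma inner_gradient_self (hH : IsRegularSupport n H) {x : Euc n} (hx : x ≠ 0) :
    ⟪gradient H x, x⟫ = H x := by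
  rw [inner_gradient_left, hH.fderiv_apply_self hx]

lemma gradient_smul (hH : IsRegularSupport n H) {c : ℝ} (hc : 0 < c) (x : Euc n) :
    gradient H (c • x) = gradient H x := by
  ext i
  rw [gradient_apply, gradient_apply, hH.fderiv_smul hc]

lemma gaussExt_smul (hH : IsRegularSupport n H) {r : ℝ} (hr : 0 < r) {θ : Euc n} (hθ : ‖θ‖ = 1) :
    gaussExt H (r • θ) = r • gradient H θ := by
  rw [gaussExt, norm_smul_of_pos hr hθ, hH.gradient_smul hr]

lemma volDens_eq_det_bmat (hH : IsRegularSupport n H) {x : Euc n} (hx : x ≠ 0) :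
    volDens n H x = (bmat n H x).det := by
  rw [volDens, sigman, mul_div_cancel₀ _ (hH.pos hx).ne']

lemma hasFDerivAt_gradient_apply (hH : IsRegularSupport n H) {x : Euc n} (hx : x ≠ 0)
    (i : Fin (n + 1)) :
    HasFDerivAt (fun y => gradient H y i) (hess H x (EuclideanSpace.single i 1)) x := by
  simp only [gradient_apply]
  refine ((hH.differentiableAt_fderiv hx).hasFDerivAt.clm_apply
    (hasFDerivAt_const (EuclideanSpace.single i (1 : ℝ)) x)).congr_fderiv ?_
  ext v
  rw [hH.hess_comm hx]
  simp [hess]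

lemma hasFDerivAt_gaussExt_apply (hH : IsRegularSupport n H) {x : Euc n} (hx : x ≠ 0)
    (i : Fin (n + 1)) :
    HasFDerivAt (fun y => gaussExt H y i)
      (‖x‖ • hess H x (EuclideanSpace.single i 1)
        + gradient H x i • (‖x‖⁻¹ • innerSL ℝ x)) x :=
  (hasFDerivAt_norm hx).mul (hH.hasFDerivAt_gradient_apply hx i)

lemma differentiableAt_gaussExt (hH : IsRegularSupport n H) {x : Euc n} (hx : x ≠ 0) :
    DifferentiableAt ℝ (gaussExt H) x :=
  differentiableAt_euclidean.2 fun i => (hH.hasFDerivAt_gaussExt_apply hx i).differentiableAt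

lemma toMatrix_fderiv_gaussExt_smul (hH : IsRegularSupport n H) {r : ℝ} (hr : 0 < r)
    {θ : Euc n} (hθ : ‖θ‖ = 1) :
    LinearMap.toMatrix (EuclideanSpace.basisFun (Fin (n + 1)) ℝ).toBasis
        (EuclideanSpace.basisFun (Fin (n + 1)) ℝ).toBasis
        (fderiv ℝ (gaussExt H) (r • θ) : Euc n →ₗ[ℝ] Euc n)
      = bmat n H θ + vecMulVec (gradient H θ - H θ • θ : Euc n) θ := by
  have hθ₀ := ne_zero_of_norm_eq_one hθ
  have hx₀ : r • θ ≠ 0 := smul_ne_zero hr.ne' hθ₀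
  ext i j
  have component : fderiv ℝ (gaussExt H) (r • θ) (EuclideanSpace.single j 1) i = _ :=
    congrArg (fun L => L (EuclideanSpace.single j 1)) <|
      ((EuclideanSpace.proj (𝕜 := ℝ) i).hasFDerivAt.comp (r • θ)
        (hH.differentiableAt_gaussExt hx₀).hasFDerivAt).unique
        (hH.hasFDerivAt_gaussExt_apply hx₀ i)
  rw [norm_smul_of_pos hr hθ, hH.hess_smul hr, hH.gradient_smul hr] at component
  rw [LinearMap.toMatrix_apply, OrthonormalBasis.coe_toBasis_repr_apply,
    EuclideanSpace.basisFun_repr, OrthonormalBasis.coe_toBasis, EuclideanSpace.basisFun_apply,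
    ContinuousLinearMap.coe_coe, component, Matrix.add_apply, hH.bmat_apply hθ₀, bform_apply,
    vecMulVec_apply]
  simp only [_root_.add_apply, _root_.smul_apply, innerSL_apply_apply, smul_eq_mul,
    EuclideanSpace.inner_single_right, PiLp.smul_apply, PiLp.sub_apply, conj_trivial, one_mul]
  field_simp
  ring

lemma det_fderiv_gaussExt (hH : IsRegularSupport n H) {x : Euc n} (hx : x ≠ 0) :
    (fderiv ℝ (gaussExt H) x).det = volDens n H (‖x‖⁻¹ • x) := by
  have hθ := norm_normalize hx
  set θ := ‖x‖⁻¹ • x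
  have hθ₀ := ne_zero_of_norm_eq_one hθ
  rw [← smul_normalize hx, ContinuousLinearMap.det,
    ← LinearMap.det_toMatrix (EuclideanSpace.basisFun (Fin (n + 1)) ℝ).toBasis,
    hH.toMatrix_fderiv_gaussExt_smul (norm_pos_iff.2 hx) hθ, hH.volDens_eq_det_bmat hθ₀,
    det_add_vecMulVec_of_vecMul_eq_smul (hH.pos hθ₀).ne']
  · ext j
    have := hH.dotProduct_bmat_mulVec hθ₀ θ (EuclideanSpace.single j 1)
    rw [bform_apply, hH.hess_apply_self hθ₀, PiLp.ofLp_single, mulVec_single_one] at this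
    simpa [vecMul, hθ, EuclideanSpace.inner_single_right, col_apply'] using this
  · rw [← inner_eq_dotProduct, inner_sub_right, inner_smul_right, real_inner_comm,
      hH.inner_gradient_self hθ₀]
    simp [hθ]

lemma injOn_gaussExt (hH : IsRegularSupport n H) : Set.InjOn (gaussExt H) {(0 : Euc n)}ᶜ := by
  intro x hx y hy hxy
  rw [← smul_normalize hx, ← smul_normalize hy] at hxy ⊢
  have hr : 0 < ‖x‖ := norm_pos_iff.2 hx
  have hs : 0 < ‖y‖ := norm_pos_iff.2 hy
  have hθ := norm_normalize hx
  have hη := norm_normalize hy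
  generalize ‖x‖⁻¹ • x = θ at *
  generalize ‖y‖⁻¹ • y = η at *
  generalize ‖x‖ = r at *
  generalize ‖y‖ = s at *
  rw [hH.gaussExt_smul hr hθ, hH.gaussExt_smul hs hη] at hxy
  have hθ₀ := ne_zero_of_norm_eq_one hθ
  have hη₀ := ne_zero_of_norm_eq_one hη
  have paired (v : Euc n) : r * fderiv ℝ H θ v = s * fderiv ℝ H η v := by
    simpa [inner_smul_left] using congrArg (fun z => ⟪z, v⟫) hxy
  have at_θ := paired θ
  have at_η := paired η
  rw [hH.fderiv_apply_self hθ₀] at at_θ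
  rw [hH.fderiv_apply_self hη₀] at at_η
  have radii_eq : r = s := by
    apply le_antisymm
    · refine le_of_mul_le_mul_right (at_θ.trans_le ?_) (hH.pos hθ₀)
      exact mul_le_mul_of_nonneg_left (hH.fderiv_apply_le hη₀ θ) hs.le
    · refine le_of_mul_le_mul_right (at_η.symm.trans_le ?_) (hH.pos hη₀)
      exact mul_le_mul_of_nonneg_left (hH.fderiv_apply_le hθ₀ η) hr.le
  have directions_eq : θ = η := by
    by_contra hne
    have strict := hH.fderiv_apply_lt hη hθ hne
    rw [radii_eq] at at_θ
    exact strict.ne' (mul_left_cancel₀ hs.ne' at_θ)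
  rw [radii_eq, directions_eq]

lemma contDiffAt_bmat_apply (hH : IsRegularSupport n H) {x : Euc n} (hx : x ≠ 0)
    (i j : Fin (n + 1)) : ContDiffAt ℝ 1 (fun y => bmat n H y i j) x := by
  have hess_entry : ContDiffAt ℝ 1 (fun y => ehess n H y i j) x :=
    (((hH.contDiffAt_fderiv hx).clm_apply contDiffAt_const).fderiv_right
      (m := 1) (by norm_num)).clm_apply contDiffAt_const
  have coordinate (i : Fin (n + 1)) : ContDiffAt ℝ 1 (fun y : Euc n => y i) x := by fun_prop
  exact hess_entry.add
    (((hH.contDiffAt hx).of_le (by norm_num)).mul ((coordinate i).mul (coordinate j)))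

lemma contDiffAt_volDens (hH : IsRegularSupport n H) {x : Euc n} (hx : x ≠ 0) :
    ContDiffAt ℝ 1 (volDens n H) x := by
  refine (contDiffAt_det (hH.contDiffAt_bmat_apply hx)).congr_of_eventuallyEq ?_
  filter_upwards [isOpen_compl_singleton.mem_nhds hx] with y hy
  exact hH.volDens_eq_det_bmat hy

lemma volDens_pos (hH : IsRegularSupport n H) {θ : Euc n} (hθ : ‖θ‖ = 1) :
    0 < volDens n H θ := by
  rw [hH.volDens_eq_det_bmat (ne_zero_of_norm_eq_one hθ)]
  exact (hH.posDef_bmat θ (by simpa using hθ)).det_pos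

lemma continuous_volDens (hH : IsRegularSupport n H) :
    Continuous fun θ : sphere (0 : Euc n) 1 => volDens n H θ :=
  continuous_sphere_of_continuousAt fun _ hx => (hH.contDiffAt_volDens hx).continuousAt

lemma isFiniteMeasure_coneMeasure (hH : IsRegularSupport n H) :
    IsFiniteMeasure (coneMeasure H) :=
  isFiniteMeasure_withDensity_ofReal (integrable_of_continuous hH.continuous_volDens).2

lemma integral_coneMeasure (hH : IsRegularSupport n H) {W : Type*} [NormedAddCommGroup W]
    [NormedSpace ℝ W] (F : sphere (0 : Euc n) 1 → W) :
    ∫ θ, F θ ∂coneMeasure H = ∫ θ, volDens n H θ • F θ ∂sphMeasure n := by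
  rw [coneMeasure, integral_withDensity_eq_integral_toReal_smul
    hH.continuous_volDens.measurable.ennreal_ofReal
    (Filter.Eventually.of_forall fun _ => ENNReal.ofReal_lt_top)]
  exact integral_congr_ae (Filter.Eventually.of_forall fun θ => by
    simp only [ENNReal.toReal_ofReal (hH.volDens_pos (norm_eq_of_mem_sphere θ)).le])

lemma measurableSet_image_gaussExt (hH : IsRegularSupport n H) {ρ : Euc n → ℝ}
    (hρ : Continuous fun θ : sphere (0 : Euc n) 1 => ρ θ) :
    MeasurableSet (gaussExt H '' radialDomain ρ) :=
  measurable_image_of_fderivWithin (measurableSet_radialDomain hρ)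
    (fun _ hx => (hH.differentiableAt_gaussExt hx.1).hasFDerivAt.hasFDerivWithinAt)
    (hH.injOn_gaussExt.mono fun _ hx => hx.1)

lemma volume_image_gaussExt (hH : IsRegularSupport n H) {ρ : Euc n → ℝ}
    (hρ : Continuous fun θ : sphere (0 : Euc n) 1 => ρ θ)
    (hρ₀ : ∀ θ : sphere (0 : Euc n) 1, 0 < ρ θ) :
    volume (gaussExt H '' radialDomain ρ) =
      ENNReal.ofReal ((∫ θ, ρ θ ^ (n + 1) ∂coneMeasure H) / (n + 1)) := by
  have density_pos (θ : sphere (0 : Euc n) 1) : 0 < volDens n H θ :=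
    hH.volDens_pos (norm_eq_of_mem_sphere θ)
  calc volume (gaussExt H '' radialDomain ρ)
      = ∫⁻ x in radialDomain ρ, ENNReal.ofReal |(fderiv ℝ (gaussExt H) x).det| :=
        (lintegral_abs_det_fderiv_eq_addHaar_image volume (measurableSet_radialDomain hρ)
          (fun _ hx => (hH.differentiableAt_gaussExt hx.1).hasFDerivAt.hasFDerivWithinAt)
          (hH.injOn_gaussExt.mono fun _ hx => hx.1)).symm
    _ = ∫⁻ x in radialDomain ρ, ENNReal.ofReal (volDens n H (‖x‖⁻¹ • x)) := by
        refine setLIntegral_congr_fun (measurableSet_radialDomain hρ) fun x hx => ?_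
        rw [hH.det_fderiv_gaussExt hx.1, abs_of_pos (hH.volDens_pos (norm_normalize hx.1))]
    _ = ∫⁻ θ : sphere (0 : Euc n) 1,
          ENNReal.ofReal (volDens n H θ * ρ θ ^ (n + 1) / (n + 1)) ∂(sphMeasure n) := by
        rw [setLIntegral_radialDomain (w := fun x => ENNReal.ofReal (volDens n H x)) hρ hρ₀
          hH.continuous_volDens.measurable.ennreal_ofReal]
        refine lintegral_congr fun θ => ?_
        rw [← ENNReal.ofReal_mul (density_pos θ).le, mul_div_assoc]
    _ = _ := by
        rw [← ofReal_integral_eq_lintegral_ofReal, integral_div, hH.integral_coneMeasure]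
        · rfl
        · exact (integrable_of_continuous (hH.continuous_volDens.mul (hρ.pow _))).div_const _
        · refine Filter.Eventually.of_forall fun θ => ?_
          have := hρ₀ θ
          have := density_pos θ
          simp only [Pi.zero_apply]
          positivity

lemma exists_sphere_inner_eq_mul (hH : IsRegularSupport n H) {y : Euc n} (hy : y ≠ 0) :
    ∃ θ : Euc n, ‖θ‖ = 1 ∧ ∃ m : ℝ, 0 < m ∧ ⟪θ, y⟫ = m * H θ ∧ ∀ x, ⟪x, y⟫ ≤ m * H x := by
  have ratio_continuous : Continuous fun θ : sphere (0 : Euc n) 1 => ⟪θ.1, y⟫ / H θ :=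
    continuous_sphere_of_continuousAt (F := fun x => ⟪x, y⟫ / H x) fun x hx =>
      ContinuousAt.div (by fun_prop) (hH.contDiffAt hx).continuousAt (hH.pos hx).ne'
  have : Nonempty (sphere (0 : Euc n) 1) := ⟨⟨‖y‖⁻¹ • y, by simpa using norm_normalize hy⟩⟩
  obtain ⟨θ, -, θ_max⟩ :=
    isCompact_univ.exists_isMaxOn Set.univ_nonempty ratio_continuous.continuousOn
  have hθ := norm_eq_of_mem_sphere θ
  have ratio_le : ∀ x, ⟪x, y⟫ ≤ ⟪θ.1, y⟫ / H θ * H x := by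
    intro x
    rcases eq_or_ne x 0 with rfl | hx
    · simp [hH.eval_zero]
    have norm_pos : 0 < ‖x‖⁻¹ := inv_pos.2 (norm_pos_iff.2 hx)
    have at_x := θ_max (Set.mem_univ ⟨‖x‖⁻¹ • x, by simpa using norm_normalize hx⟩)
    simp only [Set.mem_ofPred_eq] at at_x
    rwa [hH.homogeneous _ norm_pos, real_inner_smul_left,
      mul_div_mul_left _ _ norm_pos.ne', div_le_iff₀ (hH.pos hx)] at at_x
  refine ⟨θ, hθ, ⟪θ.1, y⟫ / H θ, ?_, ?_, ratio_le⟩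
  · exact pos_of_mul_pos_left ((real_inner_self_pos.2 hy).trans_le (ratio_le y)) (hH.pos hy).le
  · rw [div_mul_cancel₀ _ (hH.pos (ne_zero_of_norm_eq_one hθ)).ne']

lemma smul_gradient_eq_of_inner_le (hH : IsRegularSupport n H) {θ y : Euc n} (hθ : θ ≠ 0) {m : ℝ}
    (heq : ⟪θ, y⟫ = m * H θ) (hle : ∀ x, ⟪x, y⟫ ≤ m * H x) : m • gradient H θ = y := by
  have minimum : IsLocalMin (fun x => m * H x - ⟪y, x⟫) θ :=
    Filter.Eventually.of_forall fun x => by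
      simp only [real_inner_comm _ y, heq, sub_self, sub_nonneg, hle x]
  have critical := minimum.hasFDerivAt_eq_zero
    (((hH.differentiableAt hθ).hasFDerivAt.const_mul m).sub (innerSL ℝ y).hasFDerivAt)
  refine ext_inner_right ℝ fun v => ?_
  rw [real_inner_smul_left, inner_gradient_left]
  simpa [sub_eq_zero] using congrArg (fun L => L v) critical

lemma mem_image_gaussExt (hH : IsRegularSupport n H) {c : ℝ} {y : Euc n} (hy : y ≠ 0)
    (h : ∀ x : Euc n, ‖x‖ = 1 → ⟪x, y⟫ < c * H x) :
    y ∈ gaussExt H '' radialDomain fun _ => c := by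
  obtain ⟨θ, hθ, m, hm, heq, hle⟩ := hH.exists_sphere_inner_eq_mul hy
  have hθ₀ := ne_zero_of_norm_eq_one hθ
  have m_lt : m < c := lt_of_mul_lt_mul_right (heq ▸ h θ hθ) (hH.pos hθ₀).le
  exact ⟨m • θ, (smul_mem_radialDomain_iff hm hθ).2 m_lt,
    (hH.gaussExt_smul hm hθ).trans (hH.smul_gradient_eq_of_inner_le hθ₀ heq hle)⟩

end IsRegularSupport

end InverseGauss

/-! ### Wulff shapes of small perturbations of the support function -/

section Wulff

open Asymptotics Filter Set
open scoped Topology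

lemma exists_pos_mul_norm_sq_le_of_quadratic {E : Type*} [NormedAddCommGroup E] [NormedSpace ℝ E]
    [FiniteDimensional ℝ E] [Nontrivial E] {Q : E → ℝ} (hQ : Continuous Q)
    (hQ_smul : ∀ (s : ℝ) v, Q (s • v) = s ^ 2 * Q v) (hQ_pos : ∀ v, v ≠ 0 → 0 < Q v) :
    ∃ c > 0, ∀ v, c * ‖v‖ ^ 2 ≤ Q v := by
  have : ProperSpace E := FiniteDimensional.proper ℝ E
  obtain ⟨u, hu, u_min⟩ := (isCompact_sphere (0 : E) 1).exists_isMinOn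
    (NormedSpace.sphere_nonempty.2 zero_le_one) hQ.continuousOn
  refine ⟨Q u, hQ_pos u (ne_of_mem_sphere hu one_ne_zero), fun v => ?_⟩
  rcases eq_or_ne v 0 with rfl | hv
  · simpa using (hQ_smul 0 (0 : E)).ge
  · have hv' : ‖v‖ ≠ 0 := norm_ne_zero_iff.2 hv
    have unit_mem : ‖v‖⁻¹ • v ∈ sphere (0 : E) 1 := by simp [norm_smul, hv']
    calc Q u * ‖v‖ ^ 2 ≤ Q (‖v‖⁻¹ • v) * ‖v‖ ^ 2 := by gcongr; exact u_min unit_mem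
      _ = Q v := by rw [hQ_smul]; field_simp

variable {n : ℕ} {H φ k : Euc n → ℝ}

/-- The amount by which the point `ρ(θ) X(θ)`, where `ρ = 1 + t φ - t² k`, satisfies the constraint
`⟨x, ·⟩ ≤ H(x) (1 + t φ(x))` defining the Wulff shape of `H (1 + t φ)`. The argument is
`(t, θ, x)`. -/
def wulffGap (H φ k : Euc n → ℝ) (p : ℝ × sphere (0 : Euc n) 1 × sphere (0 : Euc n) 1) : ℝ :=
  H p.2.2 * (1 + p.1 * φ p.2.2)
    - (1 + p.1 * φ p.2.1 - p.1 ^ 2 * k p.2.1) * fderiv ℝ H p.2.1 p.2.2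

/-- The quadratic form in `(v, t)` which is the leading term of `wulffGap` near `x = θ`, `t = 0`,
with `v = x - θ`. -/
def wulffForm (H φ k : Euc n → ℝ) (θ : Euc n) (w : Euc n × ℝ) : ℝ :=
  bform H θ w.1 w.1 / 2 + H θ * w.2 * fderiv ℝ φ θ w.1 + H θ * w.2 ^ 2 * k θ

/-- The displacement `(x - θ, t)` at which `wulffForm` is compared with `wulffGap`. -/
def wulffDisp (p : ℝ × sphere (0 : Euc n) 1 × sphere (0 : Euc n) 1) : Euc n × ℝ :=
  (p.2.2 - p.2.1, p.1)

lemma norm_sub_isBigO_wulffDisp (l : Filter (ℝ × sphere (0 : Euc n) 1 × sphere (0 : Euc n) 1)) :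
    (fun p => ‖(p.2.2 : Euc n) - p.2.1‖) =O[l] fun p => ‖wulffDisp p‖ :=
  isBigO_of_le l fun p => by
    rw [norm_norm, norm_norm]
    exact norm_fst_le (wulffDisp p)

lemma fst_isBigO_wulffDisp (l : Filter (ℝ × sphere (0 : Euc n) 1 × sphere (0 : Euc n) 1)) :
    (fun p => p.1) =O[l] fun p => ‖wulffDisp p‖ :=
  isBigO_of_le l fun p => by
    rw [norm_norm]
    exact norm_snd_le (wulffDisp p)

lemma clm_apply_sub_isBigO_wulffDisp
    (l : Filter (ℝ × sphere (0 : Euc n) 1 × sphere (0 : Euc n) 1)) (L : Euc n →L[ℝ] ℝ) :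
    (fun p => L ((p.2.2 : Euc n) - p.2.1)) =O[l] fun p => ‖wulffDisp p‖ :=
  ((L.isBigO_comp _ l).norm_right).trans (norm_sub_isBigO_wulffDisp l)

lemma bilin_apply_sub_isBigO_wulffDisp
    (l : Filter (ℝ × sphere (0 : Euc n) 1 × sphere (0 : Euc n) 1))
    (B : Euc n →L[ℝ] Euc n →L[ℝ] ℝ) :
    (fun p => B ((p.2.2 : Euc n) - p.2.1) ((p.2.2 : Euc n) - p.2.1))
      =O[l] fun p => ‖wulffDisp p‖ ^ 2 := by
  refine (IsBigO.of_bound ‖B‖ (Eventually.of_forall fun p => ?_)).trans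
    ((norm_sub_isBigO_wulffDisp l).pow 2)
  rw [norm_pow, norm_norm, sq, ← mul_assoc]
  exact B.le_opNorm₂ _ _

lemma tendsto_coe_snd_nhds (t₀ : ℝ) (θ₀ : sphere (0 : Euc n) 1) :
    Tendsto (fun p : ℝ × sphere (0 : Euc n) 1 × sphere (0 : Euc n) 1 =>
      ((p.2.1 : Euc n), (p.2.2 : Euc n))) (𝓝 (t₀, θ₀, θ₀)) (𝓝 (θ₀.1, θ₀.1)) :=
  Continuous.tendsto' (by fun_prop) _ _ rfl

lemma inner_sub_isLittleO_wulffDisp (t₀ : ℝ) (θ₀ : sphere (0 : Euc n) 1) :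
    (fun p : ℝ × sphere (0 : Euc n) 1 × sphere (0 : Euc n) 1 =>
        ⟪(θ₀ : Euc n), (p.2.2 : Euc n) - p.2.1⟫)
      =o[𝓝 (t₀, θ₀, θ₀)] fun p => ‖wulffDisp p‖ := by
  set l := 𝓝 (t₀, θ₀, θ₀)
  -- Chords of the sphere are orthogonal to the radius through their midpoint.
  have inner_eq : ∀ θ x : sphere (0 : Euc n) 1,
      ⟪(θ₀ : Euc n), (x : Euc n) - θ⟫ = ⟪(θ₀ : Euc n) - (2⁻¹ : ℝ) • (x + θ), (x : Euc n) - θ⟫ := by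
    intro θ x
    have orthogonal : ⟪(x : Euc n) + θ, (x : Euc n) - θ⟫ = 0 :=
      (real_inner_add_sub_eq_zero_iff _ _).2 (by simp)
    rw [inner_sub_left, real_inner_smul_left, orthogonal, mul_zero, sub_zero]
  have tendsto_zero : Tendsto (fun p : ℝ × sphere (0 : Euc n) 1 × sphere (0 : Euc n) 1 =>
      (θ₀ : Euc n) - (2⁻¹ : ℝ) • ((p.2.2 : Euc n) + p.2.1)) l (𝓝 0) := by
    refine Continuous.tendsto' (by fun_prop) _ _ ?_
    rw [← two_smul ℝ, inv_smul_smul₀ two_ne_zero, sub_self]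
  simp only [inner_eq]
  have product := ((isLittleO_one_iff ℝ).2 tendsto_zero).norm_left.mul_isBigO
    (norm_sub_isBigO_wulffDisp l)
  simp only [one_mul] at product
  refine IsBigO.trans_isLittleO (isBigO_of_le l fun p => ?_) product
  simpa only [norm_mul, norm_norm] using norm_inner_le_norm (𝕜 := ℝ) _ _

lemma sub_sub_fderiv_isLittleO_wulffDisp (t₀ : ℝ) (θ₀ : sphere (0 : Euc n) 1)
    (hφ : ContDiffAt ℝ 1 φ θ₀) :
    (fun p : ℝ × sphere (0 : Euc n) 1 × sphere (0 : Euc n) 1 =>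
        φ p.2.2 - φ p.2.1 - fderiv ℝ φ θ₀ (p.2.2 - p.2.1))
      =o[𝓝 (t₀, θ₀, θ₀)] fun p => ‖wulffDisp p‖ := by
  have strict := (hφ.hasStrictFDerivAt one_ne_zero).isLittleO.comp_tendsto
    (continuous_swap.continuousAt.tendsto.comp (tendsto_coe_snd_nhds t₀ θ₀))
  exact strict.norm_right.trans_isBigO (norm_sub_isBigO_wulffDisp _)

lemma fst_sq_mul_sub_isLittleO_wulffDisp (hk : Continuous fun θ : sphere (0 : Euc n) 1 => k θ)
    (t₀ : ℝ) (θ₀ : sphere (0 : Euc n) 1) :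
    (fun p : ℝ × sphere (0 : Euc n) 1 × sphere (0 : Euc n) 1 => p.1 ^ 2 * (k p.2.1 - k θ₀))
      =o[𝓝 (t₀, θ₀, θ₀)] fun p => ‖wulffDisp p‖ ^ 2 := by
  have tendsto_zero : Tendsto (fun p : ℝ × sphere (0 : Euc n) 1 × sphere (0 : Euc n) 1 =>
      k p.2.1 - k θ₀) (𝓝 (t₀, θ₀, θ₀)) (𝓝 0) :=
    Continuous.tendsto' ((hk.comp (continuous_fst.comp continuous_snd)).sub continuous_const)
      _ _ (sub_self _)
  simpa only [mul_one] using ((fst_isBigO_wulffDisp _).pow 2).mul_isLittleO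
    ((isLittleO_one_iff ℝ).2 tendsto_zero)

lemma continuous_wulffForm (θ : Euc n) : Continuous (wulffForm H φ k θ) := by
  unfold wulffForm
  fun_prop

lemma wulffForm_smul (θ : Euc n) (s : ℝ) (w : Euc n × ℝ) :
    wulffForm H φ k θ (s • w) = s ^ 2 * wulffForm H φ k θ w := by
  simp only [wulffForm, Prod.smul_fst, Prod.smul_snd, map_smul, _root_.smul_apply, smul_eq_mul]
  ring

namespace IsRegularSupport

lemma sub_fderiv_apply_isLittleO (hH : IsRegularSupport n H) (t₀ : ℝ)
    (θ₀ : sphere (0 : Euc n) 1) :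
    (fun p : ℝ × sphere (0 : Euc n) 1 × sphere (0 : Euc n) 1 =>
        H p.2.2 - fderiv ℝ H p.2.1 p.2.2 - hess H θ₀ (p.2.2 - p.2.1) (p.2.2 - p.2.1) / 2)
      =o[𝓝 (t₀, θ₀, θ₀)] fun p => ‖wulffDisp p‖ ^ 2 := by
  have taylor := (taylor_two_isLittleO
      ((hH.contDiffAt (ne_zero_of_mem_unit_sphere θ₀)).of_le (by norm_num))).comp_tendsto
    (tendsto_coe_snd_nhds t₀ θ₀)
  refine (taylor.congr_left fun p => ?_).trans_isBigO ((norm_sub_isBigO_wulffDisp _).pow 2)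
  simp only [Function.comp_apply, map_sub, hess,
    hH.fderiv_apply_self (ne_zero_of_mem_unit_sphere p.2.1)]
  ring

lemma sub_fderiv_apply_isBigO (hH : IsRegularSupport n H) (t₀ : ℝ) (θ₀ : sphere (0 : Euc n) 1) :
    (fun p : ℝ × sphere (0 : Euc n) 1 × sphere (0 : Euc n) 1 =>
        H p.2.2 - fderiv ℝ H p.2.1 p.2.2)
      =O[𝓝 (t₀, θ₀, θ₀)] fun p => ‖wulffDisp p‖ ^ 2 :=
  ((hH.sub_fderiv_apply_isLittleO t₀ θ₀).isBigO.add
    ((bilin_apply_sub_isBigO_wulffDisp _ (hess H θ₀)).const_mul_left 2⁻¹)).congr_left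
      fun p => by ring

lemma tendsto_fderiv_apply (hH : IsRegularSupport n H) (t₀ : ℝ) (θ₀ : sphere (0 : Euc n) 1) :
    Tendsto (fun p : ℝ × sphere (0 : Euc n) 1 × sphere (0 : Euc n) 1 =>
      fderiv ℝ H p.2.1 p.2.2) (𝓝 (t₀, θ₀, θ₀)) (𝓝 (H θ₀)) := by
  have hθ₀ := ne_zero_of_mem_unit_sphere θ₀
  have fderiv_continuous := continuous_sphere_of_continuousAt fun _ hx =>
    (hH.contDiffAt_fderiv hx).continuousAt
  refine Continuous.tendsto' (Continuous.clm_apply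
    (fderiv_continuous.comp (continuous_fst.comp continuous_snd)) (by fun_prop)) _ _ ?_
  exact hH.fderiv_apply_self hθ₀

lemma fst_mul_mul_sub_fderiv_apply_isLittleO (hH : IsRegularSupport n H)
    (hφ : Continuous fun θ : sphere (0 : Euc n) 1 => φ θ) (θ₀ : sphere (0 : Euc n) 1) :
    (fun p : ℝ × sphere (0 : Euc n) 1 × sphere (0 : Euc n) 1 =>
        p.1 * φ p.2.2 * (H p.2.2 - fderiv ℝ H p.2.1 p.2.2))
      =o[𝓝 (0, θ₀, θ₀)] fun p => ‖wulffDisp p‖ ^ 2 := by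
  have tendsto_zero : Tendsto (fun p : ℝ × sphere (0 : Euc n) 1 × sphere (0 : Euc n) 1 =>
      p.1 * φ p.2.2) (𝓝 (0, θ₀, θ₀)) (𝓝 0) :=
    Continuous.tendsto' (continuous_fst.mul (hφ.comp (continuous_snd.comp continuous_snd)))
      _ _ (zero_mul _)
  simpa only [one_mul] using ((isLittleO_one_iff ℝ).2 tendsto_zero).mul_isBigO
    (hH.sub_fderiv_apply_isBigO 0 θ₀)

/- With `G = H x - DH(θ) x` and `a = DH(θ) x`, the gap is
`G (1 + t φ x) + a (t (φ x - φ θ) + t² k θ)`; here `G = D²H(v, v) / 2 + o`, `a = H θ₀ + o(1)` and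
`⟨θ₀, v⟩² = o`, the errors being relative to the square of the displacement. -/
lemma wulffGap_sub_wulffForm_isLittleO (hH : IsRegularSupport n H)
    (hφ : ∀ x, x ≠ 0 → ContDiffAt ℝ 1 φ x) (hk : Continuous fun θ : sphere (0 : Euc n) 1 => k θ)
    (θ₀ : sphere (0 : Euc n) 1) :
    (fun p => wulffGap H φ k p - wulffForm H φ k θ₀ (wulffDisp p))
      =o[𝓝 (0, θ₀, θ₀)] fun p => ‖wulffDisp p‖ ^ 2 := by
  set l := 𝓝 ((0 : ℝ), θ₀, θ₀)
  have t_bigO := fst_isBigO_wulffDisp l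
  have φ_error := t_bigO.mul_isLittleO
    (sub_sub_fderiv_isLittleO_wulffDisp 0 θ₀ (hφ θ₀ (ne_zero_of_mem_unit_sphere θ₀)))
  have inner_error := (inner_sub_isLittleO_wulffDisp 0 θ₀).mul (inner_sub_isLittleO_wulffDisp 0 θ₀)
  have t_fderiv_bigO := t_bigO.mul (clm_apply_sub_isBigO_wulffDisp l (fderiv ℝ φ θ₀))
  simp only [← sq ‖wulffDisp _‖] at φ_error inner_error t_fderiv_bigO
  have k_error := fst_sq_mul_sub_isLittleO_wulffDisp hk 0 θ₀
  have φ_continuous := continuous_sphere_of_continuousAt fun x hx => (hφ x hx).continuousAt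
  have fderiv_error := ((isLittleO_one_iff ℝ).2
    (tendsto_sub_nhds_zero_iff.2 (hH.tendsto_fderiv_apply 0 θ₀))).mul_isBigO
    (((t_fderiv_bigO.add φ_error.isBigO).add k_error.isBigO).add
      ((t_bigO.pow 2).const_mul_left (k θ₀)))
  simp only [one_mul] at fderiv_error
  refine (((((hH.sub_fderiv_apply_isLittleO 0 θ₀).sub (inner_error.const_mul_left (H θ₀ / 2))).add
    (hH.fst_mul_mul_sub_fderiv_apply_isLittleO φ_continuous θ₀)).add
    ((φ_error.add k_error).const_mul_left (H θ₀))).add fderiv_error).congr_left fun p => ?_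
  simp only [wulffGap, wulffForm, wulffDisp, bform_apply]
  ring

lemma eventually_wulffGap_nonneg_diagonal (hH : IsRegularSupport n H)
    (hφ : ∀ x, x ≠ 0 → ContDiffAt ℝ 1 φ x) (hk : Continuous fun θ : sphere (0 : Euc n) 1 => k θ)
    (θ₀ : sphere (0 : Euc n) 1) (hpos : ∀ w, w ≠ 0 → 0 < wulffForm H φ k θ₀ w) :
    ∀ᶠ p in 𝓝 (0, θ₀, θ₀), 0 ≤ wulffGap H φ k p := by
  obtain ⟨c, hc, coercive⟩ := exists_pos_mul_norm_sq_le_of_quadratic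
    (continuous_wulffForm θ₀.1) (wulffForm_smul θ₀.1) hpos
  filter_upwards [(hH.wulffGap_sub_wulffForm_isLittleO hφ hk θ₀).def hc] with p hp
  rw [norm_pow, norm_norm] at hp
  linarith [coercive (wulffDisp p), (abs_le.1 hp).1]

lemma continuous_wulffGap (hH : IsRegularSupport n H)
    (hφ : Continuous fun θ : sphere (0 : Euc n) 1 => φ θ)
    (hk : Continuous fun θ : sphere (0 : Euc n) 1 => k θ) : Continuous (wulffGap H φ k) := by
  have H_continuous := continuous_sphere_of_continuousAt fun _ hx =>
    (hH.contDiffAt hx).continuousAt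
  have fderiv_continuous := continuous_sphere_of_continuousAt fun _ hx =>
    (hH.contDiffAt_fderiv hx).continuousAt
  have fst_continuous : Continuous fun p : ℝ × sphere (0 : Euc n) 1 × sphere (0 : Euc n) 1 =>
      p.2.1 := by fun_prop
  have snd_continuous : Continuous fun p : ℝ × sphere (0 : Euc n) 1 × sphere (0 : Euc n) 1 =>
      p.2.2 := by fun_prop
  exact ((H_continuous.comp snd_continuous).mul
    (continuous_const.add (continuous_fst.mul (hφ.comp snd_continuous)))).sub
    (((continuous_const.add (continuous_fst.mul (hφ.comp fst_continuous))).sub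
      ((continuous_fst.pow 2).mul (hk.comp fst_continuous))).mul
      ((fderiv_continuous.comp fst_continuous).clm_apply
        (continuous_subtype_val.comp snd_continuous)))

lemma eventually_forall_wulffGap_nonneg (hH : IsRegularSupport n H)
    (hφ : ∀ x, x ≠ 0 → ContDiffAt ℝ 1 φ x) (hk : Continuous fun θ : sphere (0 : Euc n) 1 => k θ)
    (hpos : ∀ θ : sphere (0 : Euc n) 1, ∀ w, w ≠ 0 → 0 < wulffForm H φ k θ w) :
    ∀ᶠ t : ℝ in 𝓝 0, ∀ θ x : sphere (0 : Euc n) 1, 0 ≤ wulffGap H φ k (t, θ, x) := by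
  have uniform : ∀ᶠ t : ℝ in 𝓝 0, ∀ q ∈ (univ : Set (sphere (0 : Euc n) 1 × sphere (0 : Euc n) 1)),
      0 ≤ wulffGap H φ k (t, q) := by
    refine isCompact_univ.eventually_forall_of_forall_eventually ?_
    rintro ⟨θ, x⟩ -
    rcases eq_or_ne x θ with rfl | hne
    · exact hH.eventually_wulffGap_nonneg_diagonal hφ hk x (hpos x)
    · have strict := hH.fderiv_apply_lt (norm_eq_of_mem_sphere θ) (norm_eq_of_mem_sphere x)
        (Subtype.coe_injective.ne hne)
      have gap_pos : 0 < wulffGap H φ k (0, θ, x) := by simpa [wulffGap] using strict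
      have gap_continuous := hH.continuous_wulffGap
        (continuous_sphere_of_continuousAt fun x hx => (hφ x hx).continuousAt) hk
      exact (gap_continuous.continuousAt.eventually_const_lt gap_pos).mono fun _ => le_of_lt
  exact uniform.mono fun t ht θ x => ht (θ, x) (mem_univ _)

end IsRegularSupport

end Wulff
/-! ### The centro-affine gradient -/

section CentroAffineGradient

variable {n : ℕ} {H φ : Euc n → ℝ}

lemma sphGrad_eq_gradient (hφ₀ : ∀ c : ℝ, 0 < c → ∀ x, φ (c • x) = φ x) (x : Euc n) :
    sphGrad n φ x = gradient φ x := by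
  have extension_eq : (fun y : Euc n => φ (‖y‖⁻¹ • y)) = φ := by
    funext y
    rcases eq_or_ne y 0 with rfl | hy
    · simp
    · exact hφ₀ _ (inv_pos.2 (norm_pos_iff.2 hy)) y
  rw [sphGrad, extension_eq]

/-- The gradient of `φ` with respect to the bilinear form `bform H x`; for 0-homogeneous `φ` it is
the centro-affine gradient `∇φ` divided by `H x`. -/
def bgrad (H φ : Euc n → ℝ) (x : Euc n) : Euc n :=
  WithLp.toLp 2 ((bmat n H x)⁻¹ *ᵥ (gradient φ x : Euc n))

lemma gNormSq_eq_mul_fderiv_bgrad (hφ₀ : ∀ c : ℝ, 0 < c → ∀ x, φ (c • x) = φ x) (x : Euc n) :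
    gNormSq n H φ x = H x * fderiv ℝ φ x (bgrad H φ x) := by
  rw [← inner_gradient_left, real_inner_comm, inner_eq_dotProduct]
  simp only [gNormSq, gInner, sphGrad_eq_gradient hφ₀, dotProduct, bgrad]

lemma gNormSq_sub_const (hφ₀ : ∀ c : ℝ, 0 < c → ∀ x, φ (c • x) = φ x) (m : ℝ) (x : Euc n) :
    gNormSq n H (fun y => φ y - m) x = gNormSq n H φ x := by
  have hφm₀ : ∀ c : ℝ, 0 < c → ∀ x, φ (c • x) - m = φ x - m := fun c hc x => by rw [hφ₀ c hc]
  rw [gNormSq_eq_mul_fderiv_bgrad hφm₀, gNormSq_eq_mul_fderiv_bgrad hφ₀]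
  simp only [bgrad, gradient, fderiv_sub_const]

lemma continuous_fderiv_sphere (hφ : ∀ x, x ≠ 0 → ContDiffAt ℝ 1 φ x) :
    Continuous fun θ : sphere (0 : Euc n) 1 => fderiv ℝ φ θ :=
  continuous_sphere_of_continuousAt fun x hx =>
    ((hφ x hx).fderiv_right (m := 0) le_rfl).continuousAt

lemma continuous_gradient_sphere (hφ : ∀ x, x ≠ 0 → ContDiffAt ℝ 1 φ x) :
    Continuous fun θ : sphere (0 : Euc n) 1 => gradient φ θ :=
  (LinearIsometryEquiv.continuous _).comp (continuous_fderiv_sphere hφ)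

namespace IsRegularSupport

lemma isUnit_det_bmat (hH : IsRegularSupport n H) {θ : Euc n} (hθ : ‖θ‖ = 1) :
    IsUnit (bmat n H θ).det :=
  (hH.posDef_bmat θ (by simpa using hθ)).det_pos.ne'.isUnit

lemma bform_bgrad (hH : IsRegularSupport n H) {θ : Euc n} (hθ : ‖θ‖ = 1) (v : Euc n) :
    bform H θ v (bgrad H φ θ) = fderiv ℝ φ θ v := by
  rw [← hH.dotProduct_bmat_mulVec (ne_zero_of_norm_eq_one hθ), bgrad, mulVec_mulVec,
    mul_nonsing_inv _ (hH.isUnit_det_bmat hθ), one_mulVec, ← inner_eq_dotProduct,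
    real_inner_comm, inner_gradient_left]

lemma bform_comm (hH : IsRegularSupport n H) {x : Euc n} (hx : x ≠ 0) (v w : Euc n) :
    bform H x v w = bform H x w v := by
  rw [bform_apply, bform_apply, hH.hess_comm hx]
  ring

/- Completing the square, with `s = H θ * t` and `U = bgrad H φ θ`: the form is
`bform (v + s U) (v + s U) / 2 + H θ t² ε`. -/
lemma wulffForm_pos (hH : IsRegularSupport n H)
    (hφ₀ : ∀ c : ℝ, 0 < c → ∀ x, φ (c • x) = φ x) {ε : ℝ} (hε : 0 < ε) {θ : Euc n}
    (hθ : ‖θ‖ = 1) {w : Euc n × ℝ} (hw : w ≠ 0) :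
    0 < wulffForm H φ (fun x => gNormSq n H φ x / 2 + ε) θ w := by
  obtain ⟨v, t⟩ := w
  have hθ₀ := ne_zero_of_norm_eq_one hθ
  have H_pos := hH.pos hθ₀
  have square_eq : wulffForm H φ (fun x => gNormSq n H φ x / 2 + ε) θ (v, t) =
      bform H θ (v + (H θ * t) • bgrad H φ θ) (v + (H θ * t) • bgrad H φ θ) / 2
        + H θ * t ^ 2 * ε := by
    simp only [wulffForm, gNormSq_eq_mul_fderiv_bgrad hφ₀, map_add, map_smul, _root_.add_apply,
      _root_.smul_apply, smul_eq_mul, hH.bform_comm hθ₀ (bgrad H φ θ) v, hH.bform_bgrad hθ]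
    ring
  rw [square_eq]
  rcases eq_or_ne t 0 with rfl | ht
  · have hv : v ≠ 0 := by
      rintro rfl
      exact hw rfl
    simpa using hH.bform_self_pos hθ hv
  · have bform_nonneg : ∀ u, 0 ≤ bform H θ u u := fun u => by
      rcases eq_or_ne u 0 with rfl | hu
      · simp
      · exact (hH.bform_self_pos hθ hu).le
    have := bform_nonneg (v + (H θ * t) • bgrad H φ θ)
    positivity

lemma continuous_sphere (hH : IsRegularSupport n H) :
    Continuous fun θ : sphere (0 : Euc n) 1 => H θ :=
  continuous_sphere_of_continuousAt fun _ hx => (hH.contDiffAt hx).continuousAt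

lemma continuous_inv_bmat (hH : IsRegularSupport n H) :
    Continuous fun θ : sphere (0 : Euc n) 1 => (bmat n H θ)⁻¹ := by
  have bmat_continuous : Continuous fun θ : sphere (0 : Euc n) 1 => bmat n H θ :=
    continuous_matrix fun i j => continuous_sphere_of_continuousAt (F := fun x => bmat n H x i j)
      fun _ hx => (hH.contDiffAt_bmat_apply hx i j).continuousAt
  simp only [Matrix.inv_def, Ring.inverse_eq_inv']
  exact (bmat_continuous.matrix_det.inv₀ fun θ =>
    (hH.isUnit_det_bmat (norm_eq_of_mem_sphere θ)).ne_zero).smul bmat_continuous.matrix_adjugate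

lemma continuous_bgrad (hH : IsRegularSupport n H) (hφ : ∀ x, x ≠ 0 → ContDiffAt ℝ 1 φ x) :
    Continuous fun θ : sphere (0 : Euc n) 1 => bgrad H φ θ :=
  (PiLp.continuous_toLp 2 _).comp
    (hH.continuous_inv_bmat.matrix_mulVec
      ((PiLp.continuous_ofLp 2 _).comp (continuous_gradient_sphere hφ)))

lemma continuous_gNormSq (hH : IsRegularSupport n H) (hφ : ∀ x, x ≠ 0 → ContDiffAt ℝ 1 φ x)
    (hφ₀ : ∀ c : ℝ, 0 < c → ∀ x, φ (c • x) = φ x) :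
    Continuous fun θ : sphere (0 : Euc n) 1 => gNormSq n H φ θ := by
  simp only [gNormSq_eq_mul_fderiv_bgrad hφ₀]
  exact hH.continuous_sphere.mul
    ((continuous_fderiv_sphere hφ).clm_apply (hH.continuous_bgrad hφ))

end IsRegularSupport

end CentroAffineGradient

/-! ### The Brunn–Minkowski inequality for domains given by their radial functions -/

section RadialBrunnMinkowski

open scoped Pointwise

variable {n : ℕ} {H : Euc n → ℝ}

namespace IsRegularSupport

lemma inner_lt_of_mem_image_gaussExt (hH : IsRegularSupport n H) {ρ a : Euc n → ℝ}
    (ha : ∀ θ : sphere (0 : Euc n) 1, 0 < a θ)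
    (hρa : ∀ θ x : sphere (0 : Euc n) 1, ρ θ * fderiv ℝ H θ x ≤ H x * a x) {y : Euc n}
    (hy : y ∈ gaussExt H '' radialDomain ρ) (x : sphere (0 : Euc n) 1) :
    ⟪x.1, y⟫ < H x * a x := by
  obtain ⟨z, ⟨hz, hzρ⟩, rfl⟩ := hy
  have norm_pos : 0 < ‖z‖ := norm_pos_iff.2 hz
  have constraint := hρa ⟨‖z‖⁻¹ • z, by simpa using norm_normalize hz⟩ x
  rw [gaussExt, real_inner_smul_right, real_inner_comm, inner_gradient_left,
    ← hH.fderiv_smul (inv_pos.2 norm_pos) z]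
  rcases le_or_gt (fderiv ℝ H (‖z‖⁻¹ • z) x) 0 with hle | hlt
  · exact (mul_nonpos_of_nonneg_of_nonpos norm_pos.le hle).trans_lt
      (mul_pos (hH.pos (ne_zero_of_mem_unit_sphere x)) (ha x))
  · exact (mul_lt_mul_of_pos_right hzρ hlt).trans_le constraint

lemma image_gaussExt_add_image_gaussExt_subset (hH : IsRegularSupport n H)
    {ρ₁ ρ₂ a₁ a₂ : Euc n → ℝ} (ha₁ : ∀ θ : sphere (0 : Euc n) 1, 0 < a₁ θ)
    (ha₂ : ∀ θ : sphere (0 : Euc n) 1, 0 < a₂ θ) {c : ℝ}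
    (hc : ∀ θ : sphere (0 : Euc n) 1, a₁ θ + a₂ θ = c)
    (hρa₁ : ∀ θ x : sphere (0 : Euc n) 1, ρ₁ θ * fderiv ℝ H θ x ≤ H x * a₁ x)
    (hρa₂ : ∀ θ x : sphere (0 : Euc n) 1, ρ₂ θ * fderiv ℝ H θ x ≤ H x * a₂ x) :
    gaussExt H '' radialDomain ρ₁ + gaussExt H '' radialDomain ρ₂
      ⊆ gaussExt H '' (radialDomain fun _ => c) ∪ {0} := by
  rintro _ ⟨y₁, hy₁, y₂, hy₂, rfl⟩
  rcases eq_or_ne (y₁ + y₂) 0 with h0 | h0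
  · exact Or.inr h0
  refine Or.inl (hH.mem_image_gaussExt h0 fun x hx => ?_)
  have hx : x ∈ sphere (0 : Euc n) 1 := by simpa using hx
  calc ⟪x, y₁ + y₂⟫ = ⟪x, y₁⟫ + ⟪x, y₂⟫ := inner_add_right _ _ _
    _ < H x * a₁ x + H x * a₂ x :=
      add_lt_add (hH.inner_lt_of_mem_image_gaussExt ha₁ hρa₁ hy₁ ⟨x, hx⟩)
        (hH.inner_lt_of_mem_image_gaussExt ha₂ hρa₂ hy₂ ⟨x, hx⟩)
    _ = c * H x := by rw [← hc ⟨x, hx⟩]; ring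

lemma integral_pow_mul_integral_pow_le (hH : IsRegularSupport n H) {ρ₁ ρ₂ a₁ a₂ : Euc n → ℝ}
    (hρ₁ : Continuous fun θ : sphere (0 : Euc n) 1 => ρ₁ θ)
    (hρ₂ : Continuous fun θ : sphere (0 : Euc n) 1 => ρ₂ θ)
    (hρ₁_pos : ∀ θ : sphere (0 : Euc n) 1, 0 < ρ₁ θ)
    (hρ₂_pos : ∀ θ : sphere (0 : Euc n) 1, 0 < ρ₂ θ)
    (ha₁ : ∀ θ : sphere (0 : Euc n) 1, 0 < a₁ θ) (ha₂ : ∀ θ : sphere (0 : Euc n) 1, 0 < a₂ θ)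
    (ha : ∀ θ : sphere (0 : Euc n) 1, a₁ θ + a₂ θ = 2)
    (hρa₁ : ∀ θ x : sphere (0 : Euc n) 1, ρ₁ θ * fderiv ℝ H θ x ≤ H x * a₁ x)
    (hρa₂ : ∀ θ x : sphere (0 : Euc n) 1, ρ₂ θ * fderiv ℝ H θ x ≤ H x * a₂ x) :
    (∫ θ, ρ₁ θ ^ (n + 1) ∂coneMeasure H) * (∫ θ, ρ₂ θ ^ (n + 1) ∂coneMeasure H)
      ≤ (coneMeasure H).real Set.univ ^ 2 := by
  have two_continuous : Continuous fun _ : sphere (0 : Euc n) 1 => (2 : ℝ) := continuous_const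
  have brunn_minkowski := four_pow_mul_volume_mul_volume_le_sq
    (hH.measurableSet_image_gaussExt hρ₁) (hH.measurableSet_image_gaussExt hρ₂)
    ((hH.measurableSet_image_gaussExt two_continuous).union (measurableSet_singleton 0))
    (hH.image_gaussExt_add_image_gaussExt_subset ha₁ ha₂ ha hρa₁ hρa₂)
  have := hH.isFiniteMeasure_coneMeasure
  have two_volume : ∫ _θ, (2 : ℝ) ^ (n + 1) ∂coneMeasure H =
      2 ^ (n + 1) * (coneMeasure H).real Set.univ := by
    rw [integral_const, smul_eq_mul, mul_comm]
  have integral_nonneg₁ : 0 ≤ ∫ θ, ρ₁ θ ^ (n + 1) ∂coneMeasure H :=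
    integral_nonneg fun θ => (pow_pos (hρ₁_pos θ) _).le
  rw [Set.union_singleton, measure_congr (insert_ae_eq_self _ _),
    hH.volume_image_gaussExt hρ₁ hρ₁_pos, hH.volume_image_gaussExt hρ₂ hρ₂_pos,
    hH.volume_image_gaussExt two_continuous fun _ => two_pos, two_volume,
    ← ENNReal.ofReal_ofNat 4, ← ENNReal.ofReal_pow (by norm_num),
    ← ENNReal.ofReal_pow (by positivity), ← ENNReal.ofReal_mul (by positivity),
    ← ENNReal.ofReal_mul (by positivity), ENNReal.ofReal_le_ofReal_iff (by positivity)]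
    at brunn_minkowski
  have two_pow_sq : ((2 : ℝ) ^ (n + 1)) ^ 2 = 4 ^ (n + 1) := by
    rw [← pow_mul, mul_comm, pow_mul]
    norm_num
  refine le_of_mul_le_mul_left (a := (4 : ℝ) ^ (n + 1) / (n + 1) ^ 2) ?_ (by positivity)
  calc 4 ^ (n + 1) / (n + 1 : ℝ) ^ 2 * ((∫ θ, ρ₁ θ ^ (n + 1) ∂coneMeasure H) *
        ∫ θ, ρ₂ θ ^ (n + 1) ∂coneMeasure H)
      = 4 ^ (n + 1) * ((∫ θ, ρ₁ θ ^ (n + 1) ∂coneMeasure H) / (n + 1) *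
        ((∫ θ, ρ₂ θ ^ (n + 1) ∂coneMeasure H) / (n + 1))) := by field_simp
    _ ≤ (2 ^ (n + 1) * (coneMeasure H).real Set.univ / (n + 1)) ^ 2 := brunn_minkowski
    _ = 4 ^ (n + 1) / (n + 1 : ℝ) ^ 2 * (coneMeasure H).real Set.univ ^ 2 := by
      rw [div_pow, mul_pow, two_pow_sq, mul_div_right_comm]

end IsRegularSupport

end RadialBrunnMinkowski

/-! ### The centro-affine Poincaré inequality -/

section SecondVariation

open Asymptotics Filter
open scoped Topology

lemma exists_continuous_one_add_sub_pow_eq (d : ℕ) : ∃ R : ℝ × ℝ × ℝ → ℝ, Continuous R ∧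
    ∀ t a k : ℝ, (1 + t * a - t ^ 2 * k) ^ d =
      1 + t * (d * a) + t ^ 2 * (d * (d - 1) / 2 * a ^ 2 - d * k) + t ^ 3 * R (t, a, k) := by
  induction d with
  | zero => exact ⟨0, continuous_zero, by simp⟩
  | succ d ih =>
    obtain ⟨R, hR, expansion⟩ := ih
    refine ⟨fun p => R p * (1 + p.1 * p.2.1 - p.1 ^ 2 * p.2.2)
      + (d * (d - 1) / 2 * p.2.1 ^ 2 - d * p.2.2) * (p.2.1 - p.1 * p.2.2)
      - d * p.2.1 * p.2.2, by fun_prop, fun t a k => ?_⟩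
    rw [pow_succ, expansion]
    push_cast
    ring

variable {S : Type*} [TopologicalSpace S] [CompactSpace S]

lemma isLittleO_integral_one_add_sub_pow [SecondCountableTopology S] [MeasurableSpace S]
    [OpensMeasurableSpace S] (μ : Measure S) [IsFiniteMeasure μ] (d : ℕ)
    {a k : S → ℝ} (ha : Continuous a) (hk : Continuous k) :
    (fun t : ℝ => (∫ s, (1 + t * a s - t ^ 2 * k s) ^ d ∂μ) -
        (μ.real Set.univ + t * (d * ∫ s, a s ∂μ) +
          t ^ 2 * (d * (d - 1) / 2 * ∫ s, a s ^ 2 ∂μ) - t ^ 2 * (d * ∫ s, k s ∂μ)))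
      =o[𝓝 0] fun t => t ^ 2 := by
  obtain ⟨R, hR, expansion⟩ := exists_continuous_one_add_sub_pow_eq d
  have remainder_continuous : Continuous fun t : ℝ => ∫ s, R (t, a s, k s) ∂μ := by
    simpa only [Measure.restrict_univ] using
      continuous_parametric_integral_of_continuous (μ := μ) (s := Set.univ)
        (f := fun (t : ℝ) s => R (t, a s, k s)) (by fun_prop) isCompact_univ
  have integrable (g : S → ℝ) (hg : Continuous g) : Integrable g μ := integrable_of_continuous hg
  have remainder_eq : (fun t : ℝ => (∫ s, (1 + t * a s - t ^ 2 * k s) ^ d ∂μ) -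
        (μ.real Set.univ + t * (d * ∫ s, a s ∂μ) +
          t ^ 2 * (d * (d - 1) / 2 * ∫ s, a s ^ 2 ∂μ) - t ^ 2 * (d * ∫ s, k s ∂μ)))
      = fun t => t ^ 3 * ∫ s, R (t, a s, k s) ∂μ := by
    funext t
    simp only [expansion]
    rw [integral_add (integrable _ (by fun_prop)) (integrable _ (by fun_prop)),
      integral_add (integrable _ (by fun_prop)) (integrable _ (by fun_prop)),
      integral_add (integrable _ (by fun_prop)) (integrable _ (by fun_prop))]
    simp only [integral_const_mul, integral_const, smul_eq_mul, mul_one]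
    rw [integral_sub (integrable _ (by fun_prop)) (integrable _ (by fun_prop))]
    simp only [integral_const_mul]
    ring
  rw [remainder_eq]
  have cube_isLittleO : (fun t : ℝ => t ^ 3) =o[𝓝 0] fun t => t ^ 2 :=
    isLittleO_pow_pow (by norm_num)
  simpa using cube_isLittleO.mul_isBigO ((remainder_continuous.tendsto 0).isBigO_one ℝ)

lemma nonpos_of_eventually_mul_le_sq {J : ℝ → ℝ} {V A : ℝ} (hV : 0 ≤ V)
    (hJ : (fun t => J t - (V + t ^ 2 * A)) =o[𝓝 0] fun t => t ^ 2)
    (hJV : ∀ᶠ t in 𝓝 0, J t * J (-t) ≤ V ^ 2) : A ≤ 0 := by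
  by_contra! hA
  have lower_bound : ∀ᶠ t in 𝓝 (0 : ℝ), V + t ^ 2 * (A / 2) ≤ J t := by
    filter_upwards [hJ.def (half_pos hA)] with t ht
    rw [Real.norm_eq_abs, Real.norm_eq_abs, abs_of_nonneg (sq_nonneg t)] at ht
    linarith [neg_abs_le (J t - (V + t ^ 2 * A))]
  have lower_bound_neg : ∀ᶠ t in 𝓝 (0 : ℝ), V + t ^ 2 * (A / 2) ≤ J (-t) := by
    have neg_tendsto : Tendsto (fun t : ℝ => -t) (𝓝 0) (𝓝 0) := by
      simpa using (continuous_neg (G := ℝ)).tendsto 0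
    simpa only [neg_sq] using neg_tendsto.eventually lower_bound
  obtain ⟨t, ht, hlow, hlow_neg, hle⟩ := (eventually_mem_nhdsWithin.and
    (nhdsWithin_le_nhds (s := Set.Ioi (0 : ℝ))
      (lower_bound.and (lower_bound_neg.and hJV)))).exists
  have ht : 0 < t := ht
  have gain_pos : 0 < t ^ 2 * (A / 2) := by positivity
  nlinarith [mul_le_mul hlow hlow_neg (by positivity) (by linarith)]

lemma eventually_forall_pos_one_add_sub {a k : S → ℝ} (ha : Continuous a) (hk : Continuous k) :
    ∀ᶠ t in 𝓝 (0 : ℝ), ∀ s, 0 < 1 + t * a s - t ^ 2 * k s := by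
  have := isCompact_univ.eventually_forall_of_forall_eventually (x₀ := (0 : ℝ))
    (P := fun t s => 0 < 1 + t * a s - t ^ 2 * k s) (K := (Set.univ : Set S)) fun s _ =>
      (by fun_prop : ContinuousAt (fun p : ℝ × S => 1 + p.1 * a p.2 - p.1 ^ 2 * k p.2)
        (0, s)).eventually (lt_mem_nhds (by simp))
  simpa using this

end SecondVariation

section Poincare

open Filter
open scoped Topology

lemma integral_sub_integral_div_sq {S : Type*} [MeasurableSpace S] {μ : Measure S}
    [IsFiniteMeasure μ] {g : S → ℝ} (hg : Integrable g μ) (hg_sq : Integrable (fun s => g s ^ 2) μ)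
    (hμ : μ.real Set.univ ≠ 0) :
    ∫ s, (g s - (∫ s, g s ∂μ) / μ.real Set.univ) ^ 2 ∂μ =
      (∫ s, g s ^ 2 ∂μ) - (∫ s, g s ∂μ) ^ 2 / μ.real Set.univ := by
  set m := (∫ s, g s ∂μ) / μ.real Set.univ with hm
  have expand (s : S) : (g s - m) ^ 2 = g s ^ 2 - 2 * m * g s + m ^ 2 := by ring
  have cross_integrable : Integrable (fun s => 2 * m * g s) μ := hg.const_mul _
  have difference_integrable : Integrable (fun s => g s ^ 2 - 2 * m * g s) μ :=
    hg_sq.sub cross_integrable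
  simp only [expand]
  rw [integral_add difference_integrable (integrable_const _), integral_sub hg_sq cross_integrable,
    integral_const_mul, integral_const, smul_eq_mul, hm]
  field_simp
  ring

variable {n : ℕ} {H φ : Euc n → ℝ}

namespace IsRegularSupport

lemma coneMeasure_real_univ (hH : IsRegularSupport n H) :
    (coneMeasure H).real Set.univ = ∫ θ : sphere (0 : Euc n) 1, volDens n H θ ∂sphMeasure n := by
  simpa using hH.integral_coneMeasure fun _ => (1 : ℝ)

lemma coneMeasure_real_univ_pos (hH : IsRegularSupport n H) :
    0 < (coneMeasure H).real Set.univ := by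
  have sphMeasure_ne_zero : sphMeasure n ≠ 0 := Measure.toSphere_ne_zero _
  have support_eq : Function.support (fun θ : sphere (0 : Euc n) 1 => volDens n H θ) = Set.univ :=
    Set.eq_univ_of_forall fun θ => (hH.volDens_pos (norm_eq_of_mem_sphere θ)).ne'
  rw [hH.coneMeasure_real_univ, integral_pos_iff_support_of_nonneg
    (fun θ => (hH.volDens_pos (norm_eq_of_mem_sphere θ)).le)
    (integrable_of_continuous hH.continuous_volDens), support_eq]
  exact Measure.measure_univ_pos.2 sphMeasure_ne_zero

lemma eventually_integral_pow_mul_integral_pow_le (hH : IsRegularSupport n H)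
    (hφ : ∀ x, x ≠ 0 → ContDiffAt ℝ 1 φ x) (hφ₀ : ∀ c : ℝ, 0 < c → ∀ x, φ (c • x) = φ x)
    {ε : ℝ} (hε : 0 < ε) :
    ∀ᶠ t : ℝ in 𝓝 0,
      (∫ θ, (1 + t * φ θ - t ^ 2 * (gNormSq n H φ θ / 2 + ε)) ^ (n + 1) ∂coneMeasure H) *
        (∫ θ, (1 + -t * φ θ - (-t) ^ 2 * (gNormSq n H φ θ / 2 + ε)) ^ (n + 1) ∂coneMeasure H)
        ≤ (coneMeasure H).real Set.univ ^ 2 := by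
  set k : Euc n → ℝ := fun x => gNormSq n H φ x / 2 + ε
  have φ_continuous : Continuous fun θ : sphere (0 : Euc n) 1 => φ θ :=
    continuous_sphere_of_continuousAt fun x hx => (hφ x hx).continuousAt
  have k_continuous : Continuous fun θ : sphere (0 : Euc n) 1 => k θ :=
    ((hH.continuous_gNormSq hφ hφ₀).div_const 2).add continuous_const
  have radius_continuous (t : ℝ) :
      Continuous fun θ : sphere (0 : Euc n) 1 => 1 + t * φ θ - t ^ 2 * k θ :=
    (continuous_const.add (continuous_const.mul φ_continuous)).sub
      (continuous_const.mul k_continuous)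
  have good : ∀ᶠ t : ℝ in 𝓝 0, (∀ θ x : sphere (0 : Euc n) 1, 0 ≤ wulffGap H φ k (t, θ, x)) ∧
      (∀ θ : sphere (0 : Euc n) 1, 0 < 1 + t * φ θ - t ^ 2 * k θ) ∧
      ∀ θ : sphere (0 : Euc n) 1, 0 < 1 + t * φ θ := by
    refine (hH.eventually_forall_wulffGap_nonneg hφ k_continuous fun θ w hw =>
      hH.wulffForm_pos hφ₀ hε (norm_eq_of_mem_sphere θ) hw).and
      ((eventually_forall_pos_one_add_sub φ_continuous k_continuous).and ?_)
    simpa using eventually_forall_pos_one_add_sub φ_continuous (continuous_const (y := (0 : ℝ)))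
  have neg_tendsto : Tendsto (fun t : ℝ => -t) (𝓝 0) (𝓝 0) := by
    simpa using (continuous_neg (G := ℝ)).tendsto 0
  filter_upwards [good, neg_tendsto.eventually good] with t ht ht_neg
  exact hH.integral_pow_mul_integral_pow_le
    (ρ₁ := fun x => 1 + t * φ x - t ^ 2 * k x) (a₁ := fun x => 1 + t * φ x)
    (ρ₂ := fun x => 1 + -t * φ x - (-t) ^ 2 * k x) (a₂ := fun x => 1 + -t * φ x)
    (radius_continuous t) (radius_continuous (-t)) ht.2.1 ht_neg.2.1 ht.2.2 ht_neg.2.2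
    (fun θ => by ring) (fun θ x => sub_nonneg.1 (ht.1 θ x)) fun θ x => sub_nonneg.1 (ht_neg.1 θ x)

lemma mul_integral_sq_le_integral_gNormSq_of_integral_eq_zero (hH : IsRegularSupport n H)
    (hφ : ∀ x, x ≠ 0 → ContDiffAt ℝ 1 φ x) (hφ₀ : ∀ c : ℝ, 0 < c → ∀ x, φ (c • x) = φ x)
    (hmean : ∫ θ, φ θ ∂coneMeasure H = 0) :
    n * ∫ θ, φ θ ^ 2 ∂coneMeasure H ≤ ∫ θ, gNormSq n H φ θ ∂coneMeasure H := by
  have := hH.isFiniteMeasure_coneMeasure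
  have φ_continuous : Continuous fun θ : sphere (0 : Euc n) 1 => φ θ :=
    continuous_sphere_of_continuousAt fun x hx => (hφ x hx).continuousAt
  have gNormSq_continuous := hH.continuous_gNormSq hφ hφ₀
  have with_slack (ε : ℝ) (hε : 0 < ε) : n * ∫ θ, φ θ ^ 2 ∂coneMeasure H ≤
      (∫ θ, gNormSq n H φ θ ∂coneMeasure H) + ε * (2 * (coneMeasure H).real Set.univ) := by
    have expansion := isLittleO_integral_one_add_sub_pow (coneMeasure H) (n + 1)
      (k := fun θ => gNormSq n H φ θ / 2 + ε) φ_continuous (by fun_prop)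
    have integral_k : ∫ θ, (gNormSq n H φ θ / 2 + ε) ∂coneMeasure H =
        (∫ θ, gNormSq n H φ θ ∂coneMeasure H) / 2 + (coneMeasure H).real Set.univ * ε := by
      rw [integral_add (integrable_of_continuous (gNormSq_continuous.div_const 2))
        (integrable_const ε), integral_div, integral_const, smul_eq_mul]
    have second_variation := nonpos_of_eventually_mul_le_sq
      (A := (n + 1) * (n / 2 * (∫ θ, φ θ ^ 2 ∂coneMeasure H)
        - ((∫ θ, gNormSq n H φ θ ∂coneMeasure H) / 2 + (coneMeasure H).real Set.univ * ε)))
      measureReal_nonneg (expansion.congr_left fun t => by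
        rw [hmean, integral_k]
        push_cast
        ring) (hH.eventually_integral_pow_mul_integral_pow_le hφ hφ₀ hε)
    have := nonpos_of_mul_nonpos_right second_variation (by positivity)
    linarith
  have two_volume_pos := mul_pos two_pos hH.coneMeasure_real_univ_pos
  refine le_of_forall_pos_le_add fun δ hδ => ?_
  have := with_slack _ (div_pos hδ two_volume_pos)
  rwa [div_mul_cancel₀ _ two_volume_pos.ne'] at this

theorem poincare_inequality (hH : IsRegularSupport n H) (hφ : ∀ x, x ≠ 0 → ContDiffAt ℝ 1 φ x)
    (hφ₀ : ∀ c : ℝ, 0 < c → ∀ x, φ (c • x) = φ x) :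
    n * ((∫ θ, φ θ ^ 2 ∂coneMeasure H) -
        (∫ θ, φ θ ∂coneMeasure H) ^ 2 / (coneMeasure H).real Set.univ)
      ≤ ∫ θ, gNormSq n H φ θ ∂coneMeasure H := by
  have := hH.isFiniteMeasure_coneMeasure
  have volume_ne := hH.coneMeasure_real_univ_pos.ne'
  have φ_continuous : Continuous fun θ : sphere (0 : Euc n) 1 => φ θ :=
    continuous_sphere_of_continuousAt fun x hx => (hφ x hx).continuousAt
  have φ_integrable := integrable_of_continuous (μ := coneMeasure H) φ_continuous
  have φ_sq_integrable := integrable_of_continuous (μ := coneMeasure H) 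
    (F := fun θ => φ θ ^ 2) (φ_continuous.pow 2)
  set V := (coneMeasure H).real Set.univ
  set m := (∫ θ, φ θ ∂coneMeasure H) / V with hm
  have mean_zero : ∫ θ, (φ θ - m) ∂coneMeasure H = 0 := by
    rw [integral_sub φ_integrable (integrable_const m), integral_const, smul_eq_mul, hm,
      mul_div_cancel₀ _ volume_ne, sub_self]
  have variance_eq := integral_sub_integral_div_sq φ_integrable φ_sq_integrable volume_ne
  have centred := hH.mul_integral_sq_le_integral_gNormSq_of_integral_eq_zero
    (φ := fun x => φ x - m) (fun x hx => (hφ x hx).sub contDiffAt_const)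
    (fun c hc x => by rw [hφ₀ c hc]) mean_zero
  rw [variance_eq] at centred
  simpa only [gNormSq_sub_const hφ₀] using centred

end IsRegularSupport

end Poincare

/-! ### Integration by parts on the sphere -/

section Divergence

variable {n : ℕ}

/-- The Euclidean divergence of a vector field. -/
def divergence (Z : Euc n → Euc n) (x : Euc n) : ℝ :=
  ∑ i, fderiv ℝ Z x (EuclideanSpace.single i 1) i

lemma sum_mul_apply_single (L : Euc n →L[ℝ] ℝ) (v : Euc n) :
    ∑ i, v i * L (EuclideanSpace.single i 1) = L v := by
  conv_rhs => rw [eq_sum_smul_single v]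
  simp only [map_sum, map_smul, smul_eq_mul]

lemma divergence_smul {f : Euc n → ℝ} {Z : Euc n → Euc n} {x : Euc n}
    (hf : DifferentiableAt ℝ f x) (hZ : DifferentiableAt ℝ Z x) :
    divergence (fun y => f y • Z y) x = f x * divergence Z x + fderiv ℝ f x (Z x) := by
  simp only [divergence, fderiv_fun_smul hf hZ, Finset.mul_sum,
    ← sum_mul_apply_single (fderiv ℝ f x) (Z x), ← Finset.sum_add_distrib]
  simp [mul_comm]

lemma divergence_sub {Z W : Euc n → Euc n} {x : Euc n} (hZ : DifferentiableAt ℝ Z x)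
    (hW : DifferentiableAt ℝ W x) :
    divergence (fun y => Z y - W y) x = divergence Z x - divergence W x := by
  simp [divergence, fderiv_fun_sub hZ hW]

lemma divergence_id (x : Euc n) : divergence (fun y => y) x = n + 1 := by
  simp [divergence]

lemma divergence_smul_sub_smul_id {a u : Euc n → ℝ} {Z : Euc n → Euc n} {x : Euc n}
    (ha : DifferentiableAt ℝ a x) (hZ : DifferentiableAt ℝ Z x) (hu : DifferentiableAt ℝ u x)
    (hu₀ : ∀ c : ℝ, 0 < c → u (c • x) = u x) :
    divergence (fun y => a y • Z y - u y • y) x =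
      a x * divergence Z x + fderiv ℝ a x (Z x) - (n + 1) * u x := by
  have u_fderiv_self : fderiv ℝ u x x = 0 := by
    simpa using fderiv_apply_self_of_homogeneous (k := 0) (fun c hc => by simp [hu₀ c hc]) hu
  rw [divergence_sub (ha.fun_smul hZ) (hu.fun_smul differentiableAt_fun_id), divergence_smul ha hZ,
    divergence_smul hu differentiableAt_fun_id, divergence_id, u_fderiv_self]
  ring

lemma integral_fderiv_apply_eq_zero {E : Type*} [NormedAddCommGroup E] [NormedSpace ℝ E]
    [FiniteDimensional ℝ E] [MeasurableSpace E] [BorelSpace E] (μ : Measure E)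
    [μ.IsAddHaarMeasure] {g : E → ℝ} (hg : ContDiff ℝ 1 g) (hg_supp : HasCompactSupport g)
    (v : E) : ∫ x, fderiv ℝ g x v ∂μ = 0 := by
  have fderiv_integrable : Integrable (fun x => fderiv ℝ g x v) μ :=
    ((hg.continuous_fderiv one_ne_zero).clm_apply continuous_const).integrable_of_hasCompactSupport
      (hg_supp.fderiv_apply ℝ v)
  simpa using integral_mul_fderiv_eq_neg_fderiv_mul_of_integrable (μ := μ) (f := fun _ => (1 : ℝ))
    (g := g) (v := v) (by simp) (by simpa using fderiv_integrable)
    (by simpa using hg.continuous.integrable_of_hasCompactSupport hg_supp) (by simp)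
    fun x _ => hg.differentiable one_ne_zero x

lemma integral_divergence_eq_zero {Z : Euc n → Euc n} (hZ : ContDiff ℝ 1 Z)
    (hZ_supp : HasCompactSupport Z) : ∫ x, divergence Z x = 0 := by
  have component_contDiff (i : Fin (n + 1)) : ContDiff ℝ 1 fun x => Z x i :=
    contDiff_euclidean.1 hZ i
  have component_supp (i : Fin (n + 1)) : HasCompactSupport fun x => Z x i :=
    hZ_supp.comp_left (g := fun z : Euc n => z i) rfl
  have divergence_eq (x : Euc n) : divergence Z x =
      ∑ i, fderiv ℝ (fun y => Z y i) x (EuclideanSpace.single i 1) :=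
    Finset.sum_congr rfl fun i _ => by
      have := (EuclideanSpace.proj i : Euc n →L[ℝ] ℝ).hasFDerivAt.comp x
        (hZ.differentiable one_ne_zero x).hasFDerivAt
      rw [show (fun y => Z y i) = (EuclideanSpace.proj i : Euc n →L[ℝ] ℝ) ∘ Z from rfl,
        this.fderiv]
      rfl
  simp only [divergence_eq]
  rw [integral_finsetSum _ fun i _ =>
    (((component_contDiff i).continuous_fderiv one_ne_zero).clm_apply
      continuous_const).integrable_of_hasCompactSupport ((component_supp i).fderiv_apply ℝ _)]
  exact Finset.sum_eq_zero fun i _ =>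
    integral_fderiv_apply_eq_zero volume (component_contDiff i) (component_supp i) _

lemma integral_norm_mul_of_homogeneous {D : Euc n → ℝ}
    (hD : ∀ c : ℝ, 0 < c → ∀ x, D (c • x) = D x) (η : ℝ → ℝ) :
    ∫ x, η ‖x‖ * D x = (∫ θ : sphere (0 : Euc n) 1, D θ ∂sphMeasure n) *
      ∫ r : Set.Ioi (0 : ℝ), η r ∂Measure.volumeIoiPow n := by
  rw [← integral_prod_mul (μ := sphMeasure n) (ν := Measure.volumeIoiPow n) (fun θ => D θ)
    (fun r => η r), ← measurePreserving_polarMap.integral_comp measurableEmbedding_polarMap]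
  refine integral_congr_ae (.of_forall fun p => ?_)
  simp only [polarMap, hD _ p.2.2, norm_smul_of_pos p.2.2 (norm_eq_of_mem_sphere p.1),
    mul_comm (η _)]

lemma exists_contDiff_annular_cutoff (n : ℕ) : ∃ η : ℝ → ℝ, ContDiff ℝ 1 η ∧
    HasCompactSupport (fun x : Euc n => η (‖x‖ ^ 2)) ∧
    (∀ᶠ x : Euc n in nhds 0, η (‖x‖ ^ 2) = 0) ∧
    ∫ r : Set.Ioi (0 : ℝ), η (r.1 ^ 2) ∂Measure.volumeIoiPow n ≠ 0 := by
  let η : ContDiffBump (1 : ℝ) := ⟨1 / 4, 1 / 2, by norm_num, by norm_num⟩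
  have η_zero {s : ℝ} (hs : 1 / 2 ≤ |s - 1|) : η s = 0 :=
    η.zero_of_le_dist (by rwa [Real.dist_eq])
  have supp : HasCompactSupport fun x : Euc n => η (‖x‖ ^ 2) :=
    HasCompactSupport.intro (isCompact_closedBall (0 : Euc n) 2) fun x hx => by
      have : 2 < ‖x‖ := by simpa using hx
      exact η_zero (le_abs_self _ |>.trans' (by nlinarith))
  have zero_near : ∀ᶠ x : Euc n in nhds 0, η (‖x‖ ^ 2) = 0 := by
    filter_upwards [ball_mem_nhds (0 : Euc n) (by norm_num : (0 : ℝ) < 1 / 2)] with x hx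
    have : ‖x‖ < 1 / 2 := by simpa using hx
    refine η_zero ?_
    rw [abs_sub_comm]
    exact le_abs_self _ |>.trans' (by nlinarith [norm_nonneg x])
  have integral_pos : 0 < ∫ x : Euc n, η (‖x‖ ^ 2) :=
    (η.continuous.comp (continuous_norm.pow 2)).integral_pos_of_hasCompactSupport_nonneg_nonzero
      supp (fun x => η.nonneg) (x := EuclideanSpace.single 0 1)
      (by simp [η.one_of_mem_closedBall (mem_closedBall_self (by norm_num [η]))])
  have polar := integral_norm_mul_of_homogeneous (n := n) (D := fun _ => 1) (fun _ _ _ => rfl)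
    fun r => η (r ^ 2)
  simp only [mul_one] at polar
  rw [polar] at integral_pos
  exact ⟨η, η.contDiff, supp, zero_near, right_ne_zero_of_mul integral_pos.ne'⟩

lemma divergence_radial_smul_of_tangent {η : ℝ → ℝ} {Z : Euc n → Euc n} {x : Euc n}
    (hη : DifferentiableAt ℝ η (‖x‖ ^ 2)) (hZ : DifferentiableAt ℝ Z x) (hxZ : ⟪x, Z x⟫ = 0) :
    divergence (fun y => η (‖y‖ ^ 2) • Z y) x = η (‖x‖ ^ 2) * divergence Z x := by
  have radial_fderiv : HasFDerivAt (fun y : Euc n => η (‖y‖ ^ 2))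
      (deriv η (‖x‖ ^ 2) • 2 • innerSL ℝ x) x :=
    hη.hasDerivAt.comp_hasFDerivAt x (hasStrictFDerivAt_norm_sq x).hasFDerivAt
  rw [divergence_smul radial_fderiv.differentiableAt hZ, radial_fderiv.fderiv]
  simp [hxZ]

/- Cut off by a radial function, whose derivative does not see the tangential field `Z`, the
divergence theorem in `ℝ^{n+1}` descends to the sphere. -/
lemma integral_sphere_divergence_eq_zero {Z : Euc n → Euc n}
    (hZ : ∀ x, x ≠ 0 → ContDiffAt ℝ 1 Z x)
    (hZ_smul : ∀ c : ℝ, 0 < c → ∀ x, Z (c • x) = c • Z x)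
    (hZ_tangent : ∀ x, x ≠ 0 → ⟪x, Z x⟫ = 0) :
    ∫ θ : sphere (0 : Euc n) 1, divergence Z θ ∂sphMeasure n = 0 := by
  obtain ⟨η, η_contDiff, η_supp, η_zero_near, η_integral⟩ := exists_contDiff_annular_cutoff n
  have divergence_homogeneous (c : ℝ) (hc : 0 < c) (x : Euc n) :
      divergence Z (c • x) = divergence Z x := by
    rw [divergence, fderiv_smul_of_scaling hc.ne' (hZ_smul c hc), inv_mul_cancel₀ hc.ne', one_smul,
      divergence]
  have cutoff_contDiff : ContDiff ℝ 1 fun x => η (‖x‖ ^ 2) • Z x := by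
    rw [contDiff_iff_contDiffAt]
    intro x
    rcases eq_or_ne x 0 with rfl | hx
    · refine (contDiffAt_const (c := (0 : Euc n))).congr_of_eventuallyEq ?_
      filter_upwards [η_zero_near] with y hy
      rw [hy, zero_smul]
    · exact (η_contDiff.comp (contDiff_norm_sq ℝ)).contDiffAt.smul (hZ x hx)
  have total := integral_divergence_eq_zero cutoff_contDiff η_supp.smul_right
  rw [integral_congr_ae ((Measure.ae_ne volume (0 : Euc n)).mono fun x hx =>
      divergence_radial_smul_of_tangent (η_contDiff.differentiable one_ne_zero _)
        ((hZ x hx).differentiableAt one_ne_zero) (hZ_tangent x hx)),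
    integral_norm_mul_of_homogeneous divergence_homogeneous fun r => η (r ^ 2)] at total
  exact (mul_eq_zero.1 total).resolve_right η_integral

lemma fderiv_apply_gradient (H : Euc n → ℝ) (x : Euc n) :
    fderiv ℝ H x (gradient H x) = ‖gradient H x‖ ^ 2 := by
  rw [← inner_gradient_left, real_inner_self_eq_norm_sq]

end Divergence

namespace IsRegularSupport

variable {n : ℕ} {H : Euc n → ℝ}

lemma contDiffAt_gradient (hH : IsRegularSupport n H) {x : Euc n} (hx : x ≠ 0) :
    ContDiffAt ℝ 2 (gradient H) x :=
  ((InnerProductSpace.toDual ℝ (Euc n)).symm.contDiff.contDiffAt).comp x (hH.contDiffAt_fderiv hx)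

lemma fderiv_gradient_apply (hH : IsRegularSupport n H) {x : Euc n} (hx : x ≠ 0)
    (v : Euc n) (i : Fin (n + 1)) :
    fderiv ℝ (gradient H) x v i = hess H x (EuclideanSpace.single i 1) v := by
  have component : HasFDerivAt (fun y => gradient H y i) _ x :=
    (EuclideanSpace.proj i : Euc n →L[ℝ] ℝ).hasFDerivAt.comp x
      ((hH.contDiffAt_gradient hx).differentiableAt two_ne_zero).hasFDerivAt
  exact DFunLike.congr_fun (component.unique (hH.hasFDerivAt_gradient_apply hx i)) v

lemma divergence_gradient (hH : IsRegularSupport n H) {x : Euc n} (hx : x ≠ 0) :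
    divergence (gradient H) x =
      ∑ i, hess H x (EuclideanSpace.single i 1) (EuclideanSpace.single i 1) :=
  Finset.sum_congr rfl fun i _ => hH.fderiv_gradient_apply hx _ i

lemma integrable_mul_fderiv_gradient_add (hH : IsRegularSupport n H) {w : Euc n → ℝ}
    (hw : ∀ x, x ≠ 0 → ContDiffAt ℝ 1 w x) :
    Integrable (fun θ : sphere (0 : Euc n) 1 => H θ * fderiv ℝ w θ (gradient H θ) + w θ *
      (H θ * divergence (gradient H) θ + ‖gradient H θ‖ ^ 2 - (n + 1) * H θ ^ 2))
      (sphMeasure n) := by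
  have H_continuous := hH.continuous_sphere
  have w_continuous : Continuous fun θ : sphere (0 : Euc n) 1 => w θ :=
    continuous_sphere_of_continuousAt fun x hx => (hw x hx).continuousAt
  have gradient_continuous : Continuous fun θ : sphere (0 : Euc n) 1 => gradient H θ :=
    continuous_sphere_of_continuousAt fun x hx => (hH.contDiffAt_gradient hx).continuousAt
  have divergence_continuous :
      Continuous fun θ : sphere (0 : Euc n) 1 => divergence (gradient H) θ :=
    continuous_sphere_of_continuousAt fun x hx => tendsto_finsetSum _ fun i _ =>
      ((EuclideanSpace.proj i : Euc n →L[ℝ] ℝ).continuous.continuousAt.comp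
        (((hH.contDiffAt_gradient hx).fderiv_right (m := 0) (by norm_num)).continuousAt.clm_apply
          continuousAt_const))
  exact integrable_of_continuous ((H_continuous.mul ((continuous_fderiv_sphere hw).clm_apply
    gradient_continuous)).add (w_continuous.mul (((H_continuous.mul divergence_continuous).add
      (gradient_continuous.norm.pow 2)).sub (continuous_const.mul (H_continuous.pow 2)))))

/- The tangential field `w H X - u x`, where `u` makes up for the radial part of `w H X`, is
divergence free on average. -/
lemma integral_mul_fderiv_gradient_add_eq_zero (hH : IsRegularSupport n H) {w : Euc n → ℝ}
    (hw : ∀ x, x ≠ 0 → ContDiffAt ℝ 1 w x)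
    (hw₀ : ∀ c : ℝ, 0 < c → ∀ x, w (c • x) = w x) :
    ∫ θ : sphere (0 : Euc n) 1, (H θ * fderiv ℝ w θ (gradient H θ) + w θ *
      (H θ * divergence (gradient H) θ + ‖gradient H θ‖ ^ 2 - (n + 1) * H θ ^ 2))
      ∂sphMeasure n = 0 := by
  set u : Euc n → ℝ := fun x => w x * H x ^ 2 / ‖x‖ ^ 2 with hu
  have hH_contDiff {x : Euc n} (hx : x ≠ 0) : ContDiffAt ℝ 1 H x :=
    (hH.contDiffAt hx).of_le (by norm_num)
  have u_contDiff {x : Euc n} (hx : x ≠ 0) : ContDiffAt ℝ 1 u x :=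
    ((hw x hx).mul ((hH_contDiff hx).pow 2)).div (contDiff_norm_sq ℝ).contDiffAt (by simpa using hx)
  have u_smul {c : ℝ} (hc : 0 < c) (x : Euc n) : u (c • x) = u x := by
    simp only [hu, hw₀ c hc, hH.homogeneous c hc, norm_smul, Real.norm_of_nonneg hc.le, mul_pow,
      mul_left_comm _ (c ^ 2)]
    exact mul_div_mul_left _ _ (pow_ne_zero 2 hc.ne')
  have wH_contDiff {x : Euc n} (hx : x ≠ 0) : ContDiffAt ℝ 1 (fun y => w y * H y) x :=
    (hw x hx).mul (hH_contDiff hx)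
  have gradient_contDiff {x : Euc n} (hx : x ≠ 0) : ContDiffAt ℝ 1 (gradient H) x :=
    (hH.contDiffAt_gradient hx).of_le (by norm_num)
  rw [← integral_sphere_divergence_eq_zero
    (Z := fun x => (w x * H x) • gradient H x - u x • x)]
  · refine integral_congr_ae (.of_forall fun θ => ?_)
    have hθ := norm_eq_of_mem_sphere θ
    have hθ₀ := ne_zero_of_norm_eq_one hθ
    have wH_fderiv := fderiv_fun_mul ((hw _ hθ₀).differentiableAt one_ne_zero)
      (hH.differentiableAt hθ₀)
    refine ((divergence_smul_sub_smul_id ((wH_contDiff hθ₀).differentiableAt one_ne_zero)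
      ((gradient_contDiff hθ₀).differentiableAt one_ne_zero)
      ((u_contDiff hθ₀).differentiableAt one_ne_zero) fun c hc => u_smul hc _).trans
        ?_).symm
    simp only [wH_fderiv, _root_.add_apply, _root_.smul_apply, smul_eq_mul, fderiv_apply_gradient,
      hu, hθ]
    ring
  · exact fun x hx => ((wH_contDiff hx).smul (gradient_contDiff hx)).sub
      ((u_contDiff hx).smul contDiffAt_id)
  · intro c hc x
    simp only [hw₀ c hc, hH.homogeneous c hc, hH.gradient_smul hc, u_smul hc]
    module
  · intro x hx
    have norm_ne : ‖x‖ ≠ 0 := norm_ne_zero_iff.2 hx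
    simp only [inner_sub_right, inner_smul_right, real_inner_comm (gradient H x),
      hH.inner_gradient_self hx, real_inner_self_eq_norm_sq, hu]
    field_simp
    ring

end IsRegularSupport

/-! ### The Poincaré inequality for `f X` -/

section GaussMapTestFunction

variable {n : ℕ} {H f : Euc n → ℝ}

namespace IsRegularSupport

lemma bgrad_eq_of_bform_eq (hH : IsRegularSupport n H) {φ : Euc n → ℝ} {θ W : Euc n}
    (hθ : ‖θ‖ = 1) (hW : ∀ v, bform H θ v W = fderiv ℝ φ θ v) : bgrad H φ θ = W := by
  by_contra hne
  have positive := hH.bform_self_pos hθ (sub_ne_zero.2 hne)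
  rw [map_sub, hH.bform_bgrad hθ, hW, sub_self] at positive
  exact positive.false

lemma inner_bgrad_eq_zero (hH : IsRegularSupport n H) {θ : Euc n} (hθ : ‖θ‖ = 1)
    (hf : DifferentiableAt ℝ f θ) (hf₀ : ∀ c : ℝ, 0 < c → f (c • θ) = f θ) :
    ⟪θ, bgrad H f θ⟫ = 0 := by
  have hθ₀ := ne_zero_of_norm_eq_one hθ
  have radial : bform H θ θ (bgrad H f θ) = 0 := by
    rw [hH.bform_bgrad hθ, fderiv_apply_self_of_homogeneous (k := 0) (by simpa using hf₀) hf]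
    simp
  simpa [bform_apply, hH.hess_apply_self hθ₀, hθ, (hH.pos hθ₀).ne'] using radial

lemma hasFDerivAt_smul_gradient_apply (hH : IsRegularSupport n H) {x : Euc n} (hx : x ≠ 0)
    (hf : DifferentiableAt ℝ f x) (k : Fin (n + 1)) :
    HasFDerivAt (fun y => (f y • gradient H y) k)
      (f x • hess H x (EuclideanSpace.single k 1) + gradient H x k • fderiv ℝ f x) x :=
  hf.hasFDerivAt.mul (hH.hasFDerivAt_gradient_apply hx k)

lemma bgrad_smul_gradient_apply (hH : IsRegularSupport n H) {θ : Euc n} (hθ : ‖θ‖ = 1)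
    (hf : DifferentiableAt ℝ f θ) (k : Fin (n + 1)) :
    bgrad H (fun y => (f y • gradient H y) k) θ =
      gradient H θ k • bgrad H f θ + f θ • (EuclideanSpace.single k 1 - θ k • θ) := by
  have hθ₀ := ne_zero_of_norm_eq_one hθ
  refine hH.bgrad_eq_of_bform_eq hθ fun v => ?_
  rw [(hH.hasFDerivAt_smul_gradient_apply hθ₀ hf k).fderiv, map_add, map_smul, hH.bform_bgrad hθ]
  simp only [map_smul, map_sub, bform_apply, hH.hess_comm hθ₀ v, hH.hess_apply_self hθ₀,
    _root_.zero_apply, real_inner_self_eq_norm_sq, hθ, EuclideanSpace.inner_single_right,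
    _root_.add_apply, _root_.smul_apply, smul_eq_mul, conj_trivial]
  ring

lemma smul_gradient_smul (hH : IsRegularSupport n H)
    (hf₀ : ∀ c : ℝ, 0 < c → ∀ x, f (c • x) = f x) (c : ℝ) (hc : 0 < c) (x : Euc n) :
    f (c • x) • gradient H (c • x) = f x • gradient H x := by
  rw [hf₀ c hc, hH.gradient_smul hc]

lemma contDiffAt_smul_gradient (hH : IsRegularSupport n H)
    (hf : ∀ x, x ≠ 0 → ContDiffAt ℝ 1 f x) (x : Euc n) (hx : x ≠ 0) :
    ContDiffAt ℝ 1 (fun y => f y • gradient H y) x :=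
  (hf x hx).smul ((hH.contDiffAt_gradient hx).of_le (by norm_num))

lemma gNormSq_smul_gradient_apply (hH : IsRegularSupport n H) {θ : Euc n} (hθ : ‖θ‖ = 1)
    (hf : DifferentiableAt ℝ f θ) (hf₀ : ∀ c : ℝ, 0 < c → ∀ x, f (c • x) = f x)
    (k : Fin (n + 1)) :
    gNormSq n H (fun y => (f y • gradient H y) k) θ =
      H θ * (gradient H θ k ^ 2 * fderiv ℝ f θ (bgrad H f θ)
        + f θ * (gradient H θ k * hess H θ (EuclideanSpace.single k 1) (bgrad H f θ))
        + f θ * (gradient H θ k * fderiv ℝ f θ (EuclideanSpace.single k 1))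
        + f θ ^ 2 * hess H θ (EuclideanSpace.single k 1) (EuclideanSpace.single k 1)) := by
  have hθ₀ := ne_zero_of_norm_eq_one hθ
  have f_fderiv_self : fderiv ℝ f θ θ = 0 := by
    simpa using fderiv_apply_self_of_homogeneous (k := 0) (fun c hc => by simp [hf₀ c hc]) hf
  rw [gNormSq_eq_mul_fderiv_bgrad fun c hc x => by rw [hH.smul_gradient_smul hf₀ c hc],
    (hH.hasFDerivAt_smul_gradient_apply hθ₀ hf k).fderiv, hH.bgrad_smul_gradient_apply hθ hf]
  simp only [_root_.add_apply, _root_.smul_apply, map_add, map_sub, map_smul, smul_eq_mul,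
    f_fderiv_self, hH.hess_apply_apply_self hθ₀]
  ring

lemma sum_gNormSq_smul_gradient (hH : IsRegularSupport n H) {θ : Euc n} (hθ : ‖θ‖ = 1)
    (hf : DifferentiableAt ℝ f θ) (hf₀ : ∀ c : ℝ, 0 < c → ∀ x, f (c • x) = f x) :
    ∑ k, gNormSq n H (fun y => (f y • gradient H y) k) θ =
      H θ * (‖gradient H θ‖ ^ 2 * fderiv ℝ f θ (bgrad H f θ)
        + 2 * f θ * fderiv ℝ f θ (gradient H θ) + f θ ^ 2 * divergence (gradient H) θ) := by
  have hθ₀ := ne_zero_of_norm_eq_one hθ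
  have norm_sq_eq : ∑ k, gradient H θ k ^ 2 = ‖gradient H θ‖ ^ 2 := by
    simp [EuclideanSpace.norm_sq_eq]
  have hess_eq : ∑ k, gradient H θ k * hess H θ (EuclideanSpace.single k 1) (bgrad H f θ) =
      fderiv ℝ f θ (gradient H θ) := by
    have bform_eq := hH.bform_bgrad (φ := f) hθ (gradient H θ)
    rw [bform_apply, hH.inner_bgrad_eq_zero hθ hf (hf₀ · · θ), mul_zero, add_zero] at bform_eq
    simpa only [ContinuousLinearMap.flip_apply, bform_eq] using
      sum_mul_apply_single ((hess H θ).flip (bgrad H f θ)) (gradient H θ)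
  simp only [hH.gNormSq_smul_gradient_apply hθ hf hf₀, ← Finset.mul_sum, Finset.sum_add_distrib,
    ← Finset.sum_mul, norm_sq_eq, hess_eq, sum_mul_apply_single (fderiv ℝ f θ),
    ← hH.divergence_gradient hθ₀]
  ring

lemma sq_mul_gNormSq_log (hH : IsRegularSupport n H) {θ : Euc n} (hθ : ‖θ‖ = 1)
    (hf : DifferentiableAt ℝ f θ) (hf₀ : ∀ c : ℝ, 0 < c → ∀ x, f (c • x) = f x)
    (hfθ : f θ ≠ 0) :
    f θ ^ 2 * gNormSq n H (fun y => Real.log (f y)) θ = H θ * fderiv ℝ f θ (bgrad H f θ) := by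
  have log_fderiv := (hf.hasFDerivAt.log hfθ).fderiv
  have log_bgrad : bgrad H (fun y => Real.log (f y)) θ = (f θ)⁻¹ • bgrad H f θ :=
    hH.bgrad_eq_of_bform_eq hθ fun v => by
      rw [map_smul, hH.bform_bgrad hθ, log_fderiv, _root_.smul_apply]
  rw [gNormSq_eq_mul_fderiv_bgrad fun c hc x => by rw [hf₀ c hc], log_bgrad, log_fderiv]
  simp only [map_smul, _root_.smul_apply, smul_eq_mul]
  field_simp

lemma poincare_inequality_vector (hH : IsRegularSupport n H) {Φ : Euc n → Euc n}
    (hΦ : ∀ x, x ≠ 0 → ContDiffAt ℝ 1 Φ x) (hΦ₀ : ∀ c : ℝ, 0 < c → ∀ x, Φ (c • x) = Φ x) :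
    n * ((∫ θ, ‖Φ θ‖ ^ 2 ∂coneMeasure H) -
        ‖∫ θ, Φ θ ∂coneMeasure H‖ ^ 2 / (coneMeasure H).real Set.univ)
      ≤ ∫ θ, ∑ k, gNormSq n H (fun x => Φ x k) θ ∂coneMeasure H := by
  have := hH.isFiniteMeasure_coneMeasure
  have component_contDiff (k : Fin (n + 1)) (x : Euc n) (hx : x ≠ 0) :
      ContDiffAt ℝ 1 (fun y => Φ y k) x := contDiffAt_euclidean.1 (hΦ x hx) k
  have component_smul (k : Fin (n + 1)) (c : ℝ) (hc : 0 < c) (x : Euc n) : Φ (c • x) k = Φ x k := by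
    rw [hΦ₀ c hc]
  have component_continuous (k : Fin (n + 1)) : Continuous fun θ : sphere (0 : Euc n) 1 => Φ θ k :=
    continuous_sphere_of_continuousAt (F := fun x => Φ x k)
      fun x hx => (component_contDiff k x hx).continuousAt
  have integral_component (k : Fin (n + 1)) :
      (∫ θ, Φ θ ∂coneMeasure H) k = ∫ θ, Φ θ k ∂coneMeasure H :=
    ((EuclideanSpace.proj k : Euc n →L[ℝ] ℝ).integral_comp_comm (integrable_of_continuous
      (continuous_sphere_of_continuousAt fun x hx => (hΦ x hx).continuousAt))).symm
  have norm_sq_integral : ∫ θ, ‖Φ θ‖ ^ 2 ∂coneMeasure H = ∑ k, ∫ θ, Φ θ k ^ 2 ∂coneMeasure H := by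
    simp only [EuclideanSpace.real_norm_sq_eq]
    exact integral_finsetSum _ fun k _ => integrable_of_continuous ((component_continuous k).pow 2)
  rw [norm_sq_integral, EuclideanSpace.real_norm_sq_eq, Finset.sum_div, ← Finset.sum_sub_distrib,
    Finset.mul_sum, integral_finsetSum _ fun k _ => integrable_of_continuous
      (hH.continuous_gNormSq (component_contDiff k) (component_smul k))]
  simp only [integral_component]
  exact Finset.sum_le_sum fun k _ =>
    hH.poincare_inequality (component_contDiff k) (component_smul k)

end IsRegularSupport

end GaussMapTestFunction

/-! ### The centro-affine term and the conclusion -/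

section Conclusion

variable {n : ℕ} {H f : Euc n → ℝ}

/-- The 0-homogeneous extension of the restriction of `volDens n H` to the sphere. (The function
`volDens n H` itself is not homogeneous.) -/
def sphVolDens (H : Euc n → ℝ) (y : Euc n) : ℝ := volDens n H (‖y‖⁻¹ • y)

lemma sphVolDens_smul {c : ℝ} (hc : 0 < c) (x : Euc n) :
    sphVolDens H (c • x) = sphVolDens H x := by
  have normalize_eq : ‖c • x‖⁻¹ • c • x = ‖x‖⁻¹ • x := by
    rw [norm_smul, Real.norm_of_nonneg hc.le, smul_smul, mul_inv, mul_right_comm,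
      inv_mul_cancel₀ hc.ne', one_mul]
  rw [sphVolDens, normalize_eq, sphVolDens]

lemma sphVolDens_of_norm_eq_one {θ : Euc n} (hθ : ‖θ‖ = 1) : sphVolDens H θ = volDens n H θ := by
  simp [sphVolDens, hθ]

namespace IsRegularSupport

lemma contDiffAt_sphVolDens (hH : IsRegularSupport n H) {x : Euc n} (hx : x ≠ 0) :
    ContDiffAt ℝ 1 (sphVolDens H) x :=
  (hH.contDiffAt_volDens (ne_zero_of_norm_eq_one (norm_normalize hx))).comp
    (f := fun y : Euc n => ‖y‖⁻¹ • y) x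
    (((contDiffAt_norm ℝ hx).inv (norm_ne_zero_iff.2 hx)).smul contDiffAt_id)

lemma logQ_normalize (hH : IsRegularSupport n H) {y : Euc n} (hy : y ≠ 0) :
    logQ n H (‖y‖⁻¹ • y) =
      (n + 1) * (Real.log (H y) - Real.log ‖y‖) + Real.log (sphVolDens H y) := by
  have norm_pos : 0 < ‖y‖ := norm_pos_iff.2 hy
  have H_pos := hH.pos hy
  have quotient_eq (z : Euc n) :
      H z ^ (n + 2) / gaussCurv n H z = H z ^ (n + 1) * volDens n H z := by
    rw [gaussCurv, volDens, div_inv_eq_mul]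
    ring
  rw [logQ, quotient_eq, hH.homogeneous _ (inv_pos.2 norm_pos), Real.log_mul (by positivity)
      (hH.volDens_pos (norm_normalize hy)).ne', Real.log_pow, Real.log_mul (by positivity)
      H_pos.ne', Real.log_inv, sphVolDens]
  push_cast
  ring

lemma volDens_mul_inner_sphGrad_logQ (hH : IsRegularSupport n H) {θ : Euc n} (hθ : ‖θ‖ = 1) :
    volDens n H θ * ⟪sphGrad n (logQ n H) θ, H θ • gradient H θ⟫ =
      (n + 1) * volDens n H θ * (‖gradient H θ‖ ^ 2 - H θ ^ 2)
        + H θ * fderiv ℝ (sphVolDens H) θ (gradient H θ) := by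
  have hθ₀ := ne_zero_of_norm_eq_one hθ
  have H_pos := hH.pos hθ₀
  have volDens_pos := hH.volDens_pos hθ
  have volDens_eq : sphVolDens H θ = volDens n H θ := sphVolDens_of_norm_eq_one hθ
  have log_fderiv : HasFDerivAt (fun y => logQ n H (‖y‖⁻¹ • y))
      (((n : ℝ) + 1) • ((H θ)⁻¹ • fderiv ℝ H θ - ‖θ‖⁻¹ • ‖θ‖⁻¹ • innerSL ℝ θ)
        + (sphVolDens H θ)⁻¹ • fderiv ℝ (sphVolDens H) θ) θ := by
    refine HasFDerivAt.congr_of_eventuallyEq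
      (((((hH.differentiableAt hθ₀).hasFDerivAt.log H_pos.ne').sub
        ((hasFDerivAt_norm hθ₀).log (norm_ne_zero_iff.2 hθ₀))).const_mul ((n : ℝ) + 1)).add
      (((hH.contDiffAt_sphVolDens hθ₀).differentiableAt one_ne_zero).hasFDerivAt.log
        (volDens_eq ▸ volDens_pos.ne'))) ?_
    filter_upwards [isOpen_compl_singleton.mem_nhds hθ₀] with y hy
    exact hH.logQ_normalize hy
  rw [sphGrad, inner_smul_right, inner_gradient_left, log_fderiv.fderiv, volDens_eq]
  simp only [hθ, _root_.add_apply, _root_.sub_apply, _root_.smul_apply, smul_eq_mul,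
    fderiv_apply_gradient, innerSL_apply_apply, real_inner_comm (gradient H θ) θ,
    hH.inner_gradient_self hθ₀]
  field_simp

lemma volDens_mul_localBM_integrand_eq (hH : IsRegularSupport n H) {θ : Euc n} (hθ : ‖θ‖ = 1)
    (hf : DifferentiableAt ℝ f θ) (hf₀ : ∀ c : ℝ, 0 < c → ∀ x, f (c • x) = f x)
    (hfθ : f θ ≠ 0) :
    volDens n H θ * (f θ ^ 2 * (⟪sphGrad n (logQ n H) θ, H θ • gradient H θ⟫
        - ‖gradient H θ‖ ^ 2 * gNormSq n H (fun y => Real.log (f y)) θ)) =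
      volDens n H θ * (n * ‖f θ • gradient H θ‖ ^ 2
        - ∑ k, gNormSq n H (fun y => (f y • gradient H y) k) θ)
      + (H θ * fderiv ℝ (fun y => f y ^ 2 * sphVolDens H y) θ (gradient H θ)
        + f θ ^ 2 * sphVolDens H θ *
          (H θ * divergence (gradient H) θ + ‖gradient H θ‖ ^ 2 - (n + 1) * H θ ^ 2)) := by
  have weight_fderiv : fderiv ℝ (fun y => f y ^ 2 * sphVolDens H y) θ (gradient H θ) =
      2 * f θ * volDens n H θ * fderiv ℝ f θ (gradient H θ) +
        f θ ^ 2 * fderiv ℝ (sphVolDens H) θ (gradient H θ) := by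
    rw [fderiv_fun_mul (hf.fun_pow 2) ((hH.contDiffAt_sphVolDens
      (ne_zero_of_norm_eq_one hθ)).differentiableAt one_ne_zero), fderiv_fun_pow 2 hf]
    simp only [sphVolDens_of_norm_eq_one hθ, Nat.add_one_sub_one, pow_one, nsmul_eq_mul,
      Nat.cast_ofNat, _root_.add_apply, _root_.smul_apply, smul_eq_mul]
    ring
  rw [hH.sum_gNormSq_smul_gradient hθ hf hf₀, weight_fderiv, sphVolDens_of_norm_eq_one hθ,
    norm_smul, mul_pow, Real.norm_eq_abs, sq_abs]
  linear_combination f θ ^ 2 * hH.volDens_mul_inner_sphGrad_logQ hθ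
    - volDens n H θ * ‖gradient H θ‖ ^ 2 * hH.sq_mul_gNormSq_log hθ hf hf₀ hfθ

lemma integral_volDens_mul_localBM_integrand_eq (hH : IsRegularSupport n H)
    (hf : ∀ x, x ≠ 0 → ContDiffAt ℝ 1 f x) (hf₀ : ∀ c : ℝ, 0 < c → ∀ x, f (c • x) = f x)
    (hf_ne : ∀ θ : sphere (0 : Euc n) 1, f θ ≠ 0) :
    ∫ θ : sphere (0 : Euc n) 1, volDens n H θ *
        (f θ ^ 2 * (⟪sphGrad n (logQ n H) θ, H θ • gradient H θ⟫
          - ‖gradient H θ‖ ^ 2 * gNormSq n H (fun y => Real.log (f y)) θ)) ∂sphMeasure n =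
      n * (∫ θ : sphere (0 : Euc n) 1, ‖f θ • gradient H θ‖ ^ 2 ∂coneMeasure H)
        - ∫ θ : sphere (0 : Euc n) 1,
            ∑ k, gNormSq n H (fun y => (f y • gradient H y) k) θ ∂coneMeasure H := by
  have := hH.isFiniteMeasure_coneMeasure
  have test_contDiff := hH.contDiffAt_smul_gradient hf
  have weight_contDiff (x : Euc n) (hx : x ≠ 0) :
      ContDiffAt ℝ 1 (fun y => f y ^ 2 * sphVolDens H y) x :=
    ((hf x hx).pow 2).mul (hH.contDiffAt_sphVolDens hx)
  have norm_sq_continuous :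
      Continuous fun θ : sphere (0 : Euc n) 1 => ‖f θ • gradient H θ‖ ^ 2 :=
    (continuous_sphere_of_continuousAt fun x hx => (test_contDiff x hx).continuousAt).norm.pow 2
  have gNormSq_continuous : Continuous fun θ : sphere (0 : Euc n) 1 =>
      ∑ k, gNormSq n H (fun y => (f y • gradient H y) k) θ :=
    continuous_finsetSum _ fun k _ => hH.continuous_gNormSq
      (fun x hx => contDiffAt_euclidean.1 (test_contDiff x hx) k)
      fun c hc x => by rw [hH.smul_gradient_smul hf₀ c hc]
  have by_parts := hH.integral_mul_fderiv_gradient_add_eq_zero weight_contDiff fun c hc x => by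
    rw [hf₀ c hc, sphVolDens_smul hc]
  have hf_diff (θ : sphere (0 : Euc n) 1) : DifferentiableAt ℝ f θ :=
    (hf _ (ne_zero_of_norm_eq_one (norm_eq_of_mem_sphere θ))).differentiableAt one_ne_zero
  simp only [fun θ : sphere (0 : Euc n) 1 => hH.volDens_mul_localBM_integrand_eq
    (norm_eq_of_mem_sphere θ) (hf_diff θ) hf₀ (hf_ne θ)]
  rw [integral_add (integrable_of_continuous (hH.continuous_volDens.fun_mul
      ((norm_sq_continuous.const_mul _).fun_sub gNormSq_continuous)))
    (hH.integrable_mul_fderiv_gradient_add weight_contDiff), by_parts, add_zero]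
  have cone_integral := hH.integral_coneMeasure fun θ : sphere (0 : Euc n) 1 =>
    (n : ℝ) * ‖f θ • gradient H θ‖ ^ 2 - ∑ k, gNormSq n H (fun y => (f y • gradient H y) k) θ
  simp only [smul_eq_mul] at cone_integral
  rw [← cone_integral, integral_sub (integrable_of_continuous (norm_sq_continuous.const_mul _))
    (integrable_of_continuous gNormSq_continuous), integral_const_mul]

end IsRegularSupport

end Conclusion

theorem local_BM_inequality_general_general
    (n : ℕ) (H : Euc n → ℝ)
    (hhomog : ∀ c : ℝ, 0 < c → ∀ x : Euc n, H (c • x) = c * H x)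
    (hconv : ConvexOn ℝ Set.univ H)
    (hsmooth : ContDiffOn ℝ 3 H {(0 : Euc n)}ᶜ)
    (hpos : ∀ x ∈ sphere (0 : Euc n) 1, 0 < H x)
    (hposdef : ∀ x ∈ sphere (0 : Euc n) 1, (bmat n H x).PosDef)
    (f : Euc n → ℝ)
    (hf0 : ∀ c : ℝ, 0 < c → ∀ x : Euc n, f (c • x) = f x)
    (hfC1 : ContDiffOn ℝ 1 f {(0 : Euc n)}ᶜ)
    (hfpos : ∀ x ∈ sphere (0 : Euc n) 1, 0 < f x) :
    (∫ x : sphere (0 : Euc n) 1,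
        volDens n H x * ((f x) ^ 2 *
          (⟪sphGrad n (logQ n H) x, H x • gradient H x⟫
            - ‖gradient H x‖ ^ 2 * gNormSq n H (fun y => Real.log (f y)) x))
        ∂(sphMeasure n))
      ≤ (n : ℝ) * ‖∫ x : sphere (0 : Euc n) 1,
            volDens n H x • (f x • gradient H x) ∂(sphMeasure n)‖ ^ 2
          / ∫ x : sphere (0 : Euc n) 1, volDens n H x ∂(sphMeasure n) := by
  have hH : IsRegularSupport n H := ⟨hhomog, hconv, hsmooth, hpos, hposdef⟩
  have f_contDiff (x : Euc n) (hx : x ≠ 0) : ContDiffAt ℝ 1 f x :=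
    hfC1.contDiffAt (isOpen_compl_singleton.mem_nhds hx)
  have poincare := hH.poincare_inequality_vector (hH.contDiffAt_smul_gradient f_contDiff)
    (hH.smul_gradient_smul hf0)
  rw [hH.coneMeasure_real_univ, hH.integral_coneMeasure fun θ => f θ • gradient H θ, mul_sub,
    ← mul_div_assoc] at poincare
  rw [hH.integral_volDens_mul_localBM_integrand_eq f_contDiff hf0 fun θ => (hfpos θ θ.2).ne']
  linarith

/-- For a smooth, strictly convex body `K ⊂ ℝ^{n+1}` with the origin in its
interior, and every positive `f ∈ C²(S^n)` (encoded as a 0-homogeneous function on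
`ℝ^{n+1} \ {0}`):
`∫ f² (⟨∇̄ log(h^{n+2}/𝒦), hX⟩ − |X|²|∇ log f|_g²) dV ≤ n |∫ f X dV|² / ∫ dV`. -/
theorem local_BM_inequality_general
    (n : ℕ) (hn : 2 ≤ n)
    (H : Euc n → ℝ) (K : Set (Euc n))
    (hK : K = {y : Euc n | ∀ x : Euc n, ⟪x, y⟫ ≤ H x})
    (hhomog : ∀ c : ℝ, 0 < c → ∀ x : Euc n, H (c • x) = c * H x)
    (hconv : ConvexOn ℝ Set.univ H)
    (hsmooth : ContDiffOn ℝ (⊤ : ℕ∞) H {(0 : Euc n)}ᶜ)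
    (hpos : ∀ x ∈ sphere (0 : Euc n) 1, 0 < H x)
    (hposdef : ∀ x ∈ sphere (0 : Euc n) 1, (bmat n H x).PosDef)
    (f : Euc n → ℝ)
    (hf0 : ∀ c : ℝ, 0 < c → ∀ x : Euc n, f (c • x) = f x)
    (hfC2 : ContDiffOn ℝ 2 f {(0 : Euc n)}ᶜ)
    (hfpos : ∀ x ∈ sphere (0 : Euc n) 1, 0 < f x) :
    (∫ x : sphere (0 : Euc n) 1,
        volDens n H x * ((f x) ^ 2 *
          (⟪sphGrad n (logQ n H) x, H x • gradient H x⟫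
            - ‖gradient H x‖ ^ 2 * gNormSq n H (fun y => Real.log (f y)) x))
        ∂(sphMeasure n))
      ≤ (n : ℝ) * ‖∫ x : sphere (0 : Euc n) 1,
            volDens n H x • (f x • gradient H x) ∂(sphMeasure n)‖ ^ 2
          / ∫ x : sphere (0 : Euc n) 1, volDens n H x ∂(sphMeasure n) :=
  local_BM_inequality_general_general n H hhomog hconv (hsmooth.of_le (by norm_cast))
    hpos hposdef f hf0 (hfC2.of_le one_le_two) hfpos
end
end
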